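/- Let (S,𝔪) be an unramified regular local ring of mixed characteristic p ≥ 3. Suppose S[ω] and S[μ] are integrally closed and fg ∈ S^{p∧p²}. Then R is a Cohen-Macaulay ring if and only if the ideal Q := (p, f, g) of S can be generated by two elements or equals S. Moreover pd_S(R) ≤ 1 and ν_S(R) ≤ p² + 1, where ν_S denotes the minimal number of generators as an S-module. -/

import Mathlib

/-- A height one prime ideal of a commutative ring. -/
def IsHeightOnePrime {S : Type*} [CommRing S] (P : Ideal S) : Prop :=
  ∃ hP : P.IsPrime, Order.height (⟨P, hP⟩ : PrimeSpectrum S) = 1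

/-- `c ∈ S` is square free if `P S_P = c S_P` for every height one prime `P` containing `c`. -/
def PaperSquarefree {S : Type*} [CommRing S] (c : S) : Prop :=
  ∀ (P : Ideal S) (hP : P.IsPrime), Order.height (⟨P, hP⟩ : PrimeSpectrum S) = 1 → c ∈ P →
    haveI := hP
    Ideal.map (algebraMap S (Localization.AtPrime P)) P =
      Ideal.span {algebraMap S (Localization.AtPrime P) c}

/-- Two elements satisfy `𝒜₁` if no height one prime contains both of them. -/
def SatisfiesA1 {S : Type*} [CommRing S] (f g : S) : Prop :=
  ∀ P : Ideal S, IsHeightOnePrime P → ¬(f ∈ P ∧ g ∈ P)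

/-- The depth of a module over a local ring: the supremum of the lengths of
regular sequences on `M` contained in the maximal ideal. -/
noncomputable def modDepth (S : Type*) [CommRing S] [IsLocalRing S]
    (M : Type*) [AddCommGroup M] [Module S M] : ℕ∞ :=
  sSup {n : ℕ∞ | ∃ rs : List S, (rs.length : ℕ∞) = n ∧
    (∀ r ∈ rs, r ∈ IsLocalRing.maximalIdeal S) ∧ RingTheory.Sequence.IsRegular M rs}

/-- A commutative ring is Cohen-Macaulay if each of its localizations at a prime
has depth equal to its Krull dimension. -/
def IsCMRing (R : Type*) [CommRing R] : Prop :=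
  ∀ (Q : Ideal R) (hQ : Q.IsPrime),
    haveI := hQ
    (modDepth (Localization.AtPrime Q) (Localization.AtPrime Q) : WithBot ℕ∞) =
      ringKrullDim (Localization.AtPrime Q)

/-- The `n`-th symbolic power of a prime ideal `P`, i.e. `Pⁿ A_P ∩ A`. -/
noncomputable def symbPow {A : Type*} [CommRing A] (P : Ideal A) (hP : P.IsPrime) (n : ℕ) :
    Ideal A :=
  haveI := hP
  Ideal.comap (algebraMap A (Localization.AtPrime P))
    (Ideal.map (algebraMap A (Localization.AtPrime P)) (P ^ n))

/-- `ω`, as an element of the subalgebra `A = S[ω,μ]`. -/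
noncomputable def omegaA {S : Type*} [CommRing S] {K : Type*} [Field K] [Algebra S K]
    (ω μ : K) : Algebra.adjoin S ({ω, μ} : Set K) :=
  ⟨ω, Algebra.subset_adjoin (Set.mem_insert _ _)⟩

/-- `μ`, as an element of the subalgebra `A = S[ω,μ]`. -/
noncomputable def muA {S : Type*} [CommRing S] {K : Type*} [Field K] [Algebra S K]
    (ω μ : K) : Algebra.adjoin S ({ω, μ} : Set K) :=
  ⟨μ, Algebra.subset_adjoin (Set.mem_insert_of_mem _ rfl)⟩

/-- The ideal `P = (p, ω−h₁, μ−h₂)` of `A = S[ω,μ]`. -/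
noncomputable def Pid {S : Type*} [CommRing S] {K : Type*} [Field K] [Algebra S K]
    (p : ℕ) (ω μ : K) (h₁ h₂ : S) : Ideal (Algebra.adjoin S ({ω, μ} : Set K)) :=
  Ideal.span {(p : Algebra.adjoin S ({ω, μ} : Set K)),
    omegaA ω μ - algebraMap S _ h₁, muA ω μ - algebraMap S _ h₂}

/-- The colon module `(A :_K N) = {x ∈ K : x·N ⊆ A}`, as an `S`-submodule of `K`. -/
noncomputable def colonSubmodule (S : Type*) [CommRing S] (K : Type*) [Field K] [Algebra S K]
    (A : Subalgebra S K) (N : Set K) : Submodule S K where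
  carrier := {x : K | ∀ z ∈ N, x * z ∈ A}
  add_mem' := fun hx hy z hz => by
    simpa [add_mul] using add_mem (hx z hz) (hy z hz)
  zero_mem' := fun z hz => by simpa using A.zero_mem
  smul_mem' := fun c x hx z hz => by
    rw [Algebra.smul_def, mul_assoc]
    exact mul_mem (A.algebraMap_mem c) (hx z hz)

/-- `M` admits a free resolution `0 → Sⁿ → Sᵐ → M → 0`; for a finitely generated
module over a Noetherian local ring this says exactly `pd_S(M) ≤ 1`. -/
def HasFreeResLengthLE1 (S : Type*) [CommRing S] (M : Type*) [AddCommGroup M] [Module S M] :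
    Prop :=
  ∃ (n m : ℕ) (φ : (Fin n → S) →ₗ[S] (Fin m → S)) (ψ : (Fin m → S) →ₗ[S] M),
    Function.Injective φ ∧ Function.Surjective ψ ∧ LinearMap.range φ = LinearMap.ker ψ

/-- The ideal `Q` contains an `S`-regular sequence of length three, i.e. `Q` has grade
(at least) three. -/
def ContainsRegSeq3 (S : Type*) [CommRing S] (Q : Ideal S) : Prop :=
  ∃ rs : List S, rs.length = 3 ∧ (∀ r ∈ rs, r ∈ Q) ∧ RingTheory.Sequence.IsRegular S rs

/-!
Since `S ⧸ p` is regular, hence factorial, a greatest common divisor modulo `p` of `h₁` and `h₂` can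
be split off: `f = (d k₁)ᵖ + a p` and `g = (d k₂)ᵖ + b p` with `k₁` and `k₂` relatively prime modulo
`p`. Put `W = ω - d k₁` and `U = μ - d k₂`. Then `p` divides `Wᵖ` and `Uᵖ` in `R`, hence every
`Wⁱ Uʲ` with `i + j ≥ p`, and the hypothesis on `f g` says that `p` divides `(k₁ U + k₂ W)ᵖ⁻¹` as
well, with quotient `t`, say. The `Wⁱ Uʲ` with `i + j < p`, the quotients `Wⁱ Uʲ / p` with
`i + j ≥ p`, and `t` generate `R`, and the only relation is the binomial expansion of `p t`. That
there is no further one is seen on a valuation for which `W`, `k₁ U + k₂ W` and `p` have value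
`p - 1`, `p` and `p (p - 1)`. Thus `R` has projective dimension at most one, and it is free exactly
when one of the coefficients of the relation is a unit, that is, when `k₁` or `k₂` is a unit. As `S`
is regular, `R` is free if and only if it is Cohen-Macaulay; and `k₁` or `k₂` is a unit if and only
if the ideal `(dᵖ k₁ᵖ, dᵖ k₂ᵖ)` of `S ⧸ p` is principal.
-/

open IsLocalRing RingTheory.Sequence CategoryTheory
open scoped Pointwise

section NormalDomain

variable {T : Type*} [CommRing T] [IsDomain T]

theorem exists_mul_eq_mul_notMem [IsIntegrallyClosed T] {P : Ideal T} (hPfg : P.FG) {y z : T}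
    (hy : y ≠ 0) (hP : ∀ s, s ∈ P ↔ y ∣ s * z) (hne : P ≠ ⊤) :
    ∃ π ∈ P, ∃ u ∉ P, π * z = y * u := by
  by_contra! hcon
  have hmul : ∀ r ∈ P, ∃ u ∈ P, r * z = y * u := fun r hr ↦ by
    obtain ⟨u, hu⟩ := (hP r).1 hr
    exact ⟨u, by_contra fun h ↦ hcon r hr u h hu, hu⟩
  let F := FractionRing T
  have hy' : algebraMap T F y ≠ 0 := by simpa using hy
  have hyP : y ∈ P := (hP y).2 (dvd_mul_right y z)
  -- multiplication by `z / y` would preserve the finitely generated module `P`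
  let N : Submodule T F := Submodule.map (Algebra.linearMap T F) P
  have hint : IsIntegral T (algebraMap T F z / algebraMap T F y) := by
    refine isIntegral_of_smul_mem_submodule (A := F) N ?_ (Submodule.FG.map _ hPfg) _ ?_
    · intro h
      have : algebraMap T F y ∈ N := ⟨y, hyP, rfl⟩
      rw [h, Submodule.mem_bot] at this
      exact hy' this
    · rintro _ ⟨r, hr, rfl⟩
      obtain ⟨u, hu, hru⟩ := hmul r hr
      refine ⟨u, hu, ?_⟩
      rw [Algebra.linearMap_apply, Algebra.linearMap_apply, smul_eq_mul, div_mul_eq_mul_div,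
        eq_div_iff hy', ← map_mul, ← map_mul, mul_comm z, hru, mul_comm]
  obtain ⟨w, hw⟩ := IsIntegrallyClosed.isIntegral_iff.1 hint
  refine hne ((Ideal.eq_top_iff_one P).2 ((hP 1).2 ⟨w, ?_⟩))
  apply IsFractionRing.injective T F
  rw [one_mul, map_mul, hw, mul_div_cancel₀ _ hy']

theorem isDiscreteValuationRing_of_isAssociatedPrime [IsNoetherianRing T] [IsIntegrallyClosed T]
    {y : T} (hy : y ≠ 0) {P : Ideal T} [P.IsPrime]
    (hP : IsAssociatedPrime P (T ⧸ Ideal.span {y})) :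
    IsDiscreteValuationRing (Localization.AtPrime P) := by
  obtain ⟨-, z', hz'⟩ := isAssociatedPrime_iff.1 hP
  obtain ⟨z, rfl⟩ := Ideal.Quotient.mk_surjective z'
  have hmem : ∀ s, s ∈ P ↔ y ∣ s * z := fun s ↦ by
    rw [hz', Submodule.mem_colon_singleton, ← Ideal.Quotient.eq_zero_iff_dvd, map_mul]
    simp [Algebra.smul_def]
  have hyP : y ∈ P := (hmem y).2 (dvd_mul_right y z)
  obtain ⟨π, hπ, u, hu, hπz⟩ :=
    exists_mul_eq_mul_notMem (IsNoetherian.noetherian P) hy hmem (Ideal.IsPrime.ne_top ‹_›)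
  have hgen : ∀ r ∈ P, π ∣ r * u := fun r hr ↦ by
    obtain ⟨r', hr'⟩ := (hmem r).1 hr
    exact ⟨r', mul_left_cancel₀ hy (by linear_combination π * hr' - r * hπz)⟩
  have hmax : IsLocalRing.maximalIdeal (Localization.AtPrime P) =
      Ideal.span {algebraMap T (Localization.AtPrime P) π} := by
    rw [← Localization.AtPrime.map_eq_maximalIdeal]
    refine le_antisymm (Ideal.map_le_iff_le_comap.2 fun r hr ↦ ?_)
      ((Ideal.span_singleton_le_iff_mem _).2 (Ideal.mem_map_of_mem _ hπ))
    have hunit : IsUnit (algebraMap T (Localization.AtPrime P) u) :=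
      IsLocalization.map_units _ (⟨u, hu⟩ : P.primeCompl)
    rw [Ideal.mem_comap, ← Ideal.mul_unit_mem_iff_mem _ hunit, ← map_mul,
      Ideal.mem_span_singleton]
    exact map_dvd _ (hgen r hr)
  have hfield : ¬ IsField (Localization.AtPrime P) := fun h ↦ hy <| by
    have : algebraMap T (Localization.AtPrime P) y ∈ (⊥ : Ideal _) := by
      rw [← IsLocalRing.isField_iff_maximalIdeal_eq.1 h, ← Localization.AtPrime.map_eq_maximalIdeal]
      exact Ideal.mem_map_of_mem _ hyP
    exact (IsLocalization.to_map_eq_zero_iff _ P.primeCompl_le_nonZeroDivisors).1 this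
  have := IsLocalization.isNoetherianRing P.primeCompl (Localization.AtPrime P) inferInstance
  exact ((IsDiscreteValuationRing.TFAE _ hfield).out 0 4).2
    (hmax ▸ (inferInstance : (Ideal.span {algebraMap T _ π}).IsPrincipal))

theorem algebraMap_localization_ne_zero (q : Ideal T) [q.IsPrime] {x : T} (hx : x ≠ 0) :
    algebraMap T (Localization.AtPrime q) x ≠ 0 := fun h ↦
  hx ((IsLocalization.to_map_eq_zero_iff _ q.primeCompl_le_nonZeroDivisors).1 h)

theorem dvd_of_forall_dvd_localization [IsNoetherianRing T] [IsIntegrallyClosed T] {x y : T}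
    (hy : y ≠ 0) (h : ∀ (q : Ideal T) [q.IsPrime], y ∈ q →
      IsDiscreteValuationRing (Localization.AtPrime q) →
      algebraMap T (Localization.AtPrime q) y ∣ algebraMap T (Localization.AtPrime q) x) :
    y ∣ x := by
  by_contra hxy
  have hx0 : (Ideal.Quotient.mk (Ideal.span {y}) x : T ⧸ Ideal.span {y}) ≠ 0 := by
    rwa [Ne, Ideal.Quotient.eq_zero_iff_dvd]
  obtain ⟨P, hP, hle⟩ := exists_le_isAssociatedPrime_of_isNoetherianRing T _ hx0
  have hann : ∀ s, y ∣ s * x → s ∈ P := fun s hs ↦ hle <| by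
    rw [← Ideal.Quotient.eq_zero_iff_dvd, map_mul] at hs
    simpa [Submodule.mem_colon_singleton, Algebra.smul_def] using hs
  have := hP.isPrime
  have hdvd := h P (hann y (dvd_mul_right y x)) (isDiscreteValuationRing_of_isAssociatedPrime hy hP)
  rw [← Ideal.mem_span_singleton, ← Set.image_singleton, ← Ideal.map_span,
    IsLocalization.algebraMap_mem_map_algebraMap_iff P.primeCompl] at hdvd
  obtain ⟨s, hs, hsx⟩ := hdvd
  exact hs (hann s (Ideal.mem_span_singleton.1 hsx))

end NormalDomain

section Length

variable {A V : Type*} [CommRing A] [IsDomain A]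

theorem ord_prod {ι : Type*} (s : Finset ι) {a : ι → A} (ha : ∀ i ∈ s, a i ≠ 0) :
    Ring.ord A (∏ i ∈ s, a i) = ∑ i ∈ s, Ring.ord A (a i) := by
  classical
  induction s using Finset.induction_on with
  | empty => simp
  | insert i s hi ih =>
    have hs : ∀ j ∈ s, a j ≠ 0 := fun j hj ↦ ha j (Finset.mem_insert_of_mem hj)
    rw [Finset.prod_insert hi, Finset.sum_insert hi,
      Ring.ord_mul A (mem_nonZeroDivisors_of_ne_zero (Finset.prod_ne_zero_iff.2 hs)), ih hs]

variable [AddCommGroup V] [Module A V]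

theorem det_ne_zero_of_injective [Module.Free A V] {φ : V →ₗ[A] V}
    (hφ : Function.Injective φ) : LinearMap.det φ ≠ 0 := fun h ↦
  (LinearMap.bot_lt_ker_of_det_eq_zero h).ne' (LinearMap.ker_eq_bot.2 hφ)

theorem length_quotient_range_eq_ord_det [IsPrincipalIdealRing A] [Module.Free A V]
    [Module.Finite A V] {φ : V →ₗ[A] V} (hφ : Function.Injective φ) :
    Module.length A (V ⧸ LinearMap.range φ) = Ring.ord A (LinearMap.det φ) := by
  classical
  let b := Module.finBasis A V
  let N := LinearMap.range φ
  let e : V ≃ₗ[A] N := LinearEquiv.ofInjective φ hφ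
  have hrank : Module.finrank A N = Module.finrank A V := e.symm.finrank_eq
  let bV := N.smithNormalFormTopBasis b hrank
  let bN := N.smithNormalFormBotBasis b hrank
  let a := N.smithNormalFormCoeffs b hrank
  have hab : ∀ i, (bN i : V) = a i • bV i := N.smithNormalFormBotBasis_def b hrank
  have hdet : Associated (LinearMap.det φ) (∏ i, a i) := by
    have hmat : LinearMap.toMatrix bV bV (N.subtype ∘ₗ (bV.equiv bN (Equiv.refl _))) =
        Matrix.diagonal a := by
      ext i j
      rw [LinearMap.toMatrix_apply, LinearMap.comp_apply, LinearEquiv.coe_coe,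
        Module.Basis.equiv_apply, Equiv.refl_apply, Submodule.subtype_apply, hab, map_smul,
        bV.repr_self, Finsupp.smul_single, smul_eq_mul, mul_one, Matrix.diagonal_apply,
        Finsupp.single_apply]
      grind
    rw [← Matrix.det_diagonal, ← hmat, LinearMap.det_toMatrix]
    exact LinearMap.associated_det_comp_equiv N.subtype e (bV.equiv bN (Equiv.refl _))
  calc
    _ = ∑ i, Ring.ord A (a i) := by
      rw [(N.quotientEquivPiSpan b hrank).length_eq, Module.length_pi_of_fintype]
      rfl
    _ = Ring.ord A (∏ i, a i) :=
      (ord_prod _ fun i _ ↦ N.smithNormalFormCoeffs_ne_zero b hrank i).symm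
    _ = Ring.ord A (LinearMap.det φ) := (Ring.ord_eq_of_associated hdet).symm

end Length

section LocalRing

variable {A : Type*} [CommRing A]

theorem exists_mem_notMem_of_not_le {I J : Ideal A} {s : Set (Ideal A)} (hs : s.Finite)
    (hprime : ∀ q ∈ s, q.IsPrime) (hJ : ¬ I ≤ J) (hle : ∀ q ∈ s, ¬ I ≤ q) :
    ∃ x ∈ I, x ∉ J ∧ ∀ q ∈ s, x ∉ q := by
  classical
  by_contra! hcon
  have hsub : (I : Set A) ⊆ ⋃ q ∈ (↑(insert J hs.toFinset) : Set (Ideal A)), (id q : Set A) := by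
    intro x hx
    simp only [Set.mem_iUnion]
    by_cases hxJ : x ∈ J
    · exact ⟨J, by simp, hxJ⟩
    · obtain ⟨q, hq, hxq⟩ := hcon x hx hxJ
      exact ⟨q, by simp [hq], hxq⟩
  obtain ⟨q, hq, hIq⟩ := (Ideal.subset_union_prime J J fun q hq hne _ ↦
    hprime q (by simpa [hne] using hq)).1 hsub
  rcases Finset.mem_insert.1 hq with rfl | hq
  · exact hJ hIq
  · exact hle q (hs.mem_toFinset.1 hq) hIq

variable [IsLocalRing A]

theorem isLocalRing_quotient_span_singleton {x : A} (hx : x ∈ maximalIdeal A) :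
    IsLocalRing (A ⧸ Ideal.span {x}) :=
  have : Nontrivial (A ⧸ Ideal.span {x}) := Ideal.Quotient.nontrivial_iff.2
    (ne_top_of_le_ne_top Ideal.IsPrime.ne_top' ((Ideal.span_singleton_le_iff_mem _).2 hx))
  .of_surjective' _ Ideal.Quotient.mk_surjective

theorem map_mk_maximalIdeal (I : Ideal A) [IsLocalRing (A ⧸ I)] :
    (maximalIdeal A).map (Ideal.Quotient.mk I) = maximalIdeal (A ⧸ I) := by
  have := IsLocalHom.of_surjective (Ideal.Quotient.mk I) Ideal.Quotient.mk_surjective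
  rw [← maximalIdeal_comap (Ideal.Quotient.mk I),
    Ideal.map_comap_of_surjective _ Ideal.Quotient.mk_surjective]

theorem exists_span_insert_eq_maximalIdeal {s : Finset A}
    (hs : Ideal.span (s : Set A) = maximalIdeal A) {x : A} (hx : x ∈ maximalIdeal A)
    (hx2 : x ∉ maximalIdeal A ^ 2) :
    ∃ t : Finset A, t.card + 1 = s.card ∧ Ideal.span (insert x (t : Set A)) = maximalIdeal A := by
  classical
  have hsm : ∀ i ∈ s, i ∈ maximalIdeal A := fun i hi ↦ hs ▸ Ideal.subset_span hi
  obtain ⟨c, hc⟩ := Submodule.mem_span_finset'.1 (hs.ge hx : x ∈ Submodule.span A (s : Set A))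
  obtain ⟨i, hi⟩ : ∃ i, IsUnit (c i) := by
    by_contra! hcon
    refine hx2 (hc ▸ sum_mem fun i _ ↦ ?_)
    rw [sq]
    exact Ideal.mul_mem_mul (hcon i) (hsm i i.2)
  refine ⟨s.erase i, Finset.card_erase_add_one i.2, le_antisymm (Ideal.span_le.2 ?_) ?_⟩
  · rintro y (rfl | hy)
    · exact hx
    · exact hsm y (Finset.mem_of_mem_erase hy)
  · have hi_mem : (i : A) ∈ Ideal.span (insert x ((s.erase i : Finset A) : Set A)) := by
      rw [← Ideal.unit_mul_mem_iff_mem _ hi]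
      have : c i * i = x - ∑ j ∈ Finset.univ.erase i, c j * j := by
        rw [← hc, ← Finset.add_sum_erase _ _ (Finset.mem_univ i)]
        simp
      rw [this]
      refine sub_mem (Ideal.subset_span (Set.mem_insert _ _)) (sum_mem fun j hj ↦
        Ideal.mul_mem_left _ _ (Ideal.subset_span (Set.mem_insert_of_mem _ ?_)))
      exact Finset.mem_erase.2 ⟨fun h ↦ (Finset.mem_erase.1 hj).1 (Subtype.ext h), j.2⟩
    rw [← hs, Ideal.span_le]
    intro y hy
    by_cases hyi : y = i
    · exact hyi ▸ hi_mem
    · exact Ideal.subset_span (Set.mem_insert_of_mem _ (by simp [hyi, Finset.mem_coe.1 hy]))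

variable [IsNoetherianRing A]

theorem isRegularLocalRing_of_exists_finset
    (h : ∃ s : Finset A, Ideal.span (s : Set A) = maximalIdeal A ∧
      (s.card : WithBot ℕ∞) = ringKrullDim A) : IsRegularLocalRing A := by
  obtain ⟨s, hs, hcard⟩ := h
  refine .of_spanFinrank_maximalIdeal_le A ?_
  rw [← hcard, ← hs, Nat.cast_le, ← Set.ncard_coe_finset]
  exact Submodule.spanFinrank_span_le_ncard_of_finite s.finite_toSet

theorem spanFinrank_maximalIdeal_quotient_lt {x : A} (hx : x ∈ maximalIdeal A)
    (hx2 : x ∉ maximalIdeal A ^ 2) [IsLocalRing (A ⧸ Ideal.span {x})] :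
    (maximalIdeal (A ⧸ Ideal.span {x})).spanFinrank < (maximalIdeal A).spanFinrank := by
  obtain ⟨s, hcard, hs⟩ :=
    (IsNoetherian.noetherian (maximalIdeal A)).exists_span_finset_card_eq_spanFinrank
  obtain ⟨t, ht, hspan⟩ := exists_span_insert_eq_maximalIdeal hs hx hx2
  have hmax : maximalIdeal (A ⧸ Ideal.span {x}) =
      Ideal.span (Ideal.Quotient.mk (Ideal.span {x}) '' t) := by
    rw [← map_mk_maximalIdeal, ← hspan, Ideal.map_span, Set.image_insert_eq,
      Ideal.Quotient.eq_zero_iff_mem.2 (Ideal.mem_span_singleton_self x), Ideal.span_insert_zero]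
  rw [← hcard, ← ht, Nat.lt_succ_iff, hmax, ← Set.ncard_coe_finset]
  exact (Submodule.spanFinrank_span_le_ncard_of_finite (t.finite_toSet.image _)).trans
    (Set.ncard_image_le t.finite_toSet)

end LocalRing

section RegularLocalRing

theorem isRegularLocalRing_quotient_span_singleton {A : Type*} [CommRing A]
    [IsRegularLocalRing A] {x : A} (hx : x ∈ maximalIdeal A) (hx2 : x ∉ maximalIdeal A ^ 2) :
    IsRegularLocalRing (A ⧸ Ideal.span {x}) := by
  have := isLocalRing_quotient_span_singleton hx
  refine .of_spanFinrank_maximalIdeal_le _ ?_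
  have hlt : ((maximalIdeal (A ⧸ Ideal.span {x})).spanFinrank + 1 : WithBot ℕ∞) ≤
      ringKrullDim (A ⧸ Ideal.span {x}) + 1 := by
    calc
      _ ≤ ((maximalIdeal A).spanFinrank : WithBot ℕ∞) := by
        exact_mod_cast spanFinrank_maximalIdeal_quotient_lt hx hx2
      _ = ringKrullDim A := IsRegularLocalRing.spanFinrank_maximalIdeal
      _ ≤ _ := by
        simpa using ringKrullDim_le_ringKrullDim_quotient_add_encard {x}
          (by simpa [ringJacobson_eq_maximalIdeal] using hx)
  exact ENat.WithBot.add_le_add_one_right_iff.1 hlt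

theorem ringKrullDim_eq_zero_of_maximalIdeal_mem_minimalPrimes {A : Type*} [CommRing A]
    [IsLocalRing A] (h : maximalIdeal A ∈ minimalPrimes A) : ringKrullDim A = 0 := by
  rw [← maximalIdeal_height_eq_ringKrullDim, Ideal.height_eq_zero_iff.2 h, WithBot.coe_zero]

theorem exists_mem_maximalIdeal_notMem_minimalPrimes {A : Type*} [CommRing A] [IsLocalRing A]
    [IsNoetherianRing A] (hdim : ringKrullDim A ≠ 0) :
    ∃ x ∈ maximalIdeal A, x ∉ maximalIdeal A ^ 2 ∧ ∀ q ∈ minimalPrimes A, x ∉ q := by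
  refine exists_mem_notMem_of_not_le (minimalPrimes.finite_of_isNoetherianRing A)
    (fun q hq ↦ hq.1.1) (fun hle ↦ hdim ?_) (fun q hq hle ↦ hdim ?_)
  · have hbot : maximalIdeal A = ⊥ := by
      refine Submodule.eq_bot_of_le_smul_of_le_jacobson_bot (maximalIdeal A) _
        (IsNoetherian.noetherian _) ?_ (maximalIdeal_le_jacobson _)
      rwa [smul_eq_mul, ← sq]
    exact ringKrullDim_eq_zero_of_isField (isField_iff_maximalIdeal_eq.2 hbot)
  · have : maximalIdeal A = q := le_antisymm hle (le_maximalIdeal hq.1.1.ne_top)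
    exact ringKrullDim_eq_zero_of_maximalIdeal_mem_minimalPrimes (this ▸ hq)

theorem isDomain_of_isDomain_quotient_span_singleton {A : Type*} [CommRing A] [IsLocalRing A]
    [IsNoetherianRing A] {x : A} (hx : x ∈ maximalIdeal A) (hmin : ∀ q ∈ minimalPrimes A, x ∉ q)
    [IsDomain (A ⧸ Ideal.span {x})] : IsDomain A := by
  have hprime : (Ideal.span {x}).IsPrime := (Ideal.Quotient.isDomain_iff_prime _).1 ‹_›
  obtain ⟨q, hq, hqle⟩ := Ideal.exists_minimalPrimes_le (bot_le : (⊥ : Ideal A) ≤ Ideal.span {x})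
  have hqp : q.IsPrime := hq.1.1
  have hqx : q ≤ Ideal.span {x} • q := fun r hr ↦ by
    obtain ⟨s, rfl⟩ := Ideal.mem_span_singleton.1 (hqle hr)
    exact Submodule.smul_mem_smul (Ideal.mem_span_singleton_self x)
      ((hqp.mem_or_mem hr).resolve_left (hmin q hq))
  have hq0 : q = ⊥ := Submodule.eq_bot_of_le_smul_of_le_jacobson_bot (Ideal.span {x}) _
    (IsNoetherian.noetherian _) hqx
    ((Ideal.span_singleton_le_iff_mem _).2 (maximalIdeal_le_jacobson _ hx))
  have : IsDomain (A ⧸ (⊥ : Ideal A)) := (Ideal.Quotient.isDomain_iff_prime _).2 (hq0 ▸ hqp)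
  exact (RingEquiv.quotientBot A).symm.isDomain

theorem isWeaklyRegular_cons_of_quotient {A : Type*} [CommRing A] {x : A} {rs : List A}
    (hx : IsSMulRegular A x)
    (h : IsWeaklyRegular (A ⧸ Ideal.span {x}) (rs.map (Ideal.Quotient.mk (Ideal.span {x})))) :
    IsWeaklyRegular A (x :: rs) := by
  have htop : Ideal.span {x} = x • (⊤ : Ideal A) := by
    simp [← Submodule.ideal_span_singleton_smul]
  refine (isWeaklyRegular_cons_iff _ _ _).2 ⟨hx, ?_⟩
  rw [← (Submodule.quotEquivOfEq _ _ htop).isWeaklyRegular_congr]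
  exact (isWeaklyRegular_map_algebraMap_iff (A ⧸ Ideal.span {x}) (A ⧸ Ideal.span {x}) rs).1 h

theorem ofList_cons_eq_maximalIdeal {A : Type*} [CommRing A] [IsLocalRing A] {x : A}
    [IsLocalRing (A ⧸ Ideal.span {x})] {rs : List A}
    (h : Ideal.ofList (rs.map (Ideal.Quotient.mk (Ideal.span {x}))) = maximalIdeal _) :
    Ideal.ofList (x :: rs) = maximalIdeal A := by
  have := IsLocalHom.of_surjective (Ideal.Quotient.mk (Ideal.span {x})) Ideal.Quotient.mk_surjective
  rw [← maximalIdeal_comap (Ideal.Quotient.mk (Ideal.span {x})), ← h, ← Ideal.map_ofList,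
    Ideal.comap_map_of_surjective _ Ideal.Quotient.mk_surjective, Ideal.ofList_cons, sup_comm,
    ← RingHom.ker_eq_comap_bot, Ideal.mk_ker]

theorem isDomain_and_exists_isWeaklyRegular (A : Type*) [CommRing A] [IsRegularLocalRing A] :
    IsDomain A ∧ ∃ rs : List A, Ideal.ofList rs = maximalIdeal A ∧ IsWeaklyRegular A rs := by
  induction hn : (maximalIdeal A).spanFinrank using Nat.strong_induction_on generalizing A with
  | _ n ih =>
  by_cases hdim : ringKrullDim A = 0
  · have hbot : maximalIdeal A = ⊥ := by
      rw [← IsRegularLocalRing.spanFinrank_maximalIdeal, Nat.cast_eq_zero] at hdim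
      exact (Submodule.spanFinrank_eq_zero_iff_eq_bot (IsNoetherian.noetherian _)).1 hdim
    exact ⟨(isField_iff_maximalIdeal_eq.2 hbot).isDomain, [], by simp [hbot], by simp⟩
  · obtain ⟨x, hxm, hx2, hxmin⟩ := exists_mem_maximalIdeal_notMem_minimalPrimes hdim
    have := isRegularLocalRing_quotient_span_singleton hxm hx2
    obtain ⟨_, rs, hrs, hreg⟩ :=
      ih _ (hn ▸ spanFinrank_maximalIdeal_quotient_lt hxm hx2) (A ⧸ Ideal.span {x}) rfl
    obtain ⟨rs, rfl⟩ := List.map_surjective_iff.2 Ideal.Quotient.mk_surjective rs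
    have hdom : IsDomain A := isDomain_of_isDomain_quotient_span_singleton hxm hxmin
    have hx0 : x ≠ 0 := by
      rintro rfl
      exact hx2 (zero_mem _)
    exact ⟨hdom, x :: rs, ofList_cons_eq_maximalIdeal hrs,
      isWeaklyRegular_cons_of_quotient (.of_ne_zero hx0) hreg⟩

theorem exists_isRegular_ofList_eq_maximalIdeal (A : Type*) [CommRing A] [IsRegularLocalRing A] :
    ∃ rs : List A, Ideal.ofList rs = maximalIdeal A ∧ IsRegular A rs := by
  obtain ⟨_, rs, hrs, hreg⟩ := isDomain_and_exists_isWeaklyRegular A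
  refine ⟨rs, hrs, .of_isWeaklyRegular_of_mem_maximalIdeal A (fun r hr ↦ ?_) hreg⟩
  exact hrs ▸ Ideal.subset_span hr

end RegularLocalRing

universe u

/-- A module has finite projective dimension; over a regular local ring all finite modules do. The
universes agree because the dimension is taken in the category `ModuleCat.{u} A`. -/
def HasFiniteProjectiveDimension (A M : Type u) [CommRing A] [AddCommGroup M] [Module A M] :
    Prop :=
  ∃ n : ℕ, HasProjectiveDimensionLT (ModuleCat.of A M) n

namespace HasFiniteProjectiveDimension

variable {A M N : Type u} [CommRing A] [AddCommGroup M] [Module A M] [AddCommGroup N] [Module A N]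

theorem of_linearEquiv (e : M ≃ₗ[A] N) (h : HasFiniteProjectiveDimension A M) :
    HasFiniteProjectiveDimension A N := by
  obtain ⟨n, hn⟩ := h
  exact ⟨n, hasProjectiveDimensionLT_of_iso e.toModuleIso n⟩

theorem of_submodule_of_quotient (N : Submodule A M) (hN : HasFiniteProjectiveDimension A N)
    (hQ : HasFiniteProjectiveDimension A (M ⧸ N)) : HasFiniteProjectiveDimension A M := by
  obtain ⟨m, hm⟩ := of_linearEquiv (LinearEquiv.ofEq _ _ N.ker_mkQ.symm) hN
  obtain ⟨n, hn⟩ := hQ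
  have hexact := LinearMap.shortExact_shortComplexKer N.mkQ_surjective
  exact ⟨max m n, hexact.hasProjectiveDimensionLT_X₂ _
    (hasProjectiveDimensionLT_of_ge _ m _ (le_max_left m n))
    (hasProjectiveDimensionLT_of_ge _ n _ (le_max_right m n))⟩

theorem of_quotient_of_colon (I : Ideal A) (a : A)
    (hcolon : HasFiniteProjectiveDimension A (A ⧸ I.colon {a}))
    (hsup : HasFiniteProjectiveDimension A (A ⧸ I ⊔ Ideal.span {a})) :
    HasFiniteProjectiveDimension A (A ⧸ I) := by
  have htors : I.colon {a} = Ideal.torsionOf A (A ⧸ I) (Ideal.Quotient.mk I a) := by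
    ext r
    rw [Submodule.mem_colon_singleton, Ideal.mem_torsionOf_iff]
    exact (Submodule.Quotient.mk_eq_zero I).symm
  have hmap : Submodule.map I.mkQ (Ideal.span {a}) = A ∙ Ideal.Quotient.mk I a := by
    rw [Ideal.span, Submodule.map_span, Set.image_singleton]
    rfl
  exact of_submodule_of_quotient (A ∙ (Ideal.Quotient.mk I a))
    (hcolon.of_linearEquiv ((Submodule.quotEquivOfEq _ _ htors).trans
      (Ideal.quotTorsionOfEquivSpanSingleton A _ _)))
    (hsup.of_linearEquiv ((Submodule.quotientQuotientEquivQuotientSup I _).symm.trans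
      (Submodule.quotEquivOfEq _ _ hmap)))

theorem of_quotSMulTop [IsLocalRing A] [IsNoetherianRing A] [Module.Finite A M] {x : A}
    (hx : x ∈ maximalIdeal A) (hreg : IsSMulRegular M x)
    (h : HasFiniteProjectiveDimension A (QuotSMulTop x M)) : HasFiniteProjectiveDimension A M := by
  obtain ⟨n, hn⟩ := h
  have hpd := ModuleCat.projectiveDimension_quotSMulTop_eq_succ_of_isSMulRegular
    (ModuleCat.of A M) x hreg hx
  rw [← projectiveDimension_lt_iff, hpd] at hn
  exact ⟨n, projectiveDimension_lt_iff.1 (lt_of_le_of_lt (le_add_of_nonneg_right zero_le_one) hn)⟩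

theorem quotient_maximalIdeal [IsRegularLocalRing A] :
    HasFiniteProjectiveDimension A (A ⧸ maximalIdeal A) := by
  obtain ⟨rs, hrs, hreg⟩ := exists_isRegular_ofList_eq_maximalIdeal A
  have hpd := ModuleCat.projectiveDimension_quotient_eq_length.{u, u} rs hreg
  refine of_linearEquiv ((Shrink.linearEquiv A _).trans (Submodule.quotEquivOfEq _ _ hrs))
    ⟨rs.length + 1, projectiveDimension_lt_iff.1 ?_⟩
  rw [hpd]
  exact_mod_cast Nat.lt_succ_self _

theorem quotient_of_isPrime [IsLocalRing A] [IsNoetherianRing A] {I : Ideal A} (hI : I.IsPrime)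
    {x : A} (hx : x ∈ maximalIdeal A) (hxI : x ∉ I)
    (h : HasFiniteProjectiveDimension A (A ⧸ I ⊔ Ideal.span {x})) :
    HasFiniteProjectiveDimension A (A ⧸ I) := by
  have hreg : IsSMulRegular (A ⧸ I) x := by
    refine (isSMulRegular_quotient_iff_mem_of_smul_mem _ _).2 fun y hy ↦ ?_
    exact (hI.mem_or_mem hy).resolve_left hxI
  have hmap : Submodule.map I.mkQ (Ideal.span {x}) = x • ⊤ := by
    rw [← mul_one (Ideal.span {x}), ← smul_eq_mul, Submodule.ideal_span_singleton_smul,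
      Submodule.map_pointwise_smul, Ideal.one_eq_top, Submodule.map_top, Submodule.range_mkQ]
  exact of_quotSMulTop hx hreg (h.of_linearEquiv
    ((Submodule.quotientQuotientEquivQuotientSup I _).symm.trans
      (Submodule.quotEquivOfEq _ _ hmap)))

theorem quotient [IsRegularLocalRing A] (I : Ideal A) :
    HasFiniteProjectiveDimension A (A ⧸ I) := by
  induction I using IsNoetherian.induction with | hgt I ih =>
  by_cases hprime : Ideal.IsPrime I
  · by_cases hmax : maximalIdeal A ≤ I
    · exact (maximalIdeal.isMaximal A).eq_of_le hprime.ne_top hmax ▸ quotient_maximalIdeal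
    · obtain ⟨x, hx, hxI⟩ := SetLike.not_le_iff_exists.1 hmax
      exact quotient_of_isPrime hprime hx hxI (ih _ (left_lt_sup.2 fun hle ↦
        hxI (hle (Ideal.mem_span_singleton_self x))))
  · by_cases htop : I = ⊤
    · have : Subsingleton (A ⧸ I) := Ideal.Quotient.subsingleton_iff.2 htop
      exact ⟨0, (ModuleCat.isZero_of_subsingleton _).hasProjectiveDimensionLT_zero⟩
    · obtain ⟨a, ha, b, hb, hab⟩ := (Ideal.not_isPrime_iff.1 hprime).resolve_left htop
      refine of_quotient_of_colon I a (ih _ (lt_of_le_of_ne Ideal.le_colon fun heq ↦ hb ?_))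
        (ih _ (left_lt_sup.2 fun hle ↦ ha (hle (Ideal.mem_span_singleton_self a))))
      rw [heq, Submodule.mem_colon_singleton, smul_eq_mul, mul_comm]
      exact hab

end HasFiniteProjectiveDimension

open scoped TensorProduct

section MacRae

variable (T : Type*) [CommRing T] [IsDomain T]

/-- A MacRae invariant of a torsion module: a fraction `x / y` whose divisor is the divisor of `M`.
At every prime `q` whose local ring is a discrete valuation ring, the length of `M` at `q` is the
order of `x / y`. -/
def IsMacRaeInvariant (M : Type*) [AddCommGroup M] [Module T M] (x y : T) : Prop :=
  x ≠ 0 ∧ y ≠ 0 ∧ ∀ (q : Ideal T) [q.IsPrime], IsDiscreteValuationRing (Localization.AtPrime q) →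
    Module.length (Localization.AtPrime q) (Localization.AtPrime q ⊗[T] M) +
        Ring.ord (Localization.AtPrime q) (algebraMap T (Localization.AtPrime q) y) =
      Ring.ord (Localization.AtPrime q) (algebraMap T (Localization.AtPrime q) x)

namespace IsMacRaeInvariant

variable {T} {M M' M'' : Type*} [AddCommGroup M] [Module T M] [AddCommGroup M'] [Module T M']
  [AddCommGroup M''] [Module T M''] {x y x' y' : T}

theorem of_linearEquiv (e : M ≃ₗ[T] M') (h : IsMacRaeInvariant T M x y) :
    IsMacRaeInvariant T M' x y :=
  ⟨h.1, h.2.1, fun q _ hq ↦ by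
    rw [← (e.baseChange T (Localization.AtPrime q) M M').length_eq, h.2.2 q hq]⟩

theorem of_exact {f : M' →ₗ[T] M} {g : M →ₗ[T] M''} (hf : Function.Injective f)
    (hg : Function.Surjective g) (hfg : Function.Exact f g) (h : IsMacRaeInvariant T M x y)
    (h' : IsMacRaeInvariant T M' x' y') : IsMacRaeInvariant T M'' (x * y') (y * x') := by
  refine ⟨mul_ne_zero h.1 h'.2.1, mul_ne_zero h.2.1 h'.1, fun q _ hq ↦ ?_⟩
  have hlen := Module.length_eq_add_of_exact (f.baseChange (Localization.AtPrime q))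
    (g.baseChange (Localization.AtPrime q)) (Module.Flat.lTensor_preserves_injective_linearMap f hf)
    (LinearMap.lTensor_surjective _ hg) (Module.Flat.lTensor_exact _ hfg)
  have hM := h.2.2 q hq
  rw [map_mul, map_mul,
    Ring.ord_mul _ (mem_nonZeroDivisors_of_ne_zero (algebraMap_localization_ne_zero q h'.1)),
    Ring.ord_mul _ (mem_nonZeroDivisors_of_ne_zero (algebraMap_localization_ne_zero q h'.2.1)),
    ← hM, ← h'.2.2 q hq, hlen]
  abel

theorem quotient_range [Module.Free T M] [Module.Finite T M] {φ : M →ₗ[T] M}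
    (hφ : Function.Injective φ) :
    IsMacRaeInvariant T (M ⧸ LinearMap.range φ) (LinearMap.det φ) 1 := by
  refine ⟨det_ne_zero_of_injective hφ, one_ne_zero, fun q _ hq ↦ ?_⟩
  let A := Localization.AtPrime q
  have hinj : Function.Injective (φ.baseChange A) :=
    Module.Flat.lTensor_preserves_injective_linearMap φ hφ
  have hexact : Function.Exact (φ.baseChange A) ((LinearMap.range φ).mkQ.baseChange A) :=
    lTensor_exact A (LinearMap.exact_map_mkQ_range φ) (Submodule.mkQ_surjective _)
  rw [map_one, Ring.ord_one, add_zero, ← LinearMap.det_baseChange,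
    ← length_quotient_range_eq_ord_det hinj, ← LinearMap.exact_iff.1 hexact]
  exact (LinearMap.quotKerEquivOfSurjective _
    (LinearMap.lTensor_surjective A (Submodule.mkQ_surjective _))).length_eq.symm

theorem of_free_ker [Module.Free T M] [Module.Finite T M] {π : M →ₗ[T] M'}
    (hπ : Function.Surjective π) [Module.Free T (LinearMap.ker π)]
    [Module.Finite T (LinearMap.ker π)] (hM' : Module.IsTorsion T M') :
    ∃ x, IsMacRaeInvariant T M' x 1 := by
  have : Module.Finite T M' := Module.Finite.of_surjective π hπ
  have hrank : Module.finrank T M = Module.finrank T (LinearMap.ker π) := by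
    rw [← Submodule.finrank_quotient_add_finrank (LinearMap.ker π),
      (π.quotKerEquivOfSurjective hπ).finrank_eq, Module.finrank_eq_zero_iff_isTorsion.2 hM',
      zero_add]
  let e := LinearEquiv.ofFinrankEq M (LinearMap.ker π) hrank
  have hrange : LinearMap.range ((LinearMap.ker π).subtype ∘ₗ e.toLinearMap) = LinearMap.ker π := by
    rw [LinearMap.range_comp_of_range_eq_top _ e.range, Submodule.range_subtype]
  exact ⟨_, (quotient_range (Subtype.val_injective.comp e.injective)).of_linearEquiv
    ((Submodule.quotEquivOfEq _ _ hrange).trans (π.quotKerEquivOfSurjective hπ))⟩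

theorem of_quotient_of_le {N K : Submodule T M} (hle : N ≤ K)
    (hN : IsMacRaeInvariant T (M ⧸ N) x y)
    (hK : IsMacRaeInvariant T (K ⧸ N.submoduleOf K) x' y') :
    IsMacRaeInvariant T (M ⧸ K) (x * y') (y * x') := by
  let f : (K ⧸ N.submoduleOf K) →ₗ[T] M ⧸ N := (N.submoduleOf K).mapQ N K.subtype le_rfl
  refine of_exact (f := f) (g := Submodule.factor hle) ?_ (Submodule.factor_surjective hle) ?_ hN hK
  · rw [injective_iff_map_eq_zero]
    rintro ⟨v⟩ hv
    exact (Submodule.Quotient.mk_eq_zero _).2 ((Submodule.Quotient.mk_eq_zero N).1 hv)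
  · rintro ⟨v⟩
    refine ⟨fun hv ↦ ⟨Submodule.Quotient.mk ⟨v, (Submodule.Quotient.mk_eq_zero K).1 hv⟩, rfl⟩, ?_⟩
    rintro ⟨⟨w⟩, hw⟩
    rw [← hw]
    exact (Submodule.Quotient.mk_eq_zero K).2 w.2

theorem exists_of_hasProjectiveDimensionLT {T : Type u} [CommRing T] [IsDomain T] [IsLocalRing T]
    [IsNoetherianRing T] (n : ℕ) (M : Type u) [AddCommGroup M] [Module T M] [Module.Finite T M]
    (hpd : HasProjectiveDimensionLT (ModuleCat.of T M) (n + 2)) {c : T} (hc : c ≠ 0)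
    (hcM : ∀ m : M, c • m = 0) : ∃ x y, IsMacRaeInvariant T M x y := by
  induction n generalizing M with
  | zero =>
    obtain ⟨k, π, hπ⟩ := Module.Finite.exists_fin' T M
    have hker := (LinearMap.shortExact_shortComplexKer hπ).hasProjectiveDimensionLT_X₁ 1
      (hasProjectiveDimensionLT_of_ge _ 1 _ (by lia)) hpd
    have : Module.Projective T (LinearMap.ker π) := (IsProjective.iff_projective _).2
      (projective_iff_hasProjectiveDimensionLT_one.2 hker)
    have : Module.Free T (LinearMap.ker π) := Module.free_of_flat_of_isLocalRing
    obtain ⟨x, hx⟩ := of_free_ker hπ fun m ↦ ⟨⟨c, mem_nonZeroDivisors_of_ne_zero hc⟩, hcM m⟩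
    exact ⟨x, 1, hx⟩
  | succ n ih =>
    obtain ⟨k, π, hπ⟩ := Module.Finite.exists_fin' T M
    have hker := (LinearMap.shortExact_shortComplexKer hπ).hasProjectiveDimensionLT_X₁ (n + 2)
      (hasProjectiveDimensionLT_of_ge _ 1 _ (by lia)) hpd
    let φ : (Fin k → T) →ₗ[T] (Fin k → T) := c • LinearMap.id
    have hφ : Function.Injective φ := smul_right_injective _ hc
    have hle : LinearMap.range φ ≤ LinearMap.ker π := by
      rintro _ ⟨v, rfl⟩
      simp [φ, hcM]
    let N := (LinearMap.range φ).submoduleOf (LinearMap.ker π)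
    have : Module.Projective T (LinearMap.ker N.mkQ) := by
      rw [N.ker_mkQ]
      exact Module.Projective.of_equiv
        ((LinearEquiv.ofInjective φ hφ).trans (Submodule.submoduleOfEquivOfLe hle).symm)
    have hexact := LinearMap.shortExact_shortComplexKer N.mkQ_surjective
    have hquot := hexact.hasProjectiveDimensionLT_X₃ (n + 1)
      (hasProjectiveDimensionLT_of_ge (ModuleCat.of T (LinearMap.ker N.mkQ)) 1 _ (by lia)) hker
    obtain ⟨x, y, hxy⟩ := ih (LinearMap.ker π ⧸ N) hquot fun v ↦ by
      obtain ⟨v, rfl⟩ := N.mkQ_surjective v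
      exact (Submodule.Quotient.mk_eq_zero N).2 ⟨v, rfl⟩
    exact ⟨_, _, (of_quotient_of_le hle (quotient_range hφ) hxy).of_linearEquiv
      (π.quotKerEquivOfSurjective hπ)⟩

end IsMacRaeInvariant

end MacRae

section Factorial

theorem IsMacRaeInvariant.exists_map_eq_span_singleton {T : Type*} [CommRing T] [IsDomain T]
    {I : Ideal T} {x y : T} (h : IsMacRaeInvariant T (T ⧸ I) x y) (q : Ideal T)
    [q.IsPrime] (hq : IsDiscreteValuationRing (Localization.AtPrime q)) :
    ∃ δ, I.map (algebraMap T (Localization.AtPrime q)) = Ideal.span {δ} ∧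
      Associated (δ * algebraMap T _ y) (algebraMap T _ x) := by
  let A := Localization.AtPrime q
  obtain ⟨δ, hδ⟩ := IsPrincipalIdealRing.principal (I.map (algebraMap T A))
  rw [Ideal.submodule_span_eq] at hδ
  refine ⟨δ, hδ, (Ring.ord_eq_iff_associated _ _).1 ?_⟩
  rw [← h.2.2 q hq, Ring.ord_mul _
    (mem_nonZeroDivisors_of_ne_zero (algebraMap_localization_ne_zero q h.2.1)), Ring.ord, ← hδ,
    (Algebra.TensorProduct.quotIdealMapEquivTensorQuot A I).toLinearEquiv.length_eq]

theorem IsMacRaeInvariant.isPrincipal {T : Type*} [CommRing T] [IsDomain T] [IsNoetherianRing T]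
    [IsIntegrallyClosed T] {P : Ideal T} [hP : P.IsPrime]
    (hdvr : IsDiscreteValuationRing (Localization.AtPrime P)) {x y : T}
    (h : IsMacRaeInvariant T (T ⧸ P) x y) : P.IsPrincipal := by
  obtain ⟨z, rfl⟩ : y ∣ x := by
    refine dvd_of_forall_dvd_localization h.2.1 fun q _ _ hq ↦ ?_
    obtain ⟨δ, -, hδ⟩ := h.exists_map_eq_span_singleton q hq
    exact dvd_of_mul_left_dvd hδ.dvd
  have hz : z ≠ 0 := right_ne_zero_of_mul h.1
  have hmap : ∀ (q : Ideal T) [q.IsPrime], IsDiscreteValuationRing (Localization.AtPrime q) →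
      P.map (algebraMap T (Localization.AtPrime q)) = Ideal.span {algebraMap T _ z} := by
    intro q _ hq
    obtain ⟨δ, hδ, hassoc⟩ := h.exists_map_eq_span_singleton q hq
    rw [map_mul, mul_comm] at hassoc
    rw [hδ, Ideal.span_singleton_eq_span_singleton]
    exact hassoc.of_mul_left (Associated.refl _) (algebraMap_localization_ne_zero q h.2.1)
  have hzP : z ∈ P := by
    have hmem := Ideal.mem_span_singleton_self (algebraMap T (Localization.AtPrime P) z)
    rw [← hmap P hdvr, Localization.AtPrime.map_eq_maximalIdeal] at hmem
    exact (IsLocalization.AtPrime.to_map_mem_maximal_iff _ P z).1 hmem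
  refine ⟨z, le_antisymm (fun t ht ↦ Ideal.mem_span_singleton.2 ?_)
    ((Ideal.span_singleton_le_iff_mem P).2 hzP)⟩
  refine dvd_of_forall_dvd_localization hz fun q _ _ hq ↦ ?_
  rw [← Ideal.mem_span_singleton, ← hmap q hq]
  exact Ideal.mem_map_of_mem _ ht

theorem isDiscreteValuationRing_of_height_eq_one {T : Type*} [CommRing T] [IsDomain T]
    [IsNoetherianRing T] [IsIntegrallyClosed T] {P : Ideal T} [P.IsPrime] (hP : P.height = 1) :
    IsDiscreteValuationRing (Localization.AtPrime P) := by
  have hP0 : P ≠ ⊥ := by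
    rintro rfl
    simp at hP
  obtain ⟨c, hc, hc0⟩ := Submodule.exists_mem_ne_zero_of_ne_bot hP0
  have hmin : P ∈ (Ideal.span {c}).minimalPrimes :=
    Ideal.mem_minimalPrimes_of_height_le ((Ideal.span_singleton_le_iff_mem P).2 hc) <| hP ▸
      Ideal.one_le_height_span_singleton_of_mem_nonZeroDivisors (mem_nonZeroDivisors_of_ne_zero hc0)
  rw [← Ideal.annihilator_quotient (I := Ideal.span {c})] at hmin
  exact isDiscreteValuationRing_of_isAssociatedPrime hc0
    (Module.associatedPrimes.minimalPrimes_annihilator_subset_associatedPrimes T _ hmin)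

theorem uniqueFactorizationMonoid_of_isRegularLocalRing {T : Type*} [CommRing T] [IsDomain T]
    [IsIntegrallyClosed T] [IsRegularLocalRing T] : UniqueFactorizationMonoid T := by
  refine UniqueFactorizationMonoid.of_forall_isPrincipal_of_height_eq_one fun P _ hP ↦ ?_
  have hP0 : P ≠ ⊥ := by
    rintro rfl
    simp at hP
  obtain ⟨c, hc, hc0⟩ := Submodule.exists_mem_ne_zero_of_ne_bot hP0
  obtain ⟨n, hn⟩ := HasFiniteProjectiveDimension.quotient P
  obtain ⟨x, y, hxy⟩ := IsMacRaeInvariant.exists_of_hasProjectiveDimensionLT n (T ⧸ P)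
    (hasProjectiveDimensionLT_of_ge _ n _ (by lia)) hc0 fun m ↦ by
      obtain ⟨m, rfl⟩ := Ideal.Quotient.mk_surjective m
      exact Ideal.Quotient.eq_zero_iff_mem.2 (P.mul_mem_right m hc)
  exact hxy.isPrincipal (isDiscreteValuationRing_of_height_eq_one hP)

end Factorial

section Depth

open Abelian

variable {A : Type u} [CommRing A] [IsLocalRing A]

/-- The module `M` over a local ring has depth at least `n`: there is an `M`-regular sequence of
length `n` in the maximal ideal. -/
def HasDepthAtLeast (A M : Type*) [CommRing A] [IsLocalRing A] [AddCommGroup M] [Module A M]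
    (n : ℕ) : Prop :=
  ∃ rs : List A, rs.length = n ∧ (∀ r ∈ rs, r ∈ maximalIdeal A) ∧ IsRegular M rs

theorem HasDepthAtLeast.nontrivial {M : Type*} [AddCommGroup M] [Module A M] {n : ℕ}
    (h : HasDepthAtLeast A M n) : Nontrivial M :=
  h.choose_spec.2.2.nontrivial

theorem maximalIdeal_smul_top_lt (M : Type*) [AddCommGroup M] [Module A M] [Module.Finite A M]
    [Nontrivial M] : maximalIdeal A • (⊤ : Submodule A M) < ⊤ :=
  (Submodule.top_ne_ideal_smul_of_le_jacobson_annihilator (maximalIdeal_le_jacobson _)).symm.lt_top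

variable [IsNoetherianRing A]

-- Depth is read off from the vanishing of `Ext(A ⧸ 𝔪, M)`, so the regular element may be exchanged.
theorem HasDepthAtLeast.quotSMulTop {M : Type u} [AddCommGroup M] [Module A M] [Module.Finite A M]
    {n : ℕ} (h : HasDepthAtLeast A M (n + 1)) {x : A} (hx : x ∈ maximalIdeal A)
    (hreg : IsSMulRegular M x) : HasDepthAtLeast A (QuotSMulTop x M) n := by
  obtain ⟨rs, hlen, hmem, hrs⟩ := h
  have : Nontrivial M := hrs.nontrivial
  have : Nontrivial (QuotSMulTop x M) := nontrivial_quotSMulTop_of_mem_maximalIdeal M hx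
  let k : ModuleCat.{u} A := ModuleCat.of A (A ⧸ maximalIdeal A)
  have hk : Module.support A k = PrimeSpectrum.zeroLocus (maximalIdeal A) := by
    rw [Module.support_eq_zeroLocus, Ideal.annihilator_quotient]
  have hext := ModuleCat.subsingleton_ext_of_exists_isRegular (maximalIdeal A) k hk.le
    (ModuleCat.of A M) (maximalIdeal_smul_top_lt M) rs hmem hrs
  have hreg' : IsSMulRegular (ModuleCat.of A M) x := hreg
  refine ModuleCat.exists_isRegular_of_exists_subsingleton_ext (maximalIdeal A) n
    (ModuleCat.of A (QuotSMulTop x M)) (maximalIdeal_smul_top_lt _) k hk fun i hi ↦ ?_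
  have hzero := AddCommGrpCat.isZero_of_iff_subsingleton.mpr (hext i (by lia))
  have hzero' := AddCommGrpCat.isZero_of_iff_subsingleton.mpr (hext (i + 1) (by lia))
  exact AddCommGrpCat.subsingleton_of_isZero <| ShortComplex.Exact.isZero_of_both_zeros
    ((Ext.covariant_sequence_exact₃' k hreg'.smulShortComplex_shortExact) i (i + 1) rfl)
    (hzero.eq_zero_of_src _) (hzero'.eq_zero_of_tgt _)

variable {M : Type*} [AddCommGroup M] [Module A M]

theorem exists_mem_torsionBySet_notMem_smul_top [Module.Finite A M] {x : A}
    (hx : x ∈ maximalIdeal A) (hreg : IsSMulRegular M x) {P : Ideal A}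
    (hP : Submodule.torsionBySet A M P ≠ ⊥) :
    ∃ m ∈ Submodule.torsionBySet A M P, m ∉ x • (⊤ : Submodule A M) := by
  by_contra! hcon
  refine hP (Submodule.eq_bot_of_le_smul_of_le_jacobson_bot (maximalIdeal A) _
    (IsNoetherian.noetherian _) (fun m hm ↦ ?_) (maximalIdeal_le_jacobson _))
  obtain ⟨m', -, rfl⟩ := hcon m hm
  refine Submodule.smul_mem_smul hx ((Submodule.mem_torsionBySet_iff _ _).2 fun a ↦ hreg ?_)
  have hm' : (a : A) • x • m' = 0 := (Submodule.mem_torsionBySet_iff _ _).1 hm a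
  change x • (a : A) • m' = x • (0 : M)
  rw [smul_comm, hm', smul_zero]

theorem exists_isAssociatedPrime_quotSMulTop_lt [Module.Finite A M] {x : A}
    (hx : x ∈ maximalIdeal A) (hreg : IsSMulRegular M x) {P : Ideal A}
    (hP : IsAssociatedPrime P M) :
    ∃ P', IsAssociatedPrime P' (QuotSMulTop x M) ∧ P < P' := by
  obtain ⟨hPp, y, hy⟩ := isAssociatedPrime_iff.1 hP
  have hmem : ∀ a, a ∈ P ↔ a • y = 0 := fun a ↦ by
    rw [hy, Submodule.mem_colon_singleton, Submodule.mem_bot]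
  have hy0 : y ≠ 0 := fun h ↦ hPp.ne_top ((Ideal.eq_top_iff_one P).2 ((hmem 1).2 (by simp [h])))
  have hxP : x ∉ P := fun h ↦ hy0 (hreg (by simpa using (hmem x).1 h))
  have hy' : y ∈ Submodule.torsionBySet A M P :=
    (Submodule.mem_torsionBySet_iff _ _).2 fun a ↦ (hmem a).1 a.2
  obtain ⟨m, hm, hmx⟩ := exists_mem_torsionBySet_notMem_smul_top hx hreg
    (Submodule.ne_bot_iff _ |>.2 ⟨y, hy', hy0⟩)
  obtain ⟨P', hP', hle⟩ := exists_le_isAssociatedPrime_of_isNoetherianRing A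
    (Submodule.Quotient.mk m : QuotSMulTop x M) (mt (Submodule.Quotient.mk_eq_zero _).1 hmx)
  have hmem' : ∀ a, a • m ∈ x • (⊤ : Submodule A M) → a ∈ P' := fun a ha ↦ hle <|
    Submodule.mem_colon_singleton.2 ((Submodule.Quotient.mk_eq_zero _).2 ha)
  refine ⟨P', hP', SetLike.lt_iff_le_and_exists.2 ⟨fun a ha ↦ hmem' a ?_, x,
    hmem' x (Submodule.smul_mem_pointwise_smul _ _ _ Submodule.mem_top), hxP⟩⟩
  rw [(Submodule.mem_torsionBySet_iff _ _).1 hm ⟨a, ha⟩]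
  exact zero_mem _

theorem ringKrullDim_quotient_add_one_le_of_lt {R : Type*} [CommRing R] {P P' : Ideal R}
    [P.IsPrime] (h : P < P') : ringKrullDim (R ⧸ P') + 1 ≤ ringKrullDim (R ⧸ P) := by
  obtain ⟨y, hy, hyP⟩ := SetLike.exists_of_lt h
  have hy0 : Ideal.Quotient.mk P y ≠ 0 := by rwa [Ne, Ideal.Quotient.eq_zero_iff_mem]
  have hker : ∀ a ∈ Ideal.span {Ideal.Quotient.mk P y}, Ideal.Quotient.factor h.le a = 0 := by
    change Ideal.span _ ≤ RingHom.ker _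
    rw [Ideal.span_singleton_le_iff_mem, RingHom.mem_ker, Ideal.Quotient.factor_mk,
      Ideal.Quotient.eq_zero_iff_mem]
    exact hy
  refine le_trans (add_le_add_left ?_ 1)
    (ringKrullDim_quotient_succ_le_of_nonZeroDivisor (mem_nonZeroDivisors_of_ne_zero hy0))
  exact ringKrullDim_le_of_surjective (Ideal.Quotient.lift _ _ hker)
    (Ideal.Quotient.lift_surjective_of_surjective _ _ (Ideal.Quotient.factor_surjective h.le))

theorem length_le_ringKrullDim_quotient [Module.Finite A M] {rs : List A}
    (hmem : ∀ r ∈ rs, r ∈ maximalIdeal A) (hrs : IsWeaklyRegular M rs) {P : Ideal A}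
    (hP : IsAssociatedPrime P M) : (rs.length : WithBot ℕ∞) ≤ ringKrullDim (A ⧸ P) := by
  have := hP.isPrime
  induction rs generalizing M P with
  | nil => simpa using ringKrullDim_nonneg_of_nontrivial
  | cons x rs ih =>
    rw [isWeaklyRegular_cons_iff] at hrs
    obtain ⟨P', hP', hlt⟩ := exists_isAssociatedPrime_quotSMulTop_lt
      (hmem x List.mem_cons_self) hrs.1 hP
    have hle := ih (fun r h ↦ hmem r (List.mem_cons_of_mem x h)) hrs.2 hP' hP'.isPrime
    rw [List.length_cons, Nat.cast_add, Nat.cast_one]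
    exact (add_le_add_left hle 1).trans (ringKrullDim_quotient_add_one_le_of_lt hlt)

theorem HasDepthAtLeast.le_ringKrullDim_quotient [Module.Finite A M] {n : ℕ}
    (h : HasDepthAtLeast A M n) {P : Ideal A} (hP : IsAssociatedPrime P M) :
    (n : WithBot ℕ∞) ≤ ringKrullDim (A ⧸ P) := by
  obtain ⟨rs, rfl, hmem, hrs⟩ := h
  exact length_le_ringKrullDim_quotient hmem hrs.toIsWeaklyRegular hP

theorem exists_isSMulRegular_mem [Module.Finite A M] {n : ℕ} (h : HasDepthAtLeast A M n)
    {q : Ideal A} (hq : ringKrullDim (A ⧸ q) < n) : ∃ y ∈ q, IsSMulRegular M y := by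
  by_contra! hcon
  have hsub : (q : Set A) ⊆ ⋃ P ∈ associatedPrimes A M, (P : Set A) := fun y hy ↦ by
    rw [biUnion_associatedPrimes_eq_compl_regular A M]
    exact hcon y hy
  obtain ⟨P, hP, hqP⟩ := (Ideal.subset_union_prime_finite (associatedPrimes.finite A M) ⊥ ⊥
    fun P hP _ _ ↦ IsAssociatedPrime.isPrime hP).1 hsub
  exact hq.not_ge ((h.le_ringKrullDim_quotient hP).trans
    (ringKrullDim_le_of_surjective _ (Ideal.Quotient.factor_surjective hqP)))

theorem exists_isWeaklyRegular_mem {M : Type u} [AddCommGroup M] [Module A M] [Module.Finite A M]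
    {n r : ℕ} (h : HasDepthAtLeast A M n) {q : Ideal A} (hq : q ≠ ⊤)
    (hr : ringKrullDim (A ⧸ q) + r ≤ n) :
    ∃ ys : List A, ys.length = r ∧ (∀ y ∈ ys, y ∈ q) ∧ IsWeaklyRegular M ys := by
  induction r generalizing M n with
  | zero => exact ⟨[], rfl, by simp, IsWeaklyRegular.nil A M⟩
  | succ r ih =>
    have : Nontrivial (A ⧸ q) := Ideal.Quotient.nontrivial_iff.2 hq
    rw [Nat.cast_add, Nat.cast_one, ← add_assoc] at hr
    obtain ⟨n, rfl⟩ : ∃ n', n = n' + 1 := by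
      refine Nat.exists_eq_add_one.2 (Nat.pos_of_ne_zero ?_)
      rintro rfl
      have h1 : (1 : WithBot ℕ∞) ≤ (0 : ℕ) := (le_add_of_nonneg_left
        (add_nonneg ringKrullDim_nonneg_of_nontrivial (Nat.cast_nonneg r))).trans hr
      exact absurd h1 (by decide)
    rw [Nat.cast_add, Nat.cast_one, ENat.WithBot.add_le_add_one_right_iff] at hr
    have hlt : ringKrullDim (A ⧸ q) < (n + 1 : ℕ) :=
      ((le_add_of_nonneg_right (Nat.cast_nonneg r)).trans hr).trans_lt
        (by exact_mod_cast Nat.lt_succ_self n)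
    obtain ⟨y, hyq, hreg⟩ := exists_isSMulRegular_mem h hlt
    obtain ⟨ys, hlen, hmem, hys⟩ := ih (h.quotSMulTop (le_maximalIdeal hq hyq) hreg) hr
    exact ⟨y :: ys, by simp [hlen], List.forall_mem_cons.2 ⟨hyq, hmem⟩, hys.cons hreg⟩

theorem mem_minimalPrimes_of_le {R : Type*} [CommRing R] {I J P : Ideal R} (hIJ : I ≤ J)
    (hJP : J ≤ P) (hP : P ∈ I.minimalPrimes) : P ∈ J.minimalPrimes :=
  ⟨⟨hP.1.1, hJP⟩, fun _ hQ ↦ hP.2 ⟨hQ.1, hIJ.trans hQ.2⟩⟩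

theorem ringKrullDim_quotient_le_length {rs : List A} {P : Ideal A}
    (hrs : maximalIdeal A ∈ (Ideal.ofList rs ⊔ P).minimalPrimes) :
    ringKrullDim (A ⧸ P) ≤ rs.length := by
  classical
  have hP : P ≠ ⊤ := ne_top_of_le_ne_top Ideal.IsPrime.ne_top' (le_sup_right.trans hrs.1.2)
  have : Nontrivial (A ⧸ P) := Ideal.Quotient.nontrivial_iff.2 hP
  have : IsLocalRing (A ⧸ P) := .of_surjective' _ Ideal.Quotient.mk_surjective
  let s : Finset (A ⧸ P) := (rs.map (Ideal.Quotient.mk P)).toFinset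
  have hs : (Ideal.ofList rs).map (Ideal.Quotient.mk P) = Ideal.span (s : Set (A ⧸ P)) := by
    rw [Ideal.map_ofList, Ideal.ofList, List.coe_toFinset]
  have hmin : maximalIdeal (A ⧸ P) ∈ (Ideal.span (s : Set (A ⧸ P))).minimalPrimes := by
    rw [← hs, Ideal.minimalPrimes_map_of_surjective Ideal.Quotient.mk_surjective, Ideal.mk_ker]
    exact ⟨_, hrs, map_mk_maximalIdeal P⟩
  have hcard : s.card ≤ rs.length := (List.toFinset_card_le _).trans_eq (List.length_map _)
  rw [← maximalIdeal_height_eq_ringKrullDim]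
  exact_mod_cast (Ideal.height_le_card_of_mem_minimalPrimes_span_finset hmin).trans
    (Nat.cast_le.2 hcard)

theorem HasDepthAtLeast.isSMulRegular [Module.Finite A M] {x : A} {rs : List A}
    (h : HasDepthAtLeast A M (rs.length + 1))
    (hrs : maximalIdeal A ∈ (Ideal.ofList (x :: rs) ⊔ Module.annihilator A M).minimalPrimes) :
    IsSMulRegular M x := by
  by_contra hx
  have hass : x ∈ ⋃ P ∈ associatedPrimes A M, (P : Set A) := by
    rw [biUnion_associatedPrimes_eq_compl_regular A M]
    exact hx
  obtain ⟨P, hP, hxP⟩ := Set.mem_iUnion₂.1 hass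
  have hle := (sup_le_iff.1 hrs.1.2).1
  rw [Ideal.ofList_cons, sup_le_iff] at hle
  have hmin : maximalIdeal A ∈ (Ideal.ofList rs ⊔ P).minimalPrimes := by
    have hann : Module.annihilator A M ≤ P :=
      Submodule.annihilator_top.symm.trans_le (IsAssociatedPrime.annihilator_le hP)
    refine mem_minimalPrimes_of_le (sup_le ?_ (le_sup_of_le_right hann))
      (sup_le hle.2 (le_maximalIdeal (IsAssociatedPrime.isPrime hP).ne_top)) hrs
    rw [Ideal.ofList_cons, sup_comm]
    exact sup_le_sup_left ((Ideal.span_singleton_le_iff_mem P).2 hxP) _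
  have hlt : ((rs.length + 1 : ℕ) : WithBot ℕ∞) ≤ rs.length :=
    (h.le_ringKrullDim_quotient hP).trans (ringKrullDim_quotient_le_length hmin)
  exact Nat.not_succ_le_self rs.length (by exact_mod_cast hlt)

theorem HasDepthAtLeast.isWeaklyRegular {M : Type u} [AddCommGroup M] [Module A M]
    [Module.Finite A M] {rs : List A} (h : HasDepthAtLeast A M rs.length)
    (hrs : maximalIdeal A ∈ (Ideal.ofList rs ⊔ Module.annihilator A M).minimalPrimes) :
    IsWeaklyRegular M rs := by
  induction rs generalizing M with
  | nil => exact IsWeaklyRegular.nil A M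
  | cons x rs ih =>
    have hreg : IsSMulRegular M x := h.isSMulRegular hrs
    have hle := (sup_le_iff.1 hrs.1.2).1
    rw [Ideal.ofList_cons, sup_le_iff, Ideal.span_singleton_le_iff_mem] at hle
    have hdepth : HasDepthAtLeast A (QuotSMulTop x M) rs.length := h.quotSMulTop hle.1 hreg
    have : Nontrivial (QuotSMulTop x M) := hdepth.nontrivial
    have hann : Ideal.ofList (x :: rs) ⊔ Module.annihilator A M ≤
        Ideal.ofList rs ⊔ Module.annihilator A (QuotSMulTop x M) := by
      have hsub : Module.annihilator A M ≤ Module.annihilator A (QuotSMulTop x M) :=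
        (Submodule.mkQ (x • (⊤ : Submodule A M))).annihilator_le_of_surjective
          (Submodule.mkQ_surjective _)
      have hx : Ideal.span {x} ≤ Module.annihilator A (QuotSMulTop x M) :=
        (Ideal.span_singleton_le_iff_mem _).2 (QuotSMulTop.mem_annihilator M x)
      rw [Ideal.ofList_cons]
      exact sup_le (sup_le (le_sup_of_le_right hx) le_sup_left) (le_sup_of_le_right hsub)
    refine (ih hdepth (mem_minimalPrimes_of_le hann (sup_le hle.2 ?_) hrs)).cons hreg
    exact le_maximalIdeal (mt Module.annihilator_eq_top_iff.1 (not_subsingleton _))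

end Depth

section CohenMacaulay

theorem ringKrullDim_quotient_add_height_le {A : Type*} [CommRing A] (P : Ideal A)
    [hP : P.IsPrime] :
    ringKrullDim (A ⧸ P) + P.height ≤ ringKrullDim A := by
  have hcoheight : ringKrullDim (A ⧸ P) = (Order.coheight (⟨P, hP⟩ : PrimeSpectrum A) : ℕ∞) := by
    rw [ringKrullDim_quotient, Order.coheight_eq_krullDim_Ici]
    rfl
  have : Nonempty (PrimeSpectrum A) := ⟨⟨P, hP⟩⟩
  rw [hcoheight, PrimeSpectrum.height_eq_orderHeight ⟨P, hP⟩, add_comm, ringKrullDim,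
    Order.krullDim_eq_iSup_height_add_coheight_of_nonempty]
  exact_mod_cast le_iSup (fun Q : PrimeSpectrum A ↦ Order.height Q + Order.coheight Q) ⟨P, hP⟩

theorem height_le_height_comap {A B : Type*} [CommRing A] [CommRing B] [Algebra A B]
    [Algebra.IsIntegral A B] (Q : Ideal B) [hQ : Q.IsPrime] :
    Q.height ≤ (Q.comap (algebraMap A B)).height := by
  have hmono : StrictMono (PrimeSpectrum.comap (algebraMap A B)) := fun P P' hlt ↦
    Ideal.IsIntegral.comap_lt_comap (I := P.asIdeal) (J := P'.asIdeal) hlt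
  have hle := Order.height_le_height_apply_of_strictMono _ hmono ⟨Q, hQ⟩
  rwa [← PrimeSpectrum.height_eq_orderHeight, ← PrimeSpectrum.height_eq_orderHeight] at hle

theorem isWeaklyRegular_self_iff {A : Type*} [CommRing A] (rs : List A) :
    IsWeaklyRegular A rs ↔ ∀ i (h : i < rs.length), ∀ a,
      rs[i] * a ∈ Ideal.ofList (rs.take i) → a ∈ Ideal.ofList (rs.take i) := by
  simp only [isWeaklyRegular_iff, isSMulRegular_quotient_iff_mem_of_smul_mem, smul_eq_mul,
    Ideal.mul_top]

theorem isWeaklyRegular_of_forall_localization {A : Type*} [CommRing A] (rs : List A)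
    (H : ∀ (Q : Ideal A) [Q.IsMaximal],
      IsWeaklyRegular (Localization.AtPrime Q) (rs.map (algebraMap A (Localization.AtPrime Q)))) :
    IsWeaklyRegular A rs := by
  refine (isWeaklyRegular_self_iff rs).2 fun i hi a ha ↦ Ideal.mem_of_localization_maximal
    fun Q hQ ↦ ?_
  have hloc := (isWeaklyRegular_self_iff _).1 (H Q) i (by simpa using hi) (algebraMap A _ a)
  rw [← List.map_take, ← Ideal.map_ofList, List.getElem_map, ← map_mul] at hloc
  exact hloc (Ideal.mem_map_of_mem _ ha)

theorem free_of_isWeaklyRegular {A M : Type*} [CommRing A] [IsNoetherianRing A] [IsLocalRing A]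
    [AddCommGroup M] [Module A M] [Module.Finite A M] {rs : List A}
    (hrs : Ideal.ofList rs = maximalIdeal A) (hreg : IsWeaklyRegular M rs) : Module.Free A M := by
  induction hn : rs.length generalizing A M with
  | zero =>
    rw [List.length_eq_zero_iff.1 hn, Ideal.ofList_nil] at hrs
    let : Field A := (isField_iff_maximalIdeal_eq.2 hrs.symm).toField
    exact Module.Free.of_divisionRing A M
  | succ n ih =>
    obtain ⟨x, rs, rfl⟩ := List.exists_cons_of_length_eq_add_one hn
    rw [isWeaklyRegular_cons_iff'] at hreg
    have hx : x ∈ maximalIdeal A := hrs ▸ Ideal.subset_span List.mem_cons_self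
    have : IsLocalRing (A ⧸ Ideal.span {x}) := isLocalRing_quotient_span_singleton hx
    have := Module.finitePresentation_of_finite A M
    rw [← Module.free_quotSMulTop_iff_free A M (maximalIdeal_le_jacobson _ hx) hreg.1]
    have : Module.Finite (A ⧸ Ideal.span {x}) (QuotSMulTop x M) :=
      Module.Finite.of_restrictScalars_finite A _ _
    refine ih ?_ hreg.2 (by simpa using hn)
    rw [← map_mk_maximalIdeal, ← hrs, Ideal.ofList_cons, Ideal.map_sup, Ideal.map_quotient_self,
      bot_sup_eq, Ideal.map_ofList]

section ModDepth

variable {B : Type*} [CommRing B] [IsLocalRing B]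

theorem HasDepthAtLeast.le_modDepth {M : Type*} [AddCommGroup M] [Module B M] {n : ℕ}
    (h : HasDepthAtLeast B M n) : (n : ℕ∞) ≤ modDepth B M := by
  obtain ⟨rs, rfl, hmem, hrs⟩ := h
  exact le_sSup ⟨rs, rfl, hmem, hrs⟩

theorem hasDepthAtLeast_of_modDepth_eq {M : Type*} [AddCommGroup M] [Module B M] [Nontrivial M]
    {n : ℕ} (h : modDepth B M = n) : HasDepthAtLeast B M n := by
  have : Nonempty {m : ℕ∞ | ∃ rs : List B, (rs.length : ℕ∞) = m ∧
      (∀ r ∈ rs, r ∈ maximalIdeal B) ∧ IsRegular M rs} :=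
    ⟨⟨0, [], rfl, by simp, IsRegular.nil _ _⟩⟩
  obtain ⟨rs, hlen, hmem, hrs⟩ :=
    ENat.sSup_mem_of_nonempty_of_lt_top (h.trans_lt (ENat.natCast_lt_top n))
  exact ⟨rs, by exact_mod_cast hlen.trans h, hmem, hrs⟩

theorem modDepth_le_ringKrullDim [IsNoetherianRing B] :
    (modDepth B B : WithBot ℕ∞) ≤ ringKrullDim B := by
  obtain ⟨d, hd⟩ := WithBot.ne_bot_iff_exists.1 (ringKrullDim_ne_bot (R := B))
  rw [← hd, WithBot.coe_le_coe]
  refine sSup_le ?_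
  rintro _ ⟨rs, rfl, -, hrs⟩
  have hadd := ringKrullDim_add_length_eq_ringKrullDim_of_isRegular rs hrs
  have : Nontrivial (B ⧸ Ideal.ofList rs) := by
    simpa using hrs.quot_ofList_smul_nontrivial ⊤
  have hle : (rs.length : WithBot ℕ∞) ≤ d := by
    rw [hd, ← hadd]
    exact le_add_of_nonneg_left ringKrullDim_nonneg_of_nontrivial
  exact_mod_cast hle

end ModDepth

theorem isCMRing_of_free {A B : Type*} [CommRing A] [IsNoetherianRing A] [IsLocalRing A]
    [CommRing B] [Algebra A B] [Module.Finite A B] [Module.Free A B]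
    {d : ℕ} (hd : ringKrullDim A = d) (hA : HasDepthAtLeast A A d) : IsCMRing B := by
  intro Q hQ
  have := IsNoetherianRing.of_finite A B
  have : IsNoetherianRing (Localization.AtPrime Q) :=
    IsLocalization.isNoetherianRing Q.primeCompl _ inferInstance
  have : Module.Flat A (Localization.AtPrime Q) := Module.Flat.trans A B _
  refine modDepth_le_ringKrullDim.antisymm ?_
  rw [IsLocalization.AtPrime.ringKrullDim_eq_height Q, WithBot.coe_le_coe]
  refine (height_le_height_comap (A := A) Q).trans ?_
  obtain ⟨r, hr⟩ := ENat.ne_top_iff_exists.1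
    (Ideal.height_ne_top (Ideal.IsPrime.ne_top (I := Q.comap (algebraMap A B)) inferInstance))
  obtain ⟨ys, rfl, hmem, hys⟩ := exists_isWeaklyRegular_mem (r := r) hA
    (Ideal.IsPrime.ne_top (I := Q.comap (algebraMap A B)) inferInstance) (by
      simpa [hd, ← hr] using ringKrullDim_quotient_add_height_le (Q.comap (algebraMap A B)))
  have hmem' : ∀ y ∈ ys.map (algebraMap A (Localization.AtPrime Q)), y ∈ maximalIdeal _ := by
    refine List.forall_mem_map.2 fun y hy ↦ ?_
    rw [IsScalarTower.algebraMap_apply A B]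
    exact (IsLocalization.AtPrime.to_map_mem_maximal_iff _ Q _).2 (hmem y hy)
  rw [← hr]
  exact HasDepthAtLeast.le_modDepth
    ⟨_, List.length_map _, hmem', .of_isWeaklyRegular_of_mem_maximalIdeal _ hmem' hys.of_flat⟩

theorem maximalIdeal_mem_minimalPrimes_map {A B : Type*} [CommRing A] [IsLocalRing A] [CommRing B]
    [Algebra A B] [Algebra.IsIntegral A B] (Q : Ideal B) [Q.IsMaximal] :
    maximalIdeal (Localization.AtPrime Q) ∈
      ((maximalIdeal A).map (algebraMap A (Localization.AtPrime Q))).minimalPrimes := by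
  have htower := IsScalarTower.algebraMap_eq A B (Localization.AtPrime Q)
  have hQ : Q.comap (algebraMap A B) = maximalIdeal A :=
    IsLocalRing.eq_maximalIdeal (Ideal.isMaximal_comap_of_isIntegral_of_isMaximal Q)
  have hcomap : (maximalIdeal (Localization.AtPrime Q)).comap (algebraMap B _) = Q :=
    IsLocalization.AtPrime.under_maximalIdeal _ Q
  refine ⟨⟨inferInstance, ?_⟩, fun P hP _ ↦ ?_⟩
  · rw [Ideal.map_le_iff_le_comap, htower, ← Ideal.comap_comap, hcomap, hQ]
  · have := hP.1
    have hPA : (P.comap (algebraMap B _)).comap (algebraMap A B) = maximalIdeal A := by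
      refine (le_maximalIdeal Ideal.IsPrime.ne_top').antisymm ?_
      rw [Ideal.comap_comap, ← htower, ← Ideal.map_le_iff_le_comap]
      exact hP.2
    have hmax : (P.comap (algebraMap B _)).IsMaximal :=
      Ideal.isMaximal_of_isIntegral_of_isMaximal_comap _ (by rw [hPA]; infer_instance)
    have hPQ : P.under B = Q :=
      hmax.eq_of_le Ideal.IsPrime.ne_top'
        ((Ideal.comap_mono (le_maximalIdeal hP.1.ne_top)).trans_eq hcomap)
    rw [← IsLocalization.map_under Q.primeCompl _ P, hPQ, Localization.AtPrime.map_eq_maximalIdeal]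

theorem height_eq_height_maximalIdeal {A B : Type*} [CommRing A] [IsLocalRing A]
    [IsNoetherianRing A] [CommRing B] [IsNoetherianRing B] [Algebra A B] [Algebra.IsIntegral A B]
    [Algebra.HasGoingDown A B] (Q : Ideal B) [Q.IsMaximal] :
    Q.height = (maximalIdeal A).height := by
  have hQ : Q.comap (algebraMap A B) = maximalIdeal A :=
    IsLocalRing.eq_maximalIdeal (Ideal.isMaximal_comap_of_isIntegral_of_isMaximal Q)
  have : Q.LiesOver (maximalIdeal A) := ⟨hQ.symm⟩
  refine le_antisymm (hQ ▸ height_le_height_comap Q) ?_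
  rw [Ideal.height_eq_height_add_of_liesOver_of_hasGoingDown (maximalIdeal A) Q]
  exact le_self_add

theorem length_eq_ringKrullDim {A : Type*} [CommRing A] [IsLocalRing A] [IsNoetherianRing A]
    {rs : List A} (hrs : Ideal.ofList rs = maximalIdeal A) (hreg : IsRegular A rs) :
    ringKrullDim A = rs.length := by
  have hfield : ringKrullDim (A ⧸ maximalIdeal A) = 0 :=
    ringKrullDim_eq_zero_of_isField
      ((Ideal.Quotient.maximal_ideal_iff_isField_quotient _).1 inferInstance)
  rw [← ringKrullDim_add_length_eq_ringKrullDim_of_isRegular rs hreg, hrs, hfield, zero_add]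

theorem free_of_isCMRing {A B : Type*} [CommRing A] [IsIntegrallyClosed A]
    [IsRegularLocalRing A] [CommRing B] [IsDomain B] [Algebra A B] [FaithfulSMul A B]
    [Module.Finite A B] (hB : IsCMRing B) : Module.Free A B := by
  obtain ⟨rs, hrs, hreg⟩ := exists_isRegular_ofList_eq_maximalIdeal A
  have := IsNoetherianRing.of_finite A B
  refine free_of_isWeaklyRegular hrs ?_
  rw [← isWeaklyRegular_map_algebraMap_iff B B]
  refine isWeaklyRegular_of_forall_localization _ fun Q hQ ↦ ?_
  have : IsNoetherianRing (Localization.AtPrime Q) :=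
    IsLocalization.isNoetherianRing Q.primeCompl _ inferInstance
  have hdepth : HasDepthAtLeast (Localization.AtPrime Q) (Localization.AtPrime Q) rs.length := by
    refine hasDepthAtLeast_of_modDepth_eq (WithBot.coe_injective ((hB Q inferInstance).trans ?_))
    rw [IsLocalization.AtPrime.ringKrullDim_eq_height Q, height_eq_height_maximalIdeal (A := A),
      maximalIdeal_height_eq_ringKrullDim]
    exact length_eq_ringKrullDim hrs hreg
  rw [List.map_map, ← RingHom.coe_comp, ← IsScalarTower.algebraMap_eq]
  refine HasDepthAtLeast.isWeaklyRegular (by rwa [List.length_map]) ?_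
  have hmin := maximalIdeal_mem_minimalPrimes_map (A := A) Q
  have hann : Module.annihilator (Localization.AtPrime Q) (Localization.AtPrime Q) = ⊥ :=
    Module.annihilator_eq_bot.2 inferInstance
  rwa [hann, sup_bot_eq, ← Ideal.map_ofList, hrs]

theorem isCMRing_iff_free {A B : Type*} [CommRing A] [IsIntegrallyClosed A]
    [IsRegularLocalRing A] [CommRing B] [IsDomain B] [Algebra A B] [FaithfulSMul A B]
    [Module.Finite A B] : IsCMRing B ↔ Module.Free A B := by
  refine ⟨free_of_isCMRing, fun _ ↦ ?_⟩
  obtain ⟨rs, hrs, hreg⟩ := exists_isRegular_ofList_eq_maximalIdeal A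
  exact isCMRing_of_free (length_eq_ringKrullDim hrs hreg)
    ⟨rs, rfl, fun r hr ↦ hrs ▸ Ideal.subset_span hr, hreg⟩

end CohenMacaulay

section PrimePowerCongruences

theorem exists_pow_eq_of_add_pow_eq {R : Type*} [CommRing R] {p : ℕ} (hp : p.Prime) (hp3 : 3 ≤ p)
    {V h c : R} (hV : (V + h) ^ p = h ^ p + c * p) :
    ∃ e, V ^ p = p * (c - h ^ (p - 1) * V + V ^ 2 * e) := by
  obtain ⟨r, hr⟩ : ∃ r, (V + h) ^ p = V ^ p + h ^ p + p * V * (h ^ (p - 1) + V * r) := by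
    have hIoo : Finset.Ioo 0 p = insert 1 (Finset.Ioo 1 p) := by
      ext k
      simp only [Finset.mem_insert, Finset.mem_Ioo]
      lia
    refine ⟨h * ∑ k ∈ Finset.Ioo 1 p, V ^ (k - 2) * h ^ (p - k - 1) * (p.choose k / p : ℕ), ?_⟩
    have hh : h ^ (p - 1) = h * h ^ (p - 1 - 1) := by
      rw [← pow_succ', Nat.sub_add_cancel (by lia)]
    have hsum : ∑ k ∈ Finset.Ioo 1 p, V ^ (k - 1) * h ^ (p - k - 1) * ((p.choose k / p : ℕ) : R) =
        V * ∑ k ∈ Finset.Ioo 1 p, V ^ (k - 2) * h ^ (p - k - 1) * (p.choose k / p : ℕ) := by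
      rw [Finset.mul_sum]
      refine Finset.sum_congr rfl fun k hk ↦ ?_
      rw [show k - 1 = k - 2 + 1 by have := (Finset.mem_Ioo.1 hk).1; lia, pow_succ']
      ring
    rw [add_pow_prime_eq hp, hIoo, Finset.sum_insert (by simp), hsum, hh, Nat.choose_one_right,
      Nat.div_self hp.pos, Nat.sub_self, pow_zero, Nat.cast_one]
    ring
  exact ⟨-r, by linear_combination hV - hr⟩

theorem dvd_sub_of_dvd_pow_sub_pow {S : Type*} [CommRing S] {p : ℕ} (hp : p.Prime)
    (hpS : Prime (p : S)) {x y : S} (h : (p : S) ∣ x ^ p - y ^ p) : (p : S) ∣ x - y := by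
  obtain ⟨r, hr⟩ := exists_add_pow_prime_eq hp y (x - y)
  rw [add_sub_cancel] at hr
  refine hpS.dvd_of_dvd_pow (n := p) ?_
  rw [show (x - y) ^ p = x ^ p - y ^ p - p * (y * (x - y) * r) by linear_combination -hr]
  exact dvd_sub h (dvd_mul_right _ _)

variable {S : Type*} [CommRing S] [IsDomain S] {p : ℕ} {f g h₁ h₂ a b : S}

theorem dvd_cross_of_mul_eq_pow_add (hp : p.Prime) (hpS : Prime (p : S))
    (hf : f = h₁ ^ p + a * p) (hg : g = h₂ ^ p + b * p)
    (hfg : ∃ x y : S, f * g = x ^ p + y * (p : S) ^ 2) :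
    (p : S) ∣ h₁ ^ p * b + h₂ ^ p * a := by
  obtain ⟨x, y, hxy⟩ := hfg
  rw [hf, hg] at hxy
  have hdvd : (p : S) ∣ (h₁ * h₂) ^ p - x ^ p :=
    ⟨y * p - (h₁ ^ p * b + h₂ ^ p * a) - a * b * p, by rw [mul_pow]; linear_combination hxy⟩
  obtain ⟨c, hc⟩ := dvd_sub_pow_of_dvd_sub (dvd_sub_of_dvd_pow_sub_pow hp hpS hdvd) 1
  refine ⟨y - a * b - c, mul_left_cancel₀ hpS.ne_zero ?_⟩
  rw [pow_one, mul_pow] at hc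
  linear_combination hxy - hc

theorem sq_dvd_pow_add_iff {q x y : S} (hq : Prime q) {n : ℕ} (hn : 2 ≤ n) :
    q ^ 2 ∣ x ^ n + y * q ↔ q ∣ x ∧ q ∣ y := by
  have hpow : q ∣ x → q ^ 2 ∣ x ^ n := fun hx ↦ (pow_dvd_pow_of_dvd hx 2).trans (pow_dvd_pow x hn)
  have hmul : q ^ 2 ∣ y * q ↔ q ∣ y := by
    rw [sq, mul_comm y, mul_dvd_mul_iff_left hq.ne_zero]
  refine ⟨fun h ↦ ?_, fun h ↦ dvd_add (hpow h.1) (hmul.2 h.2)⟩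
  have hx : q ∣ x := hq.dvd_of_dvd_pow
    ((dvd_add_left (dvd_mul_left q y)).1 ((dvd_pow_self q two_ne_zero).trans h))
  exact ⟨hx, hmul.1 ((dvd_add_right (hpow hx)).1 h)⟩

theorem not_dvd_of_mul_eq_pow_add (hp : 2 ≤ p) (hpS : Prime (p : S))
    (hf : f = h₁ ^ p + a * p) (ha : ¬ (p : S) ∣ a) (hpfg : (p : S) ∣ f → ¬ (p : S) ∣ g)
    (hfg : ∃ x y : S, f * g = x ^ p + y * (p : S) ^ 2) : ¬ (p : S) ∣ h₁ := by
  intro hh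
  have hpf : (p : S) ∣ f := by
    rw [hf]
    exact dvd_add (hh.trans (dvd_pow_self _ (by lia))) (dvd_mul_left _ _)
  obtain ⟨x, y, hxy⟩ := hfg
  have hx : (p : S) ∣ x := hpS.dvd_of_dvd_pow <|
    (dvd_add_left (dvd_mul_of_dvd_right (dvd_pow_self _ two_ne_zero) y)).1
      (hxy ▸ hpf.mul_right g)
  have hsq : (p : S) ^ 2 ∣ f * g := by
    rw [hxy, sq, ← mul_assoc, ← sq, sq_dvd_pow_add_iff hpS hp]
    exact ⟨hx, dvd_mul_left _ _⟩
  have hf2 : ¬ (p : S) ^ 2 ∣ f := by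
    rw [hf, sq_dvd_pow_add_iff hpS hp]
    exact fun h ↦ ha h.2
  exact hf2 (hpS.pow_dvd_of_dvd_mul_right 2 (hpfg hpf) hsq)

end PrimePowerCongruences

section IntegrallyClosed

variable {R : Type*} [CommRing R] [IsDomain R] [IsIntegrallyClosed R]

theorem dvd_of_sq_add_mul_eq {q n c e : R} (h : n ^ 2 + q * e * n = q ^ 2 * c) : q ∣ n := by
  rcases eq_or_ne q 0 with rfl | hq
  · simpa using h
  have hq' : algebraMap R (FractionRing R) q ≠ 0 := by simpa using hq
  have hint : IsIntegral R (algebraMap R (FractionRing R) n / algebraMap R _ q) := by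
    refine ⟨Polynomial.X ^ 2 + Polynomial.C e * Polynomial.X - Polynomial.C c, by monicity!, ?_⟩
    have := congrArg (algebraMap R (FractionRing R)) h
    simp only [map_add, map_mul, map_pow] at this
    simp only [Polynomial.eval₂_sub, Polynomial.eval₂_add, Polynomial.eval₂_mul,
      Polynomial.eval₂_pow, Polynomial.eval₂_X, Polynomial.eval₂_C]
    field_simp
    linear_combination this
  obtain ⟨z, hz⟩ := IsIntegrallyClosed.algebraMap_eq_of_integral hint
  refine ⟨z, IsFractionRing.injective R (FractionRing R) ?_⟩
  rw [map_mul, hz, mul_div_cancel₀ _ hq']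

theorem dvd_mul_of_dvd_pow {q x y z : R} {n i j k : ℕ} (hn : n ≠ 0) (hx : q ∣ x ^ n)
    (hy : q ∣ y ^ n) (hz : q ∣ z ^ n) (hle : n ≤ i + j + k) : q ∣ x ^ i * y ^ j * z ^ k := by
  rw [← IsIntegrallyClosed.pow_dvd_pow_iff hn, mul_pow, mul_pow, ← pow_mul, ← pow_mul, ← pow_mul,
    mul_comm i, mul_comm j, mul_comm k, pow_mul, pow_mul, pow_mul]
  refine (pow_dvd_pow q hle).trans ?_
  rw [pow_add, pow_add]
  exact mul_dvd_mul (mul_dvd_mul (pow_dvd_pow_of_dvd hx i) (pow_dvd_pow_of_dvd hy j))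
    (pow_dvd_pow_of_dvd hz k)

-- With `Y = k₁ U + k₂ W` and `N = Y ^ (p - 1)`, expanding `N ^ 2 = Y ^ (p - 2) * Y ^ p` exhibits
-- `N / p` as a root of a monic quadratic polynomial.
theorem dvd_add_pow_sub_one {p : ℕ} (hp : p.Prime) {W U d k₁ k₂ a b e₁ e₂ : R}
    (hW : W ^ p = p * (a - (d * k₁) ^ (p - 1) * W + W ^ 2 * e₁))
    (hU : U ^ p = p * (b - (d * k₂) ^ (p - 1) * U + U ^ 2 * e₂))
    (hab : (p : R) ∣ k₁ ^ p * b + k₂ ^ p * a) : (p : R) ∣ (k₁ * U + k₂ * W) ^ (p - 1) := by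
  obtain ⟨n, rfl⟩ := Nat.exists_eq_add_of_le hp.two_le
  rw [show 2 + n - 1 = n + 1 by lia] at *
  obtain ⟨y, hy⟩ := hab
  obtain ⟨r, hr⟩ := exists_add_pow_prime_eq hp (k₁ * U) (k₂ * W)
  have hdvdW := (Dvd.intro _ hW.symm : ((2 + n : ℕ) : R) ∣ W ^ (2 + n))
  have hdvdU := (Dvd.intro _ hU.symm : ((2 + n : ℕ) : R) ∣ U ^ (2 + n))
  set Y := k₁ * U + k₂ * W with hY
  have hdvdY : ((2 + n : ℕ) : R) ∣ Y ^ (2 + n) := by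
    rw [hr, mul_pow, mul_pow]
    exact dvd_add (dvd_add (hdvdU.mul_left _) (hdvdW.mul_left _)) ⟨k₁ * U * (k₂ * W) * r, by ring⟩
  obtain ⟨c₁, hc₁⟩ := dvd_mul_of_dvd_pow hp.ne_zero hdvdY hdvdW hdvdW
    (show 2 + n ≤ n + 2 + 0 by lia)
  obtain ⟨c₂, hc₂⟩ := dvd_mul_of_dvd_pow hp.ne_zero hdvdY hdvdU hdvdU
    (show 2 + n ≤ n + 2 + 0 by lia)
  obtain ⟨c₃, hc₃⟩ := dvd_mul_of_dvd_pow hp.ne_zero hdvdY hdvdU hdvdW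
    (show 2 + n ≤ n + 1 + 1 by lia)
  refine dvd_of_sq_add_mul_eq (e := (d * (k₁ * k₂)) ^ (n + 1)) (c := Y ^ n * y +
    k₁ ^ (2 + n) * e₂ * c₂ + k₂ ^ (2 + n) * e₁ * c₁ + k₁ * k₂ * r * c₃) ?_
  have hYp : Y ^ (2 + n) = (2 + n : ℕ) * ((k₁ ^ (2 + n) * b + k₂ ^ (2 + n) * a) -
      (d * (k₁ * k₂)) ^ (n + 1) * Y + (k₁ ^ (2 + n) * e₂ * U ^ 2 + k₂ ^ (2 + n) * e₁ * W ^ 2 +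
        k₁ * k₂ * r * (U * W))) := by
    rw [hr, mul_pow, mul_pow, hW, hU, hY]
    ring
  calc (Y ^ (n + 1)) ^ 2 + (2 + n : ℕ) * (d * (k₁ * k₂)) ^ (n + 1) * Y ^ (n + 1)
      = Y ^ n * Y ^ (2 + n) + (2 + n : ℕ) * (d * (k₁ * k₂)) ^ (n + 1) * Y ^ (n + 1) := by ring
    _ = _ := by
      rw [hYp, hy]
      linear_combination (2 + n : ℕ) * (k₁ ^ (2 + n) * e₂ * hc₂ + k₂ ^ (2 + n) * e₁ * hc₁ +
        k₁ * k₂ * r * hc₃)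

end IntegrallyClosed

section IntegralDescent

variable {A B : Type*} [CommRing A] [IsDomain A] [IsIntegrallyClosed A] [Field B] [Algebra A B]
  [FaithfulSMul A B]

theorem exists_algebraMap_eq_of_isIntegral_of_mul_eq {x : B} (hx : IsIntegral A x) {s y : A}
    (hs : s ≠ 0) (hxy : algebraMap A B s * x = algebraMap A B y) : ∃ z, algebraMap A B z = x := by
  let : Algebra (FractionRing A) B := FractionRing.liftAlgebra A B
  have hs' : algebraMap A B s ≠ 0 := by simpa using hs
  have hdiv : algebraMap (FractionRing A) B (algebraMap A _ y / algebraMap A _ s) = x := by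
    rw [map_div₀, ← IsScalarTower.algebraMap_apply, ← IsScalarTower.algebraMap_apply, ← hxy,
      mul_div_cancel_left₀ _ hs']
  rw [← hdiv, isIntegral_algebraMap_iff (algebraMap (FractionRing A) B).injective] at hx
  obtain ⟨z, hz⟩ := IsIntegrallyClosed.algebraMap_eq_of_integral hx
  exact ⟨z, by rw [← hdiv, ← hz, ← IsScalarTower.algebraMap_apply]⟩

end IntegralDescent

theorem mem_adjoin_of_isIntegral {S L K : Type*} [CommRing S] [IsDomain S] [Field L] [Algebra S L]
    [IsFractionRing S L] [Field K] [Algebra L K] [Algebra S K] [IsScalarTower S L K] {s : Set K}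
    [IsIntegrallyClosed (Algebra.adjoin S s)] {x : K} (hx : x ∈ Algebra.adjoin L s)
    (hint : IsIntegral S x) : x ∈ Algebra.adjoin S s := by
  obtain ⟨⟨c, hc⟩, hcx⟩ :=
    multiple_mem_adjoin_of_mem_localization_adjoin (nonZeroDivisors S) L s x hx
  have hinj : Function.Injective (algebraMap S K) := by
    rw [IsScalarTower.algebraMap_eq S L K]
    exact (algebraMap L K).injective.comp (IsFractionRing.injective S L)
  have hc0 : algebraMap S (Algebra.adjoin S s) c ≠ 0 := fun h ↦
    nonZeroDivisors.ne_zero hc (hinj (by simpa using congrArg Subtype.val h))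
  obtain ⟨z, rfl⟩ := exists_algebraMap_eq_of_isIntegral_of_mul_eq (hint.tower_top
    (A := Algebra.adjoin S s)) hc0 (y := ⟨_, hcx⟩) (Algebra.smul_def c x).symm
  exact z.2

section RadicalExtension

open Polynomial

theorem span_range_pow_mul_pow {A B : Type*} [CommRing A] [CommRing B] [Algebra A B] {x y : B}
    {P Q : A[X]} (hP : P.Monic) (hPx : aeval x P = 0) (hQ : Q.Monic) (hQy : aeval y Q = 0) {m n : ℕ}
    (hm : P.natDegree = m) (hn : Q.natDegree = n) :
    Submodule.span A (Set.range fun i : Fin m × Fin n ↦ x ^ (i.1 : ℕ) * y ^ (i.2 : ℕ)) =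
      Subalgebra.toSubmodule (Algebra.adjoin A {x, y}) := by
  rw [Set.insert_eq, Algebra.adjoin_union_coe_submodule,
    ← Submodule.span_range_natDegree_eq_adjoin hP hPx,
    ← Submodule.span_range_natDegree_eq_adjoin hQ hQy, Submodule.span_mul_span, hm, hn]
  congr 1
  ext z
  simp only [Set.mem_range, Prod.exists, Set.mem_mul, Finset.coe_image, Finset.coe_range,
    Set.mem_image, Set.mem_Iio]
  constructor
  · rintro ⟨i, j, rfl⟩
    exact ⟨_, ⟨i, i.2, rfl⟩, _, ⟨j, j.2, rfl⟩, rfl⟩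
  · rintro ⟨_, ⟨i, hi, rfl⟩, _, ⟨j, hj, rfl⟩, rfl⟩
    exact ⟨⟨i, hi⟩, ⟨j, hj⟩, rfl⟩

theorem adjoin_pair_sub_algebraMap {A B : Type*} [CommRing A] [CommRing B] [Algebra A B] (x y : B)
    (a b : A) : Algebra.adjoin A {x - algebraMap A B a, y - algebraMap A B b} =
      Algebra.adjoin A {x, y} := by
  refine le_antisymm (Algebra.adjoin_le ?_) (Algebra.adjoin_le ?_)
  · rintro _ (rfl | rfl)
    · exact sub_mem (Algebra.subset_adjoin (.inl rfl)) (algebraMap_mem _ a)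
    · exact sub_mem (Algebra.subset_adjoin (.inr rfl)) (algebraMap_mem _ b)
  · rintro z (hz | hz)
    · exact ((sub_add_cancel x _).trans hz.symm) ▸
        add_mem (Algebra.subset_adjoin (.inl rfl)) (algebraMap_mem _ a)
    · exact ((sub_add_cancel y _).trans hz.symm) ▸
        add_mem (Algebra.subset_adjoin (.inr rfl)) (algebraMap_mem _ b)

theorem exists_monic_aeval_sub_eq_zero {A B : Type*} [CommRing A] [IsDomain A] [CommRing B]
    [Algebra A B] {p : ℕ} (hp : p ≠ 0) {x : B} {c : A} (hx : x ^ p = algebraMap A B c) (a : A) :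
    ∃ P : A[X], P.Monic ∧ P.natDegree = p ∧ aeval (x - algebraMap A B a) P = 0 := by
  refine ⟨(X ^ p - C c).comp (X + C a), (monic_X_pow_sub_C c hp).comp_X_add_C a, ?_, ?_⟩
  · rw [natDegree_comp, natDegree_X_pow_sub_C, natDegree_X_add_C, mul_one]
  · simp [hx]

theorem span_range_sub_pow_mul_sub_pow {A B : Type*} [CommRing A] [IsDomain A] [CommRing B]
    [Algebra A B] {p : ℕ} (hp : p ≠ 0) {x y : B} {f g : A} (hx : x ^ p = algebraMap A B f)
    (hy : y ^ p = algebraMap A B g) (a b : A) :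
    Submodule.span A (Set.range fun i : Fin p × Fin p ↦
        (x - algebraMap A B a) ^ (i.1 : ℕ) * (y - algebraMap A B b) ^ (i.2 : ℕ)) =
      Subalgebra.toSubmodule (Algebra.adjoin A {x, y}) := by
  obtain ⟨P, hP, hPp, hPx⟩ := exists_monic_aeval_sub_eq_zero hp hx a
  obtain ⟨Q, hQ, hQp, hQy⟩ := exists_monic_aeval_sub_eq_zero hp hy b
  rw [span_range_pow_mul_pow hP hPx hQ hQy hPp hQp, adjoin_pair_sub_algebraMap]

variable {F K : Type*} [Field F] [Field K] [Algebra F K] {p : ℕ} [NeZero p] {x : K} {c : F}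

theorem finrank_adjoin_simple_le_of_pow_eq (hx : x ^ p = algebraMap F K c) :
    Module.finrank F (IntermediateField.adjoin F {x}) ≤ p := by
  have hmonic : (X ^ p - C c : F[X]).Monic := monic_X_pow_sub_C c (NeZero.ne p)
  have hroot : aeval x (X ^ p - C c : F[X]) = 0 := by simp [hx]
  rw [IntermediateField.adjoin.finrank ⟨_, hmonic, hroot⟩,
    ← natDegree_X_pow_sub_C (n := p) (r := c)]
  exact natDegree_le_of_dvd (minpoly.dvd F x hroot) hmonic.ne_zero

theorem exists_basis_eq_pow (hx : x ^ p = algebraMap F K c) (htop : Algebra.adjoin F {x} = ⊤)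
    (hfin : Module.finrank F K = p) :
    ∃ b : Module.Basis (Fin p) F K, ∀ i, b i = x ^ (i : ℕ) := by
  classical
  have hmonic : (X ^ p - C c : F[X]).Monic := monic_X_pow_sub_C c (NeZero.ne p)
  have hspan := Submodule.span_range_natDegree_eq_adjoin hmonic
    (show aeval x (X ^ p - C c) = 0 by simp [hx])
  rw [natDegree_X_pow_sub_C, htop, Algebra.top_toSubmodule] at hspan
  refine ⟨basisOfTopLeSpanOfCardEqFinrank (fun i : Fin p ↦ x ^ (i : ℕ)) ?_ (by simp [hfin]),
    congrFun (coe_basisOfTopLeSpanOfCardEqFinrank _ _ _)⟩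
  rw [← hspan]
  refine Submodule.span_mono fun z hz ↦ ?_
  obtain ⟨i, hi, rfl⟩ := Finset.mem_image.1 hz
  exact ⟨⟨i, Finset.mem_range.1 hi⟩, rfl⟩

theorem trace_eq_zero_of_mul_basis {ι : Type*} [Finite ι] (b : Module.Basis ι F K)
    (h : ∀ i, ∃ j ≠ i, ∃ r : F, x * b i = r • b j) : Algebra.trace F K x = 0 := by
  classical
  have := Fintype.ofFinite ι
  rw [Algebra.trace_eq_matrix_trace b]
  refine Finset.sum_eq_zero fun i _ ↦ ?_
  obtain ⟨j, hji, r, hr⟩ := h i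
  rw [Matrix.diag_apply, Algebra.leftMulMatrix_eq_repr_mul, hr, map_smul, b.repr_self,
    Finsupp.smul_apply, Finsupp.single_eq_of_ne hji.symm, smul_zero]

variable {b : Module.Basis (Fin p) F K}

theorem trace_pow_of_not_dvd (hb : ∀ i, b i = x ^ (i : ℕ)) (hx : x ^ p = algebraMap F K c) {m : ℕ}
    (hm : ¬ p ∣ m) : Algebra.trace F K (x ^ m) = 0 := by
  refine trace_eq_zero_of_mul_basis b fun i ↦
    ⟨⟨(m + i) % p, Nat.mod_lt _ (NeZero.pos p)⟩, fun h ↦ hm ?_, c ^ ((m + i) / p), ?_⟩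
  · have hmod : m + i ≡ 0 + i [MOD p] :=
      (congrArg Fin.val h).trans (by rw [zero_add, Nat.mod_eq_of_lt i.2])
    exact (Nat.modEq_zero_iff_dvd).1 (hmod.add_right_cancel' _)
  · rw [hb, hb, Algebra.smul_def, map_pow, ← hx, ← pow_mul, ← pow_add, ← pow_add,
      Nat.div_add_mod]

theorem trace_mul_pow_sub (hb : ∀ i, b i = x ^ (i : ℕ)) (hx : x ^ p = algebraMap F K c) (z : K)
    (i : Fin p) : Algebra.trace F K (z * x ^ (p - (i : ℕ))) = p * c * b.repr z i := by
  have hfin : Module.finrank F K = p := by simpa using Module.finrank_eq_card_basis b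
  calc Algebra.trace F K (z * x ^ (p - (i : ℕ)))
      = ∑ j, b.repr z j • Algebra.trace F K (x ^ ((j : ℕ) + (p - i))) := by
        conv_lhs => rw [← b.sum_repr z]
        simp only [Finset.sum_mul, map_sum, smul_mul_assoc, map_smul, hb, ← pow_add]
    _ = b.repr z i • Algebra.trace F K (x ^ ((i : ℕ) + (p - i))) := by
        refine Finset.sum_eq_single i (fun j _ hji ↦ ?_) (by simp)
        rw [trace_pow_of_not_dvd hb hx, smul_zero]
        intro hdvd
        have hlt : (j : ℕ) + (p - i) < 2 * p := by lia
        obtain ⟨k, hk⟩ := hdvd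
        have hk1 : k = 1 := by
          have : k < 2 := lt_of_mul_lt_mul_left (hk ▸ hlt.trans_eq (mul_comm _ _)) (Nat.zero_le p)
          have : k ≠ 0 := by
            rintro rfl
            lia
          lia
        exact hji (Fin.ext (by rw [hk1] at hk; lia))
    _ = p * c * b.repr z i := by
        rw [Nat.add_sub_cancel' i.2.le, hx, Algebra.trace_algebraMap, hfin, smul_eq_mul,
          nsmul_eq_mul, mul_comm]

theorem trace_add_pow (hb : ∀ i, b i = x ^ (i : ℕ)) (hx : x ^ p = algebraMap F K c) (k e : F)
    {m : ℕ} (hm : m < p) :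
    Algebra.trace F K ((algebraMap F K k * x + algebraMap F K e) ^ m) = p * e ^ m := by
  have hfin : Module.finrank F K = p := by simpa using Module.finrank_eq_card_basis b
  have hterm (j : ℕ) : (algebraMap F K k * x) ^ j * algebraMap F K e ^ (m - j) * (m.choose j : K) =
      (k ^ j * e ^ (m - j) * m.choose j) • x ^ j := by
    simp only [Algebra.smul_def, map_mul, map_pow, map_natCast]
    ring
  simp only [add_pow, hterm, map_sum, map_smul]
  rw [Finset.sum_eq_single 0 (fun j hj hj0 ↦ ?_) (by simp)]
  · rw [pow_zero x, ← map_one (algebraMap F K), Algebra.trace_algebraMap, hfin]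
    simp [mul_comm]
  · have hlt := Finset.mem_range.1 hj
    rw [trace_pow_of_not_dvd hb hx (Nat.not_dvd_of_pos_of_lt (Nat.pos_of_ne_zero hj0) (by lia)),
      smul_zero]

end RadicalExtension

theorem adjoin_intermediateField_adjoin_eq_top {F K : Type*} [Field F] [Field K] [Algebra F K]
    {x y : K} (h : Algebra.adjoin F {x, y} = ⊤) :
    Algebra.adjoin (IntermediateField.adjoin F {x}) {y} = ⊤ := by
  let E := IntermediateField.adjoin F {x}
  have hx : x ∈ Algebra.adjoin E {y} :=
    Subalgebra.algebraMap_mem _ (IntermediateField.AdjoinSimple.gen F x)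
  have hy : y ∈ Algebra.adjoin E {y} := Algebra.subset_adjoin (Set.mem_singleton y)
  have hle : Algebra.adjoin F {x, y} ≤ (Algebra.adjoin E {y}).restrictScalars F :=
    Algebra.adjoin_le (Set.insert_subset hx (Set.singleton_subset_iff.2 hy))
  rw [h] at hle
  exact eq_top_iff.2 fun z _ ↦ hle (Algebra.mem_top (x := z))

/-- `K` is generated over `L` by `p`-th roots `ω` of `f` and `μ` of `g`, and has the largest
possible degree `p ^ 2`. -/
structure IsBiradicalExtension (L : Type*) {S K : Type*} [CommRing S] [Field L] [Field K]
    [Algebra S K] [Algebra L K] (p : ℕ) (f g : S) (ω μ : K) : Prop where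
  pow_left : ω ^ p = algebraMap S K f
  pow_right : μ ^ p = algebraMap S K g
  adjoin_eq_top : Algebra.adjoin L {ω, μ} = ⊤
  finrank_eq : Module.finrank L K = p ^ 2

namespace IsBiradicalExtension

open IntermediateField

variable {S L K : Type*} [CommRing S] [Field L] [Field K] [Algebra S K] [Algebra L K] {p : ℕ}
  {f g : S} {ω μ : K}

theorem symm (h : IsBiradicalExtension L p f g ω μ) : IsBiradicalExtension L p g f μ ω :=
  ⟨h.pow_right, h.pow_left, Set.pair_comm ω μ ▸ h.adjoin_eq_top, h.finrank_eq⟩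

theorem finiteDimensional [NeZero p] (h : IsBiradicalExtension L p f g ω μ) :
    FiniteDimensional L K :=
  Module.finite_of_finrank_pos (h.finrank_eq ▸ pow_pos (NeZero.pos p) 2)

variable [Algebra S L] [IsScalarTower S L K]

theorem exists_basis [NeZero p] (h : IsBiradicalExtension L p f g ω μ) :
    ∃ b : Module.Basis (Fin p) (adjoin L {ω}) K, ∀ i, b i = μ ^ (i : ℕ) := by
  have := h.finiteDimensional
  have hω : ω ^ p = algebraMap L K (algebraMap S L f) := by
    rw [h.pow_left, IsScalarTower.algebraMap_apply S L K]
  have hμ : μ ^ p = algebraMap (adjoin L {ω}) K (algebraMap S _ g) := by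
    rw [h.pow_right]
    rfl
  have htop := adjoin_intermediateField_adjoin_eq_top h.adjoin_eq_top
  have hfield : adjoin (adjoin L {ω}) {μ} = ⊤ := by
    rw [← toSubalgebra_inj, top_toSubalgebra, eq_top_iff, ← htop]
    exact algebra_adjoin_le_adjoin _ _
  have hfin : Module.finrank (adjoin L {ω}) K ≤ p := by
    rw [← finrank_top', ← hfield]
    exact finrank_adjoin_simple_le_of_pow_eq hμ
  have hmul := Module.finrank_mul_finrank L (adjoin L {ω}) K
  rw [h.finrank_eq, sq] at hmul
  refine exists_basis_eq_pow hμ htop (hfin.antisymm ?_)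
  refine Nat.le_of_mul_le_mul_left ?_ (NeZero.pos p)
  rw [← hmul]
  exact Nat.mul_le_mul_right _ (finrank_adjoin_simple_le_of_pow_eq hω)

theorem linearIndependent [NeZero p] [FaithfulSMul S L] (h : IsBiradicalExtension L p f g ω μ)
    (a b : S) : LinearIndependent S fun i : Fin p × Fin p ↦
      (ω - algebraMap S K a) ^ (i.1 : ℕ) * (μ - algebraMap S K b) ^ (i.2 : ℕ) := by
  have hspan := span_range_sub_pow_mul_sub_pow (A := L) (NeZero.ne p)
    (h.pow_left.trans (IsScalarTower.algebraMap_apply S L K f))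
    (h.pow_right.trans (IsScalarTower.algebraMap_apply S L K g)) (algebraMap S L a)
    (algebraMap S L b)
  simp only [← IsScalarTower.algebraMap_apply S L K] at hspan
  refine LinearIndependent.restrict_scalars (K := L) (fun x y hxy ↦ ?_)
    (linearIndependent_of_top_le_span_of_card_eq_finrank ?_ ?_)
  · simpa [← Algebra.algebraMap_eq_smul_one] using hxy
  · rw [hspan, h.adjoin_eq_top, Algebra.top_toSubmodule]
  · rw [h.finrank_eq, Fintype.card_prod, Fintype.card_fin, sq]

end IsBiradicalExtension

namespace SatisfiesA1

variable {S : Type*} [CommRing S] {f g : S}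

theorem symm (h : SatisfiesA1 f g) : SatisfiesA1 g f :=
  fun P hP hgf ↦ h P hP hgf.symm

theorem of_isUnit_left (hf : IsUnit f) (g : S) : SatisfiesA1 f g :=
  fun P ⟨hP, _⟩ h ↦ hP.ne_top (P.eq_top_of_isUnit_mem h.1 hf)

variable [IsDomain S] [IsNoetherianRing S] [IsIntegrallyClosed S]

theorem dvd_of_dvd_mul (h : SatisfiesA1 f g) (hf : f ≠ 0) {u : S} (hu : f ∣ g * u) : f ∣ u := by
  refine dvd_of_forall_dvd_localization hf fun q hq hfq hdvr ↦ ?_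
  have hheight : q.height = 1 := by
    have hdim := IsLocalization.AtPrime.ringKrullDim_eq_height q (Localization.AtPrime q)
    rw [IsDiscreteValuationRing.ringKrullDim_eq_one] at hdim
    exact_mod_cast hdim.symm
  have hgq : g ∉ q := fun hgq ↦
    h q ⟨hq, PrimeSpectrum.height_eq_orderHeight ⟨q, hq⟩ ▸ hheight⟩ ⟨hfq, hgq⟩
  have hg := IsLocalization.map_units (Localization.AtPrime q) (⟨g, hgq⟩ : q.primeCompl)
  have hdvd := map_dvd (algebraMap S (Localization.AtPrime q)) hu
  rw [map_mul] at hdvd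
  exact (hg.dvd_mul_left).1 hdvd

theorem not_dvd_right (h : SatisfiesA1 f g) (hf : f ≠ 0) {q : S} (hq : ¬ IsUnit q) (hqf : q ∣ f) :
    ¬ q ∣ g := by
  obtain ⟨f', rfl⟩ := hqf
  intro hqg
  obtain ⟨c, hc⟩ := h.dvd_of_dvd_mul hf (mul_dvd_mul_right hqg f')
  refine hq (IsUnit.of_mul_eq_one c (mul_left_cancel₀ (right_ne_zero_of_mul hf) ?_))
  linear_combination -hc

end SatisfiesA1

theorem mem_span_range_of_smul_mem {S M ι : Type*} [CommRing S] [IsDomain S] [AddCommGroup M]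
    [Module S M] [Module.IsTorsionFree S M] {w : ι → M} (hw : LinearIndependent S w) {f g : S}
    (hf : f ≠ 0) (hfg : ∀ u, f ∣ g * u → f ∣ u) {x : M}
    (hfx : f • x ∈ Submodule.span S (Set.range w)) (hgx : g • x ∈ Submodule.span S (Set.range w)) :
    x ∈ Submodule.span S (Set.range w) := by
  obtain ⟨c, hc⟩ := Finsupp.mem_span_range_iff_exists_finsupp.1 hfx
  obtain ⟨d, hd⟩ := Finsupp.mem_span_range_iff_exists_finsupp.1 hgx
  have hcd : g • c = f • d := hw (by
    rw [map_smul, map_smul, Finsupp.linearCombination_apply, Finsupp.linearCombination_apply, hc,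
      hd, smul_comm])
  have hdvd (i : ι) : f ∣ c i := hfg _ ⟨d i, DFunLike.congr_fun hcd i⟩
  choose e he using hdvd
  have hx : c.sum (fun i _ ↦ e i • w i) = x := smul_right_injective M hf (by
    change f • c.sum _ = f • x
    simp only [← hc, Finsupp.smul_sum, smul_smul, ← he]
    rfl)
  exact hx ▸ Submodule.sum_mem _ fun i _ ↦
    Submodule.smul_mem _ _ (Submodule.subset_span (Set.mem_range_self i))

theorem mul_smul_mem_of_basis_eq_pow {S F K : Type*} [CommRing S] [Field F] [Field K] [Algebra S F]
    [Algebra S K] [Algebra F K] [IsScalarTower S F K] {p : ℕ} [NeZero p] {x : K} {c : S}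
    {b : Module.Basis (Fin p) F K} (hb : ∀ i, b i = x ^ (i : ℕ)) (hx : x ^ p = algebraMap S K c)
    {B : Subalgebra S K} (hxB : x ∈ B) (hB : ∀ y : F, IsIntegral S y → algebraMap F K y ∈ B)
    {z : K} (hz : IsIntegral S z) : ((p : S) * c) • z ∈ B := by
  have : FiniteDimensional F K := b.finiteDimensional_of_finite
  have hxint : IsIntegral S x := IsIntegral.of_pow (NeZero.pos p) (by
    rw [hx]
    exact isIntegral_algebraMap)
  rw [IsScalarTower.algebraMap_apply S F K] at hx
  have hmem (i : Fin p) : algebraMap F K (p * algebraMap S F c * b.repr z i) ∈ B := by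
    rw [← trace_mul_pow_sub hb hx]
    exact hB _ (Algebra.isIntegral_trace (hz.mul (hxint.pow _)))
  have hsum : ((p : S) * c) • z =
      ∑ i, algebraMap F K (p * algebraMap S F c * b.repr z i) * x ^ (i : ℕ) := by
    conv_lhs => rw [← b.sum_repr z]
    simp only [hb, Algebra.smul_def, map_mul, map_natCast, mul_assoc, Finset.mul_sum,
      ← IsScalarTower.algebraMap_apply]
  rw [hsum]
  exact sum_mem fun i _ ↦ mul_mem (hmem i) (pow_mem hxB _)

namespace IsBiradicalExtension

variable {S L K : Type*} [CommRing S] [IsDomain S] [Field L] [Field K] [Algebra S K] [Algebra L K]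
  [Algebra S L] [IsScalarTower S L K] [IsFractionRing S L] {p : ℕ} [NeZero p] {f g : S} {ω μ : K}

theorem mul_right_smul_mem_adjoin (h : IsBiradicalExtension L p f g ω μ)
    [IsIntegrallyClosed (Algebra.adjoin S {ω})] {z : K} (hz : IsIntegral S z) :
    ((p : S) * g) • z ∈ Algebra.adjoin S {ω, μ} := by
  have := h.finiteDimensional
  have : IsScalarTower S (IntermediateField.adjoin L {ω}) K := .of_algebraMap_eq' rfl
  obtain ⟨b, hb⟩ := h.exists_basis
  refine mul_smul_mem_of_basis_eq_pow hb h.pow_right (Algebra.subset_adjoin (by simp))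
    (fun y hy ↦ ?_) hz
  have hyL : (y : K) ∈ Algebra.adjoin L {ω} := by
    rw [← IntermediateField.adjoin_simple_toSubalgebra_of_isAlgebraic
      (Algebra.IsAlgebraic.isAlgebraic ω)]
    exact y.2
  exact Algebra.adjoin_mono (by simp) (mem_adjoin_of_isIntegral hyL hy.algebraMap)

theorem smul_mem_span (h : IsBiradicalExtension L p f g ω μ)
    [IsIntegrallyClosed (Algebra.adjoin S {ω})] [IsIntegrallyClosed (Algebra.adjoin S {μ})]
    (hf : f ≠ 0) (hfg : ∀ u, f ∣ g * u → f ∣ u) (a b : S) {z : K} (hz : IsIntegral S z) :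
    (p : S) • z ∈ Submodule.span S (Set.range fun i : Fin p × Fin p ↦
      (ω - algebraMap S K a) ^ (i.1 : ℕ) * (μ - algebraMap S K b) ^ (i.2 : ℕ)) := by
  have : Module.IsTorsionFree S K := .trans_faithfulSMul S L K
  refine mem_span_range_of_smul_mem (h.linearIndependent a b) hf hfg ?_ ?_
  · rw [span_range_sub_pow_mul_sub_pow (NeZero.ne p) h.pow_left h.pow_right, smul_smul, mul_comm,
      Set.pair_comm]
    exact h.symm.mul_right_smul_mem_adjoin hz
  · rw [span_range_sub_pow_mul_sub_pow (NeZero.ne p) h.pow_left h.pow_right, smul_smul, mul_comm]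
    exact h.mul_right_smul_mem_adjoin hz

theorem smul_mem_span_integralClosure (h : IsBiradicalExtension L p f g ω μ)
    [IsIntegrallyClosed (Algebra.adjoin S {ω})] [IsIntegrallyClosed (Algebra.adjoin S {μ})]
    (hf : f ≠ 0) (hfg : ∀ u, f ∣ g * u → f ∣ u) {h₁ h₂ : S} {W U : integralClosure S K}
    (hW : W + algebraMap S K h₁ = ω) (hU : U + algebraMap S K h₂ = μ) (z : integralClosure S K) :
    (p : S) • z ∈ Submodule.span S
      (Set.range fun i : Fin p × Fin p ↦ W ^ (i.1 : ℕ) * U ^ (i.2 : ℕ)) := by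
  have hz := h.smul_mem_span hf hfg h₁ h₂ z.2
  rw [← hW, ← hU, add_sub_cancel_right, add_sub_cancel_right] at hz
  obtain ⟨c, hc⟩ := (Submodule.mem_span_range_iff_exists_fun S).1 hz
  refine (Submodule.mem_span_range_iff_exists_fun S).2 ⟨c, Subtype.ext ?_⟩
  simpa using hc

end IsBiradicalExtension

section TraceRadical

theorem mem_radical_span_of_coe_eq_trace {S F K E : Type*} [CommRing S] [Field F] [Field K]
    [Field E] [Algebra S F] [Algebra S K] [Algebra S E] [Algebra F K] [Algebra F E]
    [IsScalarTower S F K] [IsScalarTower S F E] [FiniteDimensional F K] [Algebra.IsSeparable F K]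
    [IsAlgClosed E] {q : S} {z : integralClosure S K}
    (hz : z ∈ (Ideal.span {algebraMap S (integralClosure S K) q}).radical)
    {r : integralClosure S E} (hr : (r : E) = algebraMap F E (Algebra.trace F K z)) :
    r ∈ (Ideal.span {algebraMap S (integralClosure S E) q}).radical := by
  have hmap (σ : K →ₐ[F] E) : (σ.restrictScalars S).mapIntegralClosure z ∈
      (Ideal.span {algebraMap S (integralClosure S E) q}).radical := by
    obtain ⟨n, hn⟩ := hz
    refine ⟨n, ?_⟩
    rw [← map_pow, Ideal.mem_span_singleton]
    simpa using map_dvd (σ.restrictScalars S).mapIntegralClosure (Ideal.mem_span_singleton.1 hn)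
  have hsum : r = ∑ σ : K →ₐ[F] E, (σ.restrictScalars S).mapIntegralClosure z := by
    refine Subtype.ext ?_
    rw [hr, trace_eq_sum_embeddings E, AddSubmonoidClass.coe_finsetSum]
    rfl
  rw [hsum]
  exact sum_mem fun σ _ ↦ hmap σ

theorem dvd_of_algebraMap_mem_radical_span {S R : Type*} [CommRing S] [CommRing R]
    [Algebra S R] [FaithfulSMul S R] [Algebra.IsIntegral S R] {q s : S} (hq : Prime q)
    (hs : algebraMap S R s ∈ (Ideal.span {algebraMap S R q}).radical) : q ∣ s := by
  have := (Ideal.span_singleton_prime hq.ne_zero).2 hq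
  obtain ⟨P, -, hP, hPq⟩ := Ideal.exists_ideal_over_prime_of_isIntegral (S := R) (Ideal.span {q}) ⊥
    (by rw [← RingHom.ker_eq_comap_bot, FaithfulSMul.ker_algebraMap_eq_bot]; exact bot_le)
  have hqP : algebraMap S R q ∈ P := Ideal.mem_comap.1 (hPq ▸ Ideal.mem_span_singleton_self q)
  have hsP := (hP.radical_le_iff.2 ((Ideal.span_singleton_le_iff_mem P).2 hqP)) hs
  exact Ideal.mem_span_singleton.1 (hPq ▸ Ideal.mem_comap.2 hsP)

theorem exists_isPrime_comap_eq_span_of_notMem_radical {S R : Type*} [CommRing S] [CommRing R]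
    [Algebra S R] {q : S} (hq : Prime q) {t : R}
    (ht : ∀ s, ¬ q ∣ s → algebraMap S R s * t ∉ (Ideal.span {algebraMap S R q}).radical) :
    ∃ M : Ideal R, M.IsPrime ∧ M.comap (algebraMap S R) = Ideal.span {q} ∧ t ∉ M := by
  have hprime := (Ideal.span_singleton_prime hq.ne_zero).2 hq
  let N := (Ideal.span {q}).primeCompl.map (algebraMap S R) ⊔ Submonoid.powers t
  have hdisj : Disjoint (Ideal.span {algebraMap S R q} : Set R) N := by
    refine Set.disjoint_left.2 fun x hx hxN ↦ ?_
    obtain ⟨_, ⟨s, hs, rfl⟩, _, ⟨n, rfl⟩, rfl⟩ := Submonoid.mem_sup.1 hxN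
    refine ht s (fun h ↦ hs (Ideal.mem_span_singleton.2 h)) ⟨n + 1, ?_⟩
    rw [show (algebraMap S R s * t) ^ (n + 1) =
      (algebraMap S R s ^ n * t) * (algebraMap S R s * t ^ n) by ring]
    exact Ideal.mul_mem_left _ _ hx
  obtain ⟨M, hM, hqM, hMN⟩ := Ideal.exists_le_prime_disjoint _ N hdisj
  refine ⟨M, hM, le_antisymm (fun s hs ↦ ?_) ?_, fun htM ↦ ?_⟩
  · by_contra hsq
    exact Set.disjoint_left.1 hMN hs (Submonoid.mem_sup_left ⟨s, hsq, rfl⟩)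
  · rwa [Ideal.span_singleton_le_iff_mem, Ideal.mem_comap, ← Ideal.span_singleton_le_iff_mem]
  · exact Set.disjoint_left.1 hMN htM (Submonoid.mem_sup_right (Submonoid.mem_powers t))

end TraceRadical

theorem isUnit_of_smul_eq {S M ι : Type*} [CommRing S] [AddCommGroup M] [Module S M] {w : ι → M}
    (hw : LinearIndependent S w) {q : S} {x : M} (hx : x ∈ Submodule.span S (Set.range w)) {i : ι}
    (hi : w i = q • x) : IsUnit q := by
  obtain ⟨c, rfl⟩ := Finsupp.mem_span_range_iff_exists_finsupp.1 hx
  have hc : Finsupp.single i 1 = q • c := hw (by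
    rw [map_smul, Finsupp.linearCombination_single, one_smul, hi, Finsupp.linearCombination_apply])
  refine IsUnit.of_mul_eq_one (c i) ?_
  simpa using (DFunLike.congr_fun hc i).symm

namespace IsBiradicalExtension

variable {S L K : Type*} [CommRing S] [Field L] [Field K] [Algebra S K] [Algebra L K]
  [Algebra S L] [IsScalarTower S L K] {p : ℕ} {f g : S} {ω μ : K}

theorem trace_eq_pow_of_mul_eq [NeZero p] [CharZero L] (h : IsBiradicalExtension L p f g ω μ)
    (k : S) (c : IntermediateField.adjoin L {ω}) {t : K}
    (ht : p * t = (algebraMap S K k * μ + c) ^ (p - 1)) :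
    Algebra.trace (IntermediateField.adjoin L {ω}) K t = c ^ (p - 1) := by
  obtain ⟨b, hb⟩ := h.exists_basis
  have hμ : μ ^ p = algebraMap (IntermediateField.adjoin L {ω}) K (algebraMap S _ g) := h.pow_right
  have htr := trace_add_pow hb hμ (algebraMap S _ k) c (Nat.sub_lt (NeZero.pos p) one_pos)
  have hp : (p : IntermediateField.adjoin L {ω}) ≠ 0 := by
    have := charZero_of_injective_algebraMap
      (algebraMap L (IntermediateField.adjoin L {ω})).injective
    exact NeZero.ne _
  refine mul_left_cancel₀ hp ?_
  rw [← htr, ← nsmul_eq_mul, ← map_nsmul, nsmul_eq_mul, ht]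
  rfl

theorem trace_mul_eq_mul_pow [NeZero p] [CharZero L] (h : IsBiradicalExtension L p f g ω μ)
    {h₁ h₂ k₁ k₂ s : S} {W U t : integralClosure S K} (hW : W + algebraMap S K h₁ = ω)
    (hU : U + algebraMap S K h₂ = μ)
    (ht : p * t = (algebraMap S _ k₁ * U + algebraMap S _ k₂ * W) ^ (p - 1)) :
    Algebra.trace (IntermediateField.adjoin L {ω}) K ↑(algebraMap S (integralClosure S K) s * t) =
      algebraMap S _ s * (algebraMap S _ k₂ * (IntermediateField.AdjoinSimple.gen L ω -
        algebraMap S _ h₁) + algebraMap S _ (-(k₁ * h₂))) ^ (p - 1) := by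
  rw [← h.trace_eq_pow_of_mul_eq k₁ _ (t := t)]
  · exact map_smul (Algebra.trace (IntermediateField.adjoin L {ω}) K) (algebraMap S _ s) (t : K)
  · have htK : (p : K) * t = (algebraMap S K k₁ * U + algebraMap S K k₂ * W) ^ (p - 1) := by
      simpa using congrArg (Subtype.val : integralClosure S K → K) ht
    rw [htK]
    congr 1
    change _ = algebraMap S K k₁ * μ +
      (algebraMap S K k₂ * (ω - algebraMap S K h₁) + algebraMap S K (-(k₁ * h₂)))
    rw [map_neg, map_mul]
    linear_combination algebraMap S K k₁ * hU + algebraMap S K k₂ * hW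

variable [IsDomain S]

theorem not_dvd_of_eq_pow_add [FaithfulSMul S L] [IsIntegrallyClosed (Algebra.adjoin S {ω})]
    (h : IsBiradicalExtension L p f g ω μ) (hp : p.Prime) (hp3 : 3 ≤ p) (hpS : ¬ IsUnit (p : S))
    {h₁ a : S} (hf : f = h₁ ^ p + a * p) : ¬ (p : S) ∣ a := by
  rintro ⟨a, rfl⟩
  have : NeZero p := ⟨hp.ne_zero⟩
  let B := Algebra.adjoin S {ω}
  let W : B := ⟨ω - algebraMap S K h₁,
    sub_mem (Algebra.self_mem_adjoin_singleton S ω) (algebraMap_mem B h₁)⟩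
  have hWω : (W + algebraMap S B h₁) ^ p = algebraMap S B h₁ ^ p + algebraMap S B (p * a) * p := by
    refine Subtype.ext ?_
    change (ω - algebraMap S K h₁ + algebraMap S K h₁) ^ p = _
    rw [sub_add_cancel, h.pow_left, hf]
    simp only [map_add, map_mul, map_pow, map_natCast]
    rfl
  obtain ⟨e, he⟩ := exists_pow_eq_of_add_pow_eq hp hp3 hWω
  obtain ⟨y, hy⟩ := dvd_add_pow_sub_one hp (W := 0) (d := 1) (k₁ := 1) (a := 0) (e₁ := 0)
    (k₂ := algebraMap S B h₁) (b := algebraMap S B (p * a)) (e₂ := e) (by simp [hp.ne_zero])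
    (by rw [he, one_mul]) (by simp)
  refine hpS (isUnit_of_smul_eq (h.linearIndependent h₁ 0) (x := (y : K))
    (i := (⟨p - 1, Nat.sub_lt (NeZero.pos p) one_pos⟩, 0)) ?_ ?_)
  · rw [span_range_sub_pow_mul_sub_pow (NeZero.ne p) h.pow_left h.pow_right]
    exact Algebra.adjoin_mono (by simp) y.2
  · simpa [W, Algebra.smul_def] using congrArg (Subtype.val : B → K) hy

theorem algebraMap_mul_notMem_radical [FaithfulSMul S L] [CharZero L] (hp : p.Prime)
    (h : IsBiradicalExtension L p f g ω μ) (hpS : Prime (p : S)) {h₁ h₂ k₁ k₂ s : S}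
    (hs : ¬ (p : S) ∣ s) (hk₁ : ¬ (p : S) ∣ k₁) (hh₂ : ¬ (p : S) ∣ h₂)
    {W U t : integralClosure S K} (hW : W + algebraMap S K h₁ = ω) (hU : U + algebraMap S K h₂ = μ)
    (hWp : (p : integralClosure S K) ∣ W ^ p)
    (ht : p * t = (algebraMap S _ k₁ * U + algebraMap S _ k₂ * W) ^ (p - 1)) :
    algebraMap S _ s * t ∉ (Ideal.span {algebraMap S (integralClosure S K) p}).radical := by
  intro hst
  have : NeZero p := ⟨hp.ne_zero⟩
  have := h.finiteDimensional
  let F := IntermediateField.adjoin L {ω}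
  have : IsScalarTower S F K := .of_algebraMap_eq' rfl
  let E := AlgebraicClosure K
  have : IsScalarTower S F E := .to₁₂₄ S F K E
  have : FaithfulSMul S K := .trans S L K
  have : FaithfulSMul S E := .trans S K E
  let I := Ideal.span {algebraMap S (integralClosure S E) p}
  let φ : integralClosure S K →ₐ[S] integralClosure S E :=
    (IsScalarTower.toAlgHom S K E).mapIntegralClosure
  have hφW : algebraMap S _ k₂ * φ W ∈ I.radical := by
    refine Ideal.mul_mem_left _ _ ⟨p, Ideal.mem_span_singleton.2 ?_⟩
    simpa using map_dvd φ hWp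
  have htr : algebraMap S _ s * (algebraMap S _ k₂ * φ W + algebraMap S _ (-(k₁ * h₂))) ^ (p - 1) ∈
      I.radical := by
    refine mem_radical_span_of_coe_eq_trace (F := F) hst ?_
    rw [h.trace_mul_eq_mul_pow hW hU ht]
    change algebraMap S E s * (algebraMap S E k₂ * algebraMap K E W +
        algebraMap S E (-(k₁ * h₂))) ^ (p - 1) =
      algebraMap K E (algebraMap S K s * (algebraMap S K k₂ * (ω - algebraMap S K h₁) +
        algebraMap S K (-(k₁ * h₂))) ^ (p - 1))
    rw [← hW, add_sub_cancel_right]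
    simp only [map_mul, map_pow, map_add, ← IsScalarTower.algebraMap_apply]
  have hs' : algebraMap S (integralClosure S E) (s * (-(k₁ * h₂)) ^ (p - 1)) ∈ I.radical := by
    obtain ⟨y, hy⟩ := sub_dvd_pow_sub_pow (algebraMap S _ k₂ * φ W + algebraMap S _ (-(k₁ * h₂)))
      (algebraMap S _ (-(k₁ * h₂))) (p - 1)
    rw [add_sub_cancel_right, sub_eq_iff_eq_add] at hy
    rw [hy, mul_add, ← map_pow, ← map_mul] at htr
    exact (Ideal.add_mem_iff_right _ (Ideal.mul_mem_left _ _ (Ideal.mul_mem_right _ _ hφW))).1 htr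
  rcases hpS.dvd_or_dvd (dvd_of_algebraMap_mem_radical_span hpS hs') with hps | hpkh
  · exact hs hps
  · exact (hpS.dvd_or_dvd ((dvd_neg).1 (hpS.dvd_of_dvd_pow hpkh))).elim hk₁ hh₂

end IsBiradicalExtension

theorem exists_valuationSubring_of_isPrime {K : Type*} [Field K] (A : Subring K) (M : Ideal A)
    [M.IsPrime] : ∃ V : ValuationSubring K, A ≤ V.toSubring ∧
      ∀ x : A, V.valuation x < 1 ↔ x ∈ M := by
  obtain ⟨V, hle, hV⟩ := (LocalSubring.ofPrime A M).exists_le_valuationSubring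
  refine ⟨V, (LocalSubring.le_ofPrime A M).trans hle, fun x ↦ ?_⟩
  have hx := LocalSubring.le_ofPrime A M x.2
  rw [← not_iff_not, ← Ideal.mem_primeCompl_iff,
    ← IsLocalization.AtPrime.isUnit_to_map_iff (LocalSubring.ofPrime A M).toSubring M x]
  have h1 := V.valuation_lt_one_iff ⟨x, hle hx⟩
  rw [← h1, IsLocalRing.mem_maximalIdeal, mem_nonunits_iff, not_not]
  exact ⟨fun h ↦ hV.1 _ h, fun h ↦ h.map (Subring.inclusion hle)⟩

theorem valuation_le_valuation_sum {R Γ ι : Type*} [Ring R] [LinearOrderedCommMonoidWithZero Γ]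
    (v : Valuation R Γ) {s : Finset ι} {x : ι → R} (hinj : Set.InjOn (fun i ↦ v (x i)) s) {i : ι}
    (hi : i ∈ s) : v (x i) ≤ v (∑ j ∈ s, x j) := by
  classical
  obtain ⟨j, hj, hmax⟩ := s.exists_max_image (fun i ↦ v (x i)) ⟨i, hi⟩
  rw [v.map_sum_eq_of_lt hj]
  · exact hmax i hi
  · intro k hk
    obtain ⟨hks, hkj⟩ := Finset.mem_sdiff.1 hk
    exact (hmax k hks).lt_of_ne fun h ↦ hkj (Finset.mem_singleton.2 (hinj hks hj h))

theorem IsBiradicalExtension.not_dvd_left {S L K : Type*} [CommRing S] [IsDomain S]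
    [IsNoetherianRing S] [IsIntegrallyClosed S] [Field L] [Algebra S L] [IsFractionRing S L]
    [Field K] [Algebra L K] [Algebra S K] [IsScalarTower S L K] {p : ℕ}
    {f g h₁ a : S} {ω μ : K} [IsIntegrallyClosed (Algebra.adjoin S {ω})]
    (hB : IsBiradicalExtension L p f g ω μ) (hp : p.Prime) (hp3 : 3 ≤ p) (hpS : Prime (p : S))
    (hf : f = h₁ ^ p + a * p) (hA1 : SatisfiesA1 f g)
    (hfg : ∃ x y : S, f * g = x ^ p + y * (p : S) ^ 2) : ¬ (p : S) ∣ h₁ := by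
  have ha := hB.not_dvd_of_eq_pow_add hp hp3 hpS.not_isUnit hf
  have hf0 : f ≠ 0 := fun h0 ↦
    ha ((sq_dvd_pow_add_iff hpS hp.two_le).1 (hf ▸ h0 ▸ dvd_zero _)).2
  exact not_dvd_of_mul_eq_pow_add hp.two_le hpS hf ha (hA1.not_dvd_right hf0 hpS.not_isUnit) hfg

section Homogeneous

open Polynomial

theorem exists_eq_pow_of_pow_succ_eq_pow {G : Type*} [CommGroupWithZero G] {x y : G} {n : ℕ}
    (hx : x ≠ 0) (h : x ^ (n + 1) = y ^ n) : ∃ z, x = z ^ n ∧ y = z ^ (n + 1) := by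
  have hz : (y / x) ^ n = x := by
    rw [div_pow, ← h, pow_succ', mul_div_cancel_right₀ _ (pow_ne_zero n hx)]
  exact ⟨y / x, hz.symm, by rw [pow_succ, hz, mul_div_cancel₀ _ hx]⟩

theorem dvd_of_valuation_sum_le {S K Γ : Type*} [CommRing S] [CommRing K] [Algebra S K]
    [LinearOrderedCommGroupWithZero Γ] (v : Valuation K Γ) {q : S} {ϖ x : K} {δ : Γ} {m : ℕ}
    (hδ : 0 < δ) (hδ1 : δ < 1) (hq : v (algebraMap S K q) = δ ^ (m * (m + 1))) (hϖ : v ϖ = δ ^ m)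
    (hx : v x = δ) (hle : ∀ s, v (algebraMap S K s) ≤ 1)
    (hunit : ∀ s, ¬ q ∣ s → v (algebraMap S K s) = 1) {I : Finset (ℕ × ℕ)} {c : ℕ × ℕ → S}
    (hI : ∀ i ∈ I, i.1 ≤ m) (hc : ∀ i ∈ I, ¬ q ∣ c i → i.2 ≤ i.1)
    (hsum : v (∑ i ∈ I, algebraMap S K (c i) * (ϖ ^ i.1 * x ^ i.2)) ≤ v (algebraMap S K q))
    {i : ℕ × ℕ} (hi : i ∈ I) (him : i.2 < m) : q ∣ c i := by
  classical
  by_contra hndvd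
  have hpow {a b : ℕ} : δ ^ a ≤ δ ^ b ↔ b ≤ a := pow_le_pow_iff_right_of_lt_one₀ hδ hδ1
  let T (i : ℕ × ℕ) : K := algebraMap S K (c i) * (ϖ ^ i.1 * x ^ i.2)
  have hvT (i : ℕ × ℕ) : v (T i) = v (algebraMap S K (c i)) * δ ^ (m * i.1 + i.2) := by
    simp only [T, map_mul, map_pow, hϖ, hx, ← pow_mul, pow_add]
  let J := I.filter fun i ↦ ¬ q ∣ c i ∧ i.2 < m
  have hvJ {i : ℕ × ℕ} (hi : i ∈ J) : v (T i) = δ ^ (m * i.1 + i.2) := by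
    rw [hvT, hunit _ (Finset.mem_filter.1 hi).2.1, one_mul]
  have hJ : v (∑ i ∈ J, T i) ≤ δ ^ (m * (m + 1)) := by
    rw [← hq, ← add_sub_cancel_right (∑ i ∈ J, T i), Finset.sum_filter_add_sum_filter_not]
    refine v.map_sub_le hsum (v.map_sum_le fun i hi ↦ ?_)
    rw [hvT, hq]
    rcases em (q ∣ c i) with ⟨u, hu⟩ | hqi
    · rw [hu, map_mul, map_mul, hq, mul_assoc]
      exact mul_le_of_le_one_right' (mul_le_one' (hle u) (pow_le_one₀ hδ.le hδ1.le))
    · have him : m ≤ i.2 ∧ i.2 ≤ i.1 := by grind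
      exact mul_le_of_le_one_left' (hle _) |>.trans (hpow.2 (by nlinarith))
  have hinj : Set.InjOn (fun i ↦ v (T i)) J := by
    intro i hi j hj hij
    have he : m * i.1 + i.2 = m * j.1 + j.2 :=
      pow_right_injective₀ hδ hδ1.ne ((hvJ hi).symm.trans (hij.trans (hvJ hj)))
    have hi2 := (Finset.mem_filter.1 hi).2.2
    have h2 : i.2 = j.2 := by
      simpa [Nat.mod_eq_of_lt hi2, Nat.mod_eq_of_lt (Finset.mem_filter.1 hj).2.2] using
        congrArg (· % m) he
    exact Prod.ext (Nat.eq_of_mul_eq_mul_left hi2.pos (by omega)) h2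
  have hiJ : i ∈ J := Finset.mem_filter.2 ⟨hi, hndvd, him⟩
  have hlt := (valuation_le_valuation_sum v hinj hiJ).trans hJ
  rw [hvJ hiJ, hpow] at hlt
  nlinarith [hI i hi]

theorem dvd_coeff_of_valuation_sum_le {S K Γ : Type*} [CommRing S] [CommRing K] [Algebra S K]
    [LinearOrderedCommGroupWithZero Γ] (v : Valuation K Γ) {q : S} {ϖ x : K} {δ : Γ} {m : ℕ}
    (hδ : 0 < δ) (hδ1 : δ < 1) (hq : v (algebraMap S K q) = δ ^ (m * (m + 1))) (hϖ : v ϖ = δ ^ m)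
    (hx : v x = δ) (hle : ∀ s, v (algebraMap S K s) ≤ 1)
    (hunit : ∀ s, ¬ q ∣ s → v (algebraMap S K s) = 1) {Q : ℕ → S[X]}
    (hQ : ∀ n ≤ m, (Q n).natDegree ≤ n)
    (hsum : v (∑ n ∈ Finset.range (m + 1), ϖ ^ n * aeval x (Q n)) ≤ v (algebraMap S K q))
    {n l : ℕ} (hn : n ≤ m) (hnl : n < m ∨ l < m) : q ∣ (Q n).coeff l := by
  by_contra hndvd
  have hcoeff {n l : ℕ} (hn : n ≤ m) (h : ¬ q ∣ (Q n).coeff l) : l ≤ n :=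
    (le_natDegree_of_ne_zero fun h0 ↦ h (h0 ▸ dvd_zero q)).trans (hQ n hn)
  have hln := hcoeff hn hndvd
  let I := Finset.range (m + 1) ×ˢ Finset.range (m + 1)
  have hI {i : ℕ × ℕ} : i ∈ I ↔ i.1 ≤ m ∧ i.2 ≤ m := by
    simp only [I, Finset.mem_product, Finset.mem_range_succ_iff]
  have hexpand : ∑ n ∈ Finset.range (m + 1), ϖ ^ n * aeval x (Q n) =
      ∑ i ∈ I, algebraMap S K ((Q i.1).coeff i.2) * (ϖ ^ i.1 * x ^ i.2) := by
    rw [Finset.sum_product]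
    refine Finset.sum_congr rfl fun n hn ↦ ?_
    have hn' := hQ n (Finset.mem_range_succ_iff.1 hn)
    rw [aeval_eq_sum_range' (n := m + 1) (by grind), Finset.mul_sum]
    simp only [Algebra.smul_def, mul_left_comm]
  exact hndvd <| dvd_of_valuation_sum_le v hδ hδ1 hq hϖ hx hle hunit
    (c := fun i ↦ (Q i.1).coeff i.2) (fun i hi ↦ (hI.1 hi).1)
    (fun i hi ↦ hcoeff (hI.1 hi).1) (hexpand ▸ hsum) (i := (n, l))
    (hI.2 ⟨hn, hln.trans hn⟩) (by lia)

theorem exists_comp_eq_C_mul {S : Type*} [CommRing S] {G : S[X]} {n : ℕ} (hG : G.natDegree ≤ n)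
    (k e : S) : ∃ Q : S[X], Q.natDegree ≤ n ∧ Q.comp (C k * X + C e) = C (k ^ n) * G := by
  refine ⟨∑ j ∈ Finset.range (n + 1), C (G.coeff j * k ^ (n - j)) * (X - C e) ^ j, ?_, ?_⟩
  · refine natDegree_sum_le_of_forall_le _ _ fun j hj ↦ ?_
    refine (natDegree_C_mul_le _ _).trans (natDegree_pow_le.trans ?_)
    have := natDegree_X_sub_C_le e
    nlinarith [Finset.mem_range.1 hj]
  · conv_rhs => rw [G.as_sum_range_C_mul_X_pow' (Nat.lt_succ_of_le hG), Finset.mul_sum]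
    rw [Polynomial.sum_comp]
    refine Finset.sum_congr rfl fun j hj ↦ ?_
    have hk : k ^ n = k ^ (n - j) * k ^ j := by
      rw [← pow_add, Nat.sub_add_cancel (Finset.mem_range_succ_iff.1 hj)]
    simp only [mul_comp, C_comp, pow_comp, sub_comp, X_comp, add_sub_cancel_right, C_mul, hk, C_pow]
    ring

theorem exists_coeff_eq_mul_of_comp_eq {A : Type*} [CommRing A] [IsDomain A] [DecompositionMonoid A]
    {G : A[X]} {m : ℕ} {k e c : A} (hk : k ≠ 0) (hke : IsRelPrime k e)
    (h : C (k ^ m) * G = C c * (C k * X + C e) ^ m) :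
    ∃ d, ∀ j, G.coeff j = d * (m.choose j * k ^ j * e ^ (m - j)) := by
  have hcoeff (j : ℕ) : k ^ m * G.coeff j = c * (m.choose j * k ^ j * e ^ (m - j)) := by
    rw [← coeff_C_mul, h, coeff_C_mul,
      show C k * X + C e = (X + C e).comp (C k * X) by simp, ← pow_comp, comp_C_mul_X_coeff,
      coeff_X_add_C_pow]
    ring
  have hkm : k ^ m ≠ 0 := pow_ne_zero m hk
  have hcm : G.coeff m = c := mul_left_cancel₀ hkm ((hcoeff m).trans (by simp [mul_comm]))
  have hdvd : k ^ m ∣ c := (hke.pow (m := m) (n := m)).dvd_of_dvd_mul_right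
    ⟨G.coeff 0, by simpa using (hcoeff 0).symm⟩
  obtain ⟨d, rfl⟩ := hdvd
  exact ⟨d, fun j ↦ mul_left_cancel₀ hkm ((hcoeff j).trans (by ring))⟩

variable {S K Γ : Type*} [CommRing S] [Field K] [Algebra S K] [LinearOrderedCommGroupWithZero Γ]
  {v : Valuation K Γ} {q k₁ k₂ : S} {W U : K} {δ : Γ} {m : ℕ}

theorem dvd_coeff_of_comp_eq_C_mul (hq : Prime q) (hk₁ : ¬ q ∣ k₁) {Q G : S[X]} {n : ℕ}
    (h : Q.comp (C k₁ * X + C k₂) = C (k₁ ^ n) * G) (hQ : ∀ l, q ∣ Q.coeff l) (l : ℕ) :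
    q ∣ G.coeff l := by
  obtain ⟨Q', rfl⟩ := (C_dvd_iff_dvd_coeff q Q).2 hQ
  rw [mul_comp, C_comp] at h
  rcases (prime_C_iff.2 hq).dvd_or_dvd ⟨_, h.symm⟩ with hk | hG
  · refine absurd (hq.dvd_of_dvd_pow (n := n) ?_) hk₁
    simpa only [coeff_C_zero] using (C_dvd_iff_dvd_coeff q _).1 hk 0
  · exact (C_dvd_iff_dvd_coeff q G).1 hG l

theorem exists_dvd_coeff_sub_of_comp_eq_C_mul (hq : Prime q)
    [DecompositionMonoid (S ⧸ Ideal.span {q})] (hk₁ : ¬ q ∣ k₁)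
    (hk : IsRelPrime (Ideal.Quotient.mk (Ideal.span {q}) k₁) (Ideal.Quotient.mk _ k₂))
    {Q G : S[X]} (h : Q.comp (C k₁ * X + C k₂) = C (k₁ ^ m) * G) (hQm : Q.natDegree ≤ m)
    (hQ : ∀ l < m, q ∣ Q.coeff l) :
    ∃ c, ∀ l, q ∣ G.coeff l - c * (m.choose l * k₁ ^ l * k₂ ^ (m - l)) := by
  have := (Ideal.span_singleton_prime hq.ne_zero).2 hq
  let σ := Ideal.Quotient.mk (Ideal.span {q})
  have hσ (s : S) : σ s = 0 ↔ q ∣ s := Ideal.Quotient.eq_zero_iff_dvd q s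
  have hQσ : Q.map σ = C (σ (Q.coeff m)) * X ^ m := by
    ext l
    rw [coeff_map, coeff_C_mul_X_pow]
    split_ifs with hl
    · rw [hl]
    · rw [hσ]
      rcases lt_or_gt_of_ne hl with hl | hl
      · exact hQ l hl
      · simp [coeff_eq_zero_of_natDegree_lt (hQm.trans_lt hl)]
  have hG : C (σ k₁ ^ m) * G.map σ = C (σ (Q.coeff m)) * (C (σ k₁) * X + C (σ k₂)) ^ m := by
    rw [← X_pow_comp (R := S ⧸ Ideal.span {q}), ← C_mul_comp, ← hQσ]
    simpa [Polynomial.map_comp] using congrArg (Polynomial.map σ) h.symm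
  obtain ⟨c, hc⟩ := exists_coeff_eq_mul_of_comp_eq ((hσ k₁).not.2 hk₁) hk hG
  obtain ⟨c, rfl⟩ := Ideal.Quotient.mk_surjective c
  refine ⟨c, fun l ↦ ?_⟩
  rw [← hσ, map_sub, sub_eq_zero, ← coeff_map, hc]
  simp [σ]

theorem exists_dvd_coeff_sub_of_valuation_sum_le (hq : Prime q)
    [DecompositionMonoid (S ⧸ Ideal.span {q})] (hδ : 0 < δ) (hδ1 : δ < 1)
    (hvq : v (algebraMap S K q) = δ ^ (m * (m + 1))) (hW : v W = δ ^ m)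
    (hU : v (algebraMap S K k₁ * U + algebraMap S K k₂ * W) = δ ^ (m + 1))
    (hle : ∀ s, v (algebraMap S K s) ≤ 1) (hunit : ∀ s, ¬ q ∣ s → v (algebraMap S K s) = 1)
    (hk₁ : ¬ q ∣ k₁)
    (hk : IsRelPrime (Ideal.Quotient.mk (Ideal.span {q}) k₁) (Ideal.Quotient.mk _ k₂))
    {G : ℕ → S[X]} (hG : ∀ n ≤ m, (G n).natDegree ≤ n)
    (hsum : v (∑ n ∈ Finset.range (m + 1), W ^ n * aeval (U / W) (G n)) ≤
      v (algebraMap S K q)) :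
    (∀ n < m, ∀ l, q ∣ (G n).coeff l) ∧
      ∃ c, ∀ l, q ∣ (G m).coeff l - c * (m.choose l * k₁ ^ l * k₂ ^ (m - l)) := by
  choose! Q hQ hQG using fun n hn ↦ exists_comp_eq_C_mul (hG n hn) k₁ k₂
  have hvk₁ := hunit k₁ hk₁
  have hk₁0 : algebraMap S K k₁ ≠ 0 := fun h0 ↦ by simp [h0] at hvk₁
  have hW0 : W ≠ 0 := fun h0 ↦ (pow_pos hδ m).ne (by rw [← hW, h0, map_zero])
  have hdvd {n l : ℕ} (hn : n ≤ m) (hnl : n < m ∨ l < m) : q ∣ (Q n).coeff l := by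
    refine dvd_coeff_of_valuation_sum_le v (ϖ := W / algebraMap S K k₁)
      (x := algebraMap S K k₁ * (U / W) + algebraMap S K k₂) hδ hδ1 hvq ?_ ?_ hle hunit hQ ?_ hn hnl
    · rw [map_div₀, hW, hvk₁, div_one]
    · rw [show algebraMap S K k₁ * (U / W) + algebraMap S K k₂ =
        (algebraMap S K k₁ * U + algebraMap S K k₂ * W) / W by field_simp, map_div₀, hU, hW,
        pow_succ', mul_div_cancel_right₀ _ (pow_pos hδ m).ne']
    · convert hsum using 3 with n hn
      have := congrArg (aeval (U / W)) (hQG n (Finset.mem_range_succ_iff.1 hn))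
      simp only [aeval_comp, map_add, map_mul, aeval_C, aeval_X, map_pow] at this
      rw [this, ← mul_assoc, ← mul_pow, div_mul_cancel₀ _ hk₁0]
  exact ⟨fun n hn ↦ dvd_coeff_of_comp_eq_C_mul hq hk₁ (hQG n hn.le) fun l ↦ hdvd hn.le (.inl hn),
    exists_dvd_coeff_sub_of_comp_eq_C_mul hq hk₁ hk (hQG m le_rfl) (hQ m le_rfl)
      fun l hl ↦ hdvd le_rfl (.inr hl)⟩

/-- The coefficient of `W ^ i * U ^ j` in `(k₁ * U + k₂ * W) ^ m`. -/
def binomialCoeff (m : ℕ) (k₁ k₂ : S) (i j : ℕ) : S :=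
  if i + j = m then m.choose j * k₁ ^ j * k₂ ^ i else 0

theorem exists_dvd_sub_mul_binomialCoeff (hq : Prime q)
    [DecompositionMonoid (S ⧸ Ideal.span {q})] (hδ : 0 < δ) (hδ1 : δ < 1)
    (hvq : v (algebraMap S K q) = δ ^ (m * (m + 1))) (hW : v W = δ ^ m)
    (hU : v (algebraMap S K k₁ * U + algebraMap S K k₂ * W) = δ ^ (m + 1))
    (hle : ∀ s, v (algebraMap S K s) ≤ 1) (hunit : ∀ s, ¬ q ∣ s → v (algebraMap S K s) = 1)
    (hk₁ : ¬ q ∣ k₁)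
    (hk : IsRelPrime (Ideal.Quotient.mk (Ideal.span {q}) k₁) (Ideal.Quotient.mk _ k₂))
    {n : ℕ} {I : Finset (Fin n × Fin n)} (hI : ∀ i ∈ I, (i.1 + i.2 : ℕ) ≤ m) {c : Fin n × Fin n → S}
    (hsum : v (∑ i ∈ I, algebraMap S K (c i) * (W ^ (i.1 : ℕ) * U ^ (i.2 : ℕ))) ≤
      v (algebraMap S K q)) :
    ∃ c', ∀ i ∈ I, q ∣ c i - c' * binomialCoeff m k₁ k₂ i.1 i.2 := by
  have hW0 : W ≠ 0 := fun h0 ↦ (pow_pos hδ m).ne (by rw [← hW, h0, map_zero])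
  let G (n : ℕ) : S[X] := ∑ i ∈ I with (i.1 + i.2 : ℕ) = n, monomial i.2 (c i)
  have hG (n : ℕ) : (G n).natDegree ≤ n := natDegree_sum_le_of_forall_le _ _ fun i hi ↦
    (natDegree_monomial_le _).trans (by grind)
  have hcoeff {i : Fin n × Fin n} (hi : i ∈ I) : (G (i.1 + i.2)).coeff i.2 = c i := by
    rw [finsetSum_coeff, Finset.sum_eq_single_of_mem i (by simpa using hi), coeff_monomial,
      if_pos rfl]
    intro j hj hji
    rw [coeff_monomial, if_neg (by grind)]
  obtain ⟨hlt, c', hc'⟩ := exists_dvd_coeff_sub_of_valuation_sum_le hq hδ hδ1 hvq hW hU hle hunit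
    hk₁ hk (G := G) (fun n _ ↦ hG n) (by
      convert hsum using 2
      rw [← Finset.sum_fiberwise_of_maps_to (t := Finset.range (m + 1))
        (g := fun i ↦ (i.1 + i.2 : ℕ)) (fun i hi ↦ Finset.mem_range_succ_iff.2 (hI i hi))]
      refine Finset.sum_congr rfl fun n _ ↦ ?_
      rw [map_sum, Finset.mul_sum]
      refine Finset.sum_congr rfl fun i hi ↦ ?_
      rw [aeval_monomial, ← (Finset.mem_filter.1 hi).2, div_pow, pow_add]
      field_simp)
  refine ⟨c', fun i hi ↦ ?_⟩
  rw [← hcoeff hi, binomialCoeff]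
  split_ifs with him
  · rw [him, show i.1 = m - i.2 by omega]
    exact hc' i.2
  · simpa using hlt _ (lt_of_le_of_ne (hI i hi) him) i.2

end Homogeneous

section Presentation

/-- An exact sequence `0 → S → (ι → S) → M → 0`, that is, a presentation of `M` by generators `γ i`
which satisfy a single relation `∑ i, ρ i • γ i = 0`. -/
structure IsOneRelatorPresentation {S M ι : Type*} [CommRing S] [AddCommGroup M] [Module S M]
    [Fintype ι] (γ : ι → M) (ρ : ι → S) : Prop where
  surjective : Function.Surjective (Fintype.linearCombination S γ)
  exact : Function.Exact (LinearMap.toSpanSingleton S (ι → S) ρ) (Fintype.linearCombination S γ)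
  ne_zero : ρ ≠ 0

namespace IsOneRelatorPresentation

variable {S M ι : Type*} [CommRing S] [AddCommGroup M] [Module S M] [Fintype ι] {γ : ι → M}
  {ρ : ι → S}

theorem span_range_eq_top (h : IsOneRelatorPresentation γ ρ) :
    Submodule.span S (Set.range γ) = ⊤ := by
  rw [← Fintype.range_linearCombination, LinearMap.range_eq_top]
  exact h.surjective

theorem finite (h : IsOneRelatorPresentation γ ρ) : Module.Finite S M :=
  .of_surjective _ h.surjective

theorem injective [IsDomain S] (h : IsOneRelatorPresentation γ ρ) :
    Function.Injective (LinearMap.toSpanSingleton S (ι → S) ρ) :=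
  smul_left_injective S h.ne_zero

theorem hasFreeResLengthLE1 [IsDomain S] (h : IsOneRelatorPresentation γ ρ) :
    HasFreeResLengthLE1 S M := by
  let E := LinearEquiv.funCongrLeft S S (Fintype.equivFin ι)
  let F := LinearEquiv.funUnique (Fin 1) S S
  refine ⟨1, Fintype.card ι, E.symm ∘ₗ LinearMap.toSpanSingleton S (ι → S) ρ ∘ₗ F,
    Fintype.linearCombination S γ ∘ₗ E, ?_, h.surjective.comp E.surjective, ?_⟩
  · exact E.symm.injective.comp (h.injective.comp F.injective)
  · ext c
    have := h.exact (E c)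
    rw [LinearMap.mem_ker, LinearMap.comp_apply, LinearEquiv.coe_coe, this]
    constructor
    · rintro ⟨x, rfl⟩
      exact ⟨F x, by simp⟩
    · rintro ⟨x, hx⟩
      exact ⟨F.symm x, by simp [hx]⟩

theorem free_iff [IsDomain S] [IsLocalRing S] (h : IsOneRelatorPresentation γ ρ) :
    Module.Free S M ↔ Ideal.span (Set.range ρ) = ⊤ := by
  classical
  have := h.finite
  have hsplit := (h.exact.split_tfae h.injective h.surjective).out 0 1
  have hfree : Module.Free S M ↔ ∃ l, Fintype.linearCombination S γ ∘ₗ l = LinearMap.id :=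
    ⟨fun _ ↦ Module.projective_lifting_property _ _ h.surjective, fun ⟨l, hl⟩ ↦
      have := Module.Projective.of_split l _ hl
      Module.free_of_flat_of_isLocalRing⟩
  rw [hfree, hsplit, Ideal.eq_top_iff_one]
  constructor
  · rintro ⟨l, hl⟩
    have hlρ : l ρ = 1 := by simpa using LinearMap.congr_fun hl 1
    rw [← hlρ, l.pi_apply_eq_sum_univ ρ]
    refine Ideal.sum_mem _ fun i _ ↦ ?_
    exact Ideal.mul_mem_right _ _ (Ideal.subset_span ⟨i, rfl⟩)
  · intro h1
    obtain ⟨c, hc⟩ := Ideal.mem_span_range_iff_exists_fun.1 h1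
    exact ⟨Fintype.linearCombination S c, LinearMap.ext_ring (by
      simpa [Fintype.linearCombination_apply, mul_comm] using hc)⟩

end IsOneRelatorPresentation

section

variable {S M ι : Type*} [CommRing S] [AddCommGroup M] [Module S M] [Fintype ι]
  {w e : ι → M} {r : ι → S} {π : S} {t : M} {low : ι → Prop}

theorem exists_sum_filter_eq_smul_of_smul_eq_sum [DecidablePred low]
    (hhigh : ∀ i, ¬ low i → w i = π • e i) {c : ι → S} {z : M} (hz : π • z = ∑ i, c i • w i) :
    ∃ y, ∑ i with low i, c i • w i = π • y := by
  refine ⟨z - ∑ i with ¬ low i, c i • e i, ?_⟩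
  rw [smul_sub, hz, ← Finset.sum_filter_add_sum_filter_not Finset.univ low, Finset.smul_sum,
    add_sub_assoc, left_eq_add, sub_eq_zero]
  refine Finset.sum_congr rfl fun i hi ↦ ?_
  rw [hhigh i (Finset.mem_filter.1 hi).2, smul_comm]

theorem exists_eq_smul_add_sum_smul_of_smul_eq_sum [IsDomain S] [Module.IsTorsionFree S M]
    (hπ : π ≠ 0) (hlow : ∀ i, low i → w i = e i) (hhigh : ∀ i, ¬ low i → w i = π • e i)
    (hr : ∀ i, ¬ low i → r i = 0) (ht : π • t = ∑ i, r i • w i) {c : ι → S} {c' : S}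
    (hc : ∀ i, low i → π ∣ c i - c' * r i) {z : M} (hz : π • z = ∑ i, c i • w i) :
    ∃ b : ι → S, z = c' • t + ∑ i, b i • e i := by
  have hcoord (i : ι) : ∃ b : S, (c i - c' * r i) • w i = π • b • e i := by
    by_cases hi : low i
    · obtain ⟨b, hb⟩ := hc i hi
      exact ⟨b, by rw [hb, hlow i hi, mul_smul]⟩
    · exact ⟨c i, by rw [hr i hi, hhigh i hi, mul_zero, sub_zero, smul_comm]⟩
  choose b hb using hcoord
  refine ⟨b, smul_right_injective M hπ ?_⟩
  change π • z = π • (c' • t + ∑ i, b i • e i)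
  rw [smul_add, smul_comm π, ht, Finset.smul_sum, Finset.smul_sum, ← Finset.sum_add_distrib, hz]
  refine Finset.sum_congr rfl fun i _ ↦ ?_
  rw [← hb, sub_smul, mul_smul, add_sub_cancel]

theorem exists_eq_mul_of_smul_add_sum_smul_eq_zero [IsDomain S]
    (hw : LinearIndependent S w) (hπ : Prime π) (hlow : ∀ i, low i → w i = e i)
    (hhigh : ∀ i, ¬ low i → w i = π • e i) (hr : ∀ i, ¬ low i → r i = 0)
    (ht : π • t = ∑ i, r i • w i) (hne : ∃ i, ¬ π ∣ r i) {x : S} {y : ι → S}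
    (hxy : x • t + ∑ i, y i • e i = 0) : ∃ s, x = s * π ∧ ∀ i, y i = -(s * r i) := by
  classical
  have hcoord (i : ι) : x * r i + (if low i then π * y i else y i) = 0 := by
    refine Fintype.linearIndependent_iff.1 hw
      (fun i ↦ x * r i + if low i then π * y i else y i) ?_ i
    rw [← smul_zero π, ← hxy, smul_add, smul_comm π, ht, Finset.smul_sum, Finset.smul_sum,
      ← Finset.sum_add_distrib]
    refine Finset.sum_congr rfl fun i _ ↦ ?_
    by_cases hi : low i
    · simp only [hi, if_true, add_smul, mul_smul, hlow i hi]
    · simp only [hi, if_false, add_smul, mul_smul, hhigh i hi, smul_comm π]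
  obtain ⟨j, hj⟩ := hne
  have hlj : low j := by_contra fun hlj ↦ hj (hr j hlj ▸ dvd_zero π)
  obtain ⟨s, rfl⟩ : π ∣ x := by
    have hj0 := hcoord j
    rw [if_pos hlj] at hj0
    exact (hπ.dvd_or_dvd ⟨-y j, by linear_combination hj0⟩).resolve_right hj
  refine ⟨s, mul_comm _ _, fun i ↦ ?_⟩
  have hi0 := hcoord i
  by_cases hi : low i
  · rw [if_pos hi] at hi0
    exact mul_left_cancel₀ hπ.ne_zero (by linear_combination hi0)
  · simpa [hi, hr i hi] using hi0

theorem isOneRelatorPresentation_of_linearIndependent [IsDomain S] [Module.IsTorsionFree S M]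
    (hw : LinearIndependent S w) (hπ : Prime π) (hlow : ∀ i, low i → w i = e i)
    (hhigh : ∀ i, ¬ low i → w i = π • e i) (hr : ∀ i, ¬ low i → r i = 0)
    (ht : π • t = ∑ i, r i • w i) (hne : ∃ i, ¬ π ∣ r i)
    (hspan : ∀ z : M, π • z ∈ Submodule.span S (Set.range w))
    (hdvd : ∀ (c : ι → S) (z : M), π • z = ∑ i, c i • w i →
      ∃ c', ∀ i, low i → π ∣ c i - c' * r i) :
    IsOneRelatorPresentation (fun o : Option ι ↦ o.elim t e)
      (fun o : Option ι ↦ o.elim π (-r)) where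
  surjective z := by
    obtain ⟨c, hc⟩ := (Submodule.mem_span_range_iff_exists_fun S).1 (hspan z)
    obtain ⟨c', hc'⟩ := hdvd c z hc.symm
    obtain ⟨b, rfl⟩ :=
      exists_eq_smul_add_sum_smul_of_smul_eq_sum hπ.ne_zero hlow hhigh hr ht hc' hc.symm
    exact ⟨fun o ↦ o.elim c' b, by simp [Fintype.linearCombination_apply]⟩
  exact := by
    have hrel : π • t + ∑ i, (-r i) • e i = 0 := by
      rw [ht, ← Finset.sum_add_distrib]
      refine Finset.sum_eq_zero fun i _ ↦ ?_
      by_cases hi : low i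
      · rw [hlow i hi, neg_smul, add_neg_cancel]
      · rw [hr i hi, neg_zero, zero_smul, zero_smul, add_zero]
    intro c
    rw [Fintype.linearCombination_apply, Fintype.sum_option]
    constructor
    · intro hc
      obtain ⟨s, hs, hsr⟩ :=
        exists_eq_mul_of_smul_add_sum_smul_eq_zero hw hπ hlow hhigh hr ht hne hc
      exact ⟨s, funext fun o ↦ by cases o <;> simp [hs, hsr]⟩
    · rintro ⟨s, rfl⟩
      rw [← smul_zero s, ← hrel]
      simp [Finset.smul_sum, mul_smul]
  ne_zero h := hπ.ne_zero (congrFun h none)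

end

theorem IsOneRelatorPresentation.exists_finset_span_eq {S A ι : Type*} [CommRing S] [CommRing A]
    [Algebra S A] [Fintype ι] {B : Subalgebra S A} {γ : ι → B} {ρ : ι → S}
    (h : IsOneRelatorPresentation γ ρ) : ∃ T : Finset A, T.card ≤ Fintype.card ι ∧
      Submodule.span S (T : Set A) = Subalgebra.toSubmodule B := by
  classical
  refine ⟨Finset.univ.image fun i ↦ (γ i : A), Finset.card_image_le, ?_⟩
  have himage : ((Finset.univ.image fun i ↦ (γ i : A) : Finset A) : Set A) =
      B.val.toLinearMap '' Set.range γ := by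
    rw [Finset.coe_image, Finset.coe_univ, Set.image_univ, ← Set.range_comp]
    rfl
  rw [himage, Submodule.span_image, h.span_range_eq_top, Submodule.map_top]
  exact B.toSubmodule.range_subtype

end Presentation

theorem exists_valuationSubring_eq_pow {K : Type*} [Field K] (A : Subring K) (M : Ideal A)
    [M.IsPrime] {n : ℕ} {q x y t u : A} (hq : q ∈ M) (hq0 : q ≠ 0) (ht : t ∉ M) (hu : u ∉ M)
    (hx : x ^ (n + 1) = q * u) (hy : q * t = y ^ n) :
    ∃ (V : ValuationSubring K) (δ : V.ValueGroup), A ≤ V.toSubring ∧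
      (∀ z : A, V.valuation z < 1 ↔ z ∈ M) ∧ 0 < δ ∧ δ < 1 ∧
      V.valuation q = δ ^ (n * (n + 1)) ∧ V.valuation x = δ ^ n ∧ V.valuation y = δ ^ (n + 1) := by
  obtain ⟨V, hle, hV⟩ := exists_valuationSubring_of_isPrime A M
  have hunit {z : A} (hz : z ∉ M) : V.valuation z = 1 :=
    ((V.valuation_le_one_iff _).2 (hle z.2)).eq_of_not_lt ((hV z).not.2 hz)
  have hvx : V.valuation x ^ (n + 1) = V.valuation q := by
    rw [← map_pow, ← Subring.coe_pow, hx, Subring.coe_mul, map_mul, hunit hu, mul_one]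
  have hvy : V.valuation y ^ n = V.valuation q := by
    rw [← map_pow, ← Subring.coe_pow, ← hy, Subring.coe_mul, map_mul, hunit ht, mul_one]
  have hvq0 : V.valuation q ≠ 0 := V.valuation.ne_zero_iff.2 (by simpa using hq0)
  have hvx0 : V.valuation x ≠ 0 := fun h0 ↦ hvq0 (by rw [← hvx, h0, zero_pow n.succ_ne_zero])
  obtain ⟨δ, hxδ, hyδ⟩ := exists_eq_pow_of_pow_succ_eq_pow hvx0 (hvx.trans hvy.symm)
  have hqδ : V.valuation q = δ ^ (n * (n + 1)) := by rw [← hvx, hxδ, pow_mul]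
  refine ⟨V, δ, hle, hV, zero_lt_iff.2 fun h0 ↦ ?_, lt_of_not_ge fun h1 ↦ ?_, hqδ, hxδ, hyδ⟩
  · rcases eq_or_ne n 0 with rfl | hn
    · exact ((hV q).2 hq).ne (by rw [hqδ, zero_mul, pow_zero])
    · exact hvx0 (by rw [hxδ, h0, zero_pow hn])
  · exact ((hV q).2 hq).not_ge (hqδ ▸ one_le_pow₀ h1)

theorem add_pow_eq_sum_binomialCoeff_smul {S R : Type*} [CommRing S] [CommRing R] [Algebra S R]
    (k₁ k₂ : S) (U W : R) {m n : ℕ} (hmn : m < n) :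
    (algebraMap S R k₁ * U + algebraMap S R k₂ * W) ^ m =
      ∑ i : Fin n × Fin n, binomialCoeff m k₁ k₂ i.1 i.2 • (W ^ (i.1 : ℕ) * U ^ (i.2 : ℕ)) := by
  have hsum := Finset.sum_product' (Finset.range n) (Finset.range n) fun i j ↦
    binomialCoeff m k₁ k₂ i j • (W ^ i * U ^ j)
  have hfilter : Finset.HasAntidiagonal.antidiagonal m =
      {i ∈ Finset.range n ×ˢ Finset.range n | i.1 + i.2 = m} := by
    ext i
    simp only [Finset.HasAntidiagonal.mem_antidiagonal, Finset.mem_filter, Finset.mem_product,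
      Finset.mem_range]
    lia
  rw [Fintype.sum_prod_type]
  simp only [Finset.sum_range] at hsum ⊢
  rw [← hsum, add_comm, (Commute.all _ _).add_pow', hfilter, Finset.sum_filter]
  refine Finset.sum_congr rfl fun i _ ↦ ?_
  unfold binomialCoeff
  split_ifs with hi
  · rw [nsmul_eq_mul, Algebra.smul_def, ← hi, Nat.choose_symm_add]
    simp only [map_mul, map_pow, map_natCast]
    ring
  · rw [zero_smul]

theorem exists_eq_smul_of_dvd_pow {S R : Type*} [CommRing S] [CommRing R]
    [IsDomain R] [IsIntegrallyClosed R] [Algebra S R] {n : ℕ} {q : S} (hn : n ≠ 0) {W U : R}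
    (hW : algebraMap S R q ∣ W ^ n) (hU : algebraMap S R q ∣ U ^ n) :
    ∃ e : Fin n × Fin n → R,
      (∀ i, (i.1 + i.2 : ℕ) ≤ n - 1 → W ^ (i.1 : ℕ) * U ^ (i.2 : ℕ) = e i) ∧
      ∀ i, ¬ (i.1 + i.2 : ℕ) ≤ n - 1 → W ^ (i.1 : ℕ) * U ^ (i.2 : ℕ) = q • e i := by
  have h (i : Fin n × Fin n) : ∃ x,
      ((i.1 + i.2 : ℕ) ≤ n - 1 → W ^ (i.1 : ℕ) * U ^ (i.2 : ℕ) = x) ∧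
      (¬ (i.1 + i.2 : ℕ) ≤ n - 1 → W ^ (i.1 : ℕ) * U ^ (i.2 : ℕ) = q • x) := by
    by_cases hi : (i.1 + i.2 : ℕ) ≤ n - 1
    · exact ⟨_, fun _ ↦ rfl, absurd hi⟩
    · have hdvd := dvd_mul_of_dvd_pow (i := i.1) (j := i.2) (k := 0) hn hW hU hU (by lia)
      simpa [hi, dvd_def, Algebra.smul_def] using hdvd
  choose e hlow hhigh using h
  exact ⟨e, hlow, hhigh⟩

section ReducedForm

/-- A normal form of two elements `f` and `g` which are `p`-th powers modulo `p`: here `d` stands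
for a greatest common divisor modulo `p` of the two `p`-th roots. -/
structure IsReducedForm {S : Type*} [CommRing S] (p : ℕ) (f g d k₁ k₂ a b : S) : Prop where
  left_eq : f = (d * k₁) ^ p + a * p
  right_eq : g = (d * k₂) ^ p + b * p
  not_dvd_left : ¬ (p : S) ∣ d * k₁
  not_dvd_right : ¬ (p : S) ∣ d * k₂
  isRelPrime : IsRelPrime (Ideal.Quotient.mk (Ideal.span {(p : S)}) k₁) (Ideal.Quotient.mk _ k₂)

theorem exists_coe_add_eq_and_pow_eq {S K : Type*} [CommRing S] [Field K] [Algebra S K] {p : ℕ}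
    (hp : p.Prime) (hp3 : 3 ≤ p) {f h a : S} (hf : f = h ^ p + a * p) {ω : K}
    (hω : ω ^ p = algebraMap S K f) :
    ∃ W e : integralClosure S K, W + algebraMap S K h = ω ∧
      W ^ p = p * (algebraMap S _ a - algebraMap S _ h ^ (p - 1) * W + W ^ 2 * e) := by
  have hωi : IsIntegral S ω := .of_pow hp.pos (hω ▸ isIntegral_algebraMap)
  have hV : ((⟨ω, hωi⟩ - algebraMap S (integralClosure S K) h) + algebraMap S _ h) ^ p =
      algebraMap S _ h ^ p + algebraMap S _ a * p := by
    rw [sub_add_cancel]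
    refine Subtype.ext (hω.trans ?_)
    rw [hf]
    simp
  obtain ⟨e, he⟩ := exists_pow_eq_of_add_pow_eq hp hp3 hV
  exact ⟨_, e, sub_add_cancel _ _, he⟩

theorem exists_isReducedForm {S : Type*} [CommRing S] {p : ℕ}
    [UniqueFactorizationMonoid (S ⧸ Ideal.span {(p : S)})]
    {f g h₁ h₂ a b : S} (hf : f = h₁ ^ p + a * p) (hg : g = h₂ ^ p + b * p)
    (h₁p : ¬ (p : S) ∣ h₁) (h₂p : ¬ (p : S) ∣ h₂) :
    ∃ d k₁ k₂ a' b' : S, IsReducedForm p f g d k₁ k₂ a' b' := by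
  let π := Ideal.Quotient.mk (Ideal.span {(p : S)})
  obtain ⟨x, y, z, hxy, hx, hy⟩ := UniqueFactorizationMonoid.exists_reduced_factors (π h₁)
    (mt (Ideal.Quotient.eq_zero_iff_dvd _ _).1 h₁p) (π h₂)
  obtain ⟨k₁, rfl⟩ := Ideal.Quotient.mk_surjective x
  obtain ⟨k₂, rfl⟩ := Ideal.Quotient.mk_surjective y
  obtain ⟨d, rfl⟩ := Ideal.Quotient.mk_surjective z
  rw [← map_mul, Ideal.Quotient.mk_eq_mk_iff_sub_mem, Ideal.mem_span_singleton,
    dvd_sub_comm] at hx hy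
  obtain ⟨s, hs⟩ := hx.trans (sub_dvd_pow_sub_pow h₁ (d * k₁) p)
  obtain ⟨t, ht⟩ := hy.trans (sub_dvd_pow_sub_pow h₂ (d * k₂) p)
  refine ⟨d, k₁, k₂, a + s, b + t, ?_, ?_, ?_, ?_, hxy⟩
  · linear_combination hf + hs
  · linear_combination hg + ht
  · rwa [← dvd_iff_dvd_of_dvd_sub hx]
  · rwa [← dvd_iff_dvd_of_dvd_sub hy]

namespace IsReducedForm

variable {S L K : Type*} [CommRing S] [IsDomain S] [Field L] [CharZero L] [Algebra S L]
  [Field K] [Algebra L K] [Algebra S K] [IsScalarTower S L K] {p : ℕ}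
  {f g d k₁ k₂ a b : S} {ω μ : K}

theorem dvd_add (hN : IsReducedForm p f g d k₁ k₂ a b) (hp : p.Prime) (hpS : Prime (p : S))
    (hfg : ∃ x y : S, f * g = x ^ p + y * (p : S) ^ 2) : (p : S) ∣ k₁ ^ p * b + k₂ ^ p * a := by
  have hdvd := dvd_cross_of_mul_eq_pow_add hp hpS hN.left_eq hN.right_eq hfg
  rw [mul_pow, mul_pow, mul_assoc, mul_assoc, ← mul_add] at hdvd
  exact (hpS.dvd_or_dvd hdvd).resolve_left fun h ↦
    hN.not_dvd_left ((hpS.dvd_of_dvd_pow h).mul_right _)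

theorem exists_valuationSubring [FaithfulSMul S L] [IsIntegrallyClosed (Algebra.adjoin S {ω})]
    (hN : IsReducedForm p f g d k₁ k₂ a b) (hB : IsBiradicalExtension L p f g ω μ) (hp : p.Prime)
    (hp3 : 3 ≤ p) (hpS : Prime (p : S)) {W U e t : integralClosure S K}
    (hW : W + algebraMap S K (d * k₁) = ω) (hU : U + algebraMap S K (d * k₂) = μ)
    (hWp : W ^ p = p * (algebraMap S _ a - algebraMap S _ (d * k₁) ^ (p - 1) * W + W ^ 2 * e))
    (ht : p * t = (algebraMap S _ k₁ * U + algebraMap S _ k₂ * W) ^ (p - 1)) :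
    ∃ (V : ValuationSubring K) (δ : V.ValueGroup),
      (∀ z : integralClosure S K, V.valuation z ≤ 1) ∧
      (∀ s : S, ¬ (p : S) ∣ s → V.valuation (algebraMap S K s) = 1) ∧ 0 < δ ∧ δ < 1 ∧
      V.valuation (p : K) = δ ^ ((p - 1) * (p - 1 + 1)) ∧ V.valuation (W : K) = δ ^ (p - 1) ∧
      V.valuation (algebraMap S K k₁ * U + algebraMap S K k₂ * W) = δ ^ (p - 1 + 1) := by
  have ha := hB.not_dvd_of_eq_pow_add hp hp3 hpS.not_isUnit hN.left_eq
  have hk₁ (h : (p : S) ∣ k₁) : False := hN.not_dvd_left (h.mul_left d)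
  obtain ⟨M, hM, hMp, htM⟩ := exists_isPrime_comap_eq_span_of_notMem_radical hpS fun s hs ↦
    hB.algebraMap_mul_notMem_radical hp hpS hs hk₁ hN.not_dvd_right hW hU ⟨_, hWp⟩ ht
  have hmem (s : S) : algebraMap S (integralClosure S K) s ∈ M ↔ (p : S) ∣ s := by
    rw [← Ideal.mem_comap, hMp, Ideal.mem_span_singleton]
  have hpM : (p : integralClosure S K) ∈ M := by simpa using (hmem p).2 dvd_rfl
  have hWM : W ∈ M := hM.mem_of_pow_mem p (hWp ▸ M.mul_mem_right _ hpM)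
  have huM : algebraMap S _ a - algebraMap S _ (d * k₁) ^ (p - 1) * W + W ^ 2 * e ∉ M := by
    intro hu
    rw [sq, mul_assoc, M.add_mem_iff_left (M.mul_mem_right _ hWM),
      M.sub_mem_iff_left (M.mul_mem_left _ hWM)] at hu
    exact ha ((hmem a).1 hu)
  have hp0 : (p : integralClosure S K) ≠ 0 := by
    have : CharZero K := charZero_of_injective_algebraMap (algebraMap L K).injective
    exact fun h0 ↦ hp.ne_zero (by simpa using congrArg Subtype.val h0)
  obtain ⟨V, δ, hle, hlt, hδ⟩ := exists_valuationSubring_eq_pow (integralClosure S K).toSubring M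
    (x := W) hpM hp0 htM huM (by rwa [Nat.sub_add_cancel hp.one_le]) ht
  have hle1 (z : integralClosure S K) : V.valuation z ≤ 1 :=
    (V.valuation_le_one_iff _).2 (hle z.2)
  refine ⟨V, δ, hle1, fun s hs ↦ ?_, hδ⟩
  exact (hle1 (algebraMap S _ s)).eq_of_not_lt ((hlt _).not.2 ((hmem s).not.2 hs))

theorem exists_dvd_sub_mul_binomialCoeff [FaithfulSMul S L]
    [IsIntegrallyClosed (Algebra.adjoin S {ω})]
    [DecompositionMonoid (S ⧸ Ideal.span {(p : S)})]
    (hN : IsReducedForm p f g d k₁ k₂ a b) (hB : IsBiradicalExtension L p f g ω μ) (hp : p.Prime)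
    (hp3 : 3 ≤ p) (hpS : Prime (p : S)) {W U e t : integralClosure S K}
    (hW : W + algebraMap S K (d * k₁) = ω) (hU : U + algebraMap S K (d * k₂) = μ)
    (hWp : W ^ p = p * (algebraMap S _ a - algebraMap S _ (d * k₁) ^ (p - 1) * W + W ^ 2 * e))
    (ht : p * t = (algebraMap S _ k₁ * U + algebraMap S _ k₂ * W) ^ (p - 1))
    {I : Finset (Fin p × Fin p)} (hI : ∀ i ∈ I, (i.1 + i.2 : ℕ) ≤ p - 1) {c : Fin p × Fin p → S}
    (hdvd : (p : integralClosure S K) ∣ ∑ i ∈ I, c i • (W ^ (i.1 : ℕ) * U ^ (i.2 : ℕ))) :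
    ∃ c', ∀ i ∈ I, (p : S) ∣ c i - c' * binomialCoeff (p - 1) k₁ k₂ i.1 i.2 := by
  obtain ⟨V, δ, hle, hunit, hδ, hδ1, hvp, hvW, hvY⟩ :=
    hN.exists_valuationSubring hB hp hp3 hpS hW hU hWp ht
  obtain ⟨y, hy⟩ := hdvd
  rw [← map_natCast (algebraMap S K)] at hvp
  refine _root_.exists_dvd_sub_mul_binomialCoeff hpS hδ hδ1 hvp hvW hvY
    (fun s ↦ hle (algebraMap S _ s)) hunit (fun h ↦ hN.not_dvd_left (h.mul_left d)) hN.isRelPrime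
    hI ?_
  have hsum : ∑ i ∈ I, algebraMap S K (c i) * ((W : K) ^ (i.1 : ℕ) * (U : K) ^ (i.2 : ℕ)) =
      algebraMap S K p * y := by
    simpa [Algebra.smul_def] using congrArg (integralClosure S K).val hy
  rw [hsum, map_mul]
  exact mul_le_of_le_one_right' (hle y)

theorem exists_isOneRelatorPresentation [IsNoetherianRing S] [IsIntegrallyClosed S]
    [IsFractionRing S L] [IsIntegrallyClosed (Algebra.adjoin S {ω})]
    [IsIntegrallyClosed (Algebra.adjoin S {μ})] [DecompositionMonoid (S ⧸ Ideal.span {(p : S)})]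
    (hN : IsReducedForm p f g d k₁ k₂ a b) (hB : IsBiradicalExtension L p f g ω μ) (hp : p.Prime)
    (hp3 : 3 ≤ p) (hpS : Prime (p : S)) (hA1 : SatisfiesA1 f g)
    (hfg : ∃ x y : S, f * g = x ^ p + y * (p : S) ^ 2) :
    ∃ γ : Option (Fin p × Fin p) → integralClosure S K, IsOneRelatorPresentation γ
      fun o ↦ o.elim (p : S) fun i ↦ -binomialCoeff (p - 1) k₁ k₂ i.1 i.2 := by
  have : NeZero p := ⟨hp.ne_zero⟩
  have hf0 : f ≠ 0 := fun h0 ↦ hN.not_dvd_left <| hpS.dvd_of_dvd_pow (n := p) ⟨-a, by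
    linear_combination h0 - hN.left_eq⟩
  have := hB.finiteDimensional
  have : IsIntegrallyClosed (integralClosure S K) :=
    integralClosure.isIntegrallyClosedOfFiniteExtension L
  have : Module.IsTorsionFree S K := .trans_faithfulSMul S L K
  obtain ⟨W, e₁, hW, hWp⟩ := exists_coe_add_eq_and_pow_eq hp hp3 hN.left_eq hB.pow_left
  obtain ⟨U, e₂, hU, hUp⟩ := exists_coe_add_eq_and_pow_eq hp hp3 hN.right_eq hB.pow_right
  obtain ⟨t, ht⟩ : (p : integralClosure S K) ∣
      (algebraMap S _ k₁ * U + algebraMap S _ k₂ * W) ^ (p - 1) := by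
    refine dvd_add_pow_sub_one hp (d := algebraMap S _ d) (by simpa using hWp)
      (by simpa using hUp) ?_
    simpa using map_dvd (algebraMap S (integralClosure S K)) (hN.dvd_add hp hpS hfg)
  obtain ⟨e, hlow, hhigh⟩ := exists_eq_smul_of_dvd_pow (q := (p : S)) hp.ne_zero
    (W := W) (U := U) ⟨_, by simpa using hWp⟩ ⟨_, by simpa using hUp⟩
  refine ⟨_, isOneRelatorPresentation_of_linearIndependent (e := e) (t := t) ?_ hpS hlow hhigh
    (fun i hi ↦ if_neg fun h ↦ hi h.le) ?_ ?_ ?_ ?_⟩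
  · refine LinearIndependent.of_comp (integralClosure S K).val.toLinearMap ?_
    convert hB.linearIndependent (d * k₁) (d * k₂) using 2 with i
    simp [← hW, ← hU]
  · rw [← add_pow_eq_sum_binomialCoeff_smul k₁ k₂ U W (Nat.sub_lt hp.pos one_pos), ht,
      Algebra.smul_def, map_natCast]
  · refine ⟨(⟨0, hp.pos⟩, ⟨p - 1, Nat.sub_lt hp.pos one_pos⟩), fun h ↦ hN.not_dvd_left ?_⟩
    simp only [binomialCoeff, zero_add, if_true, Nat.choose_self, Nat.cast_one, one_mul, pow_zero,
      mul_one] at h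
    exact (hpS.dvd_of_dvd_pow h).mul_left d
  · exact hB.smul_mem_span_integralClosure hf0 (fun u ↦ hA1.dvd_of_dvd_mul hf0) hW hU
  · intro c z hz
    obtain ⟨y, hy⟩ := exists_sum_filter_eq_smul_of_smul_eq_sum hhigh hz
    have hdvd : (p : integralClosure S K) ∣ _ := ⟨y, hy.trans (by simp [Algebra.smul_def])⟩
    simpa using hN.exists_dvd_sub_mul_binomialCoeff hB hp hp3 hpS hW hU hWp ht.symm (by simp) hdvd

end IsReducedForm

end ReducedForm

section TwoGenerated

theorem span_pair_mul_add_mul_of_isUnit {A : Type*} [CommRing A] {α : A} (hα : IsUnit α)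
    (x β y : A) : Ideal.span {α * x + β * y, y} = Ideal.span {x, y} := by
  rw [Ideal.span_pair_add_mul_right, Ideal.span_insert, Ideal.span_singleton_mul_left_unit hα,
    ← Ideal.span_insert]

theorem span_pair_eq_top_of_isUnit {A : Type*} [CommRing A] {x y : A} (h : IsUnit x ∨ IsUnit y) :
    Ideal.span {x, y} = ⊤ :=
  h.elim (Ideal.eq_top_of_isUnit_mem _ (Ideal.subset_span (by simp)))
    (Ideal.eq_top_of_isUnit_mem _ (Ideal.subset_span (by simp)))

theorem exists_span_pair_eq_span_pair {A : Type*} [CommRing A] [IsLocalRing A] {q x y : A}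
    (hq : q ∈ Ideal.span {x, y}) (hq2 : q ∉ maximalIdeal A ^ 2) :
    ∃ z, Ideal.span {x, y} = Ideal.span {q, z} := by
  obtain ⟨α, β, rfl⟩ := Ideal.mem_span_pair.1 hq
  have hunit : (IsUnit α ∨ IsUnit x) ∨ (IsUnit β ∨ IsUnit y) := by
    by_contra! h
    refine hq2 (sq (maximalIdeal A) ▸ add_mem ?_ ?_)
    · exact Ideal.mul_mem_mul h.1.1 h.1.2
    · exact Ideal.mul_mem_mul h.2.1 h.2.2
  rcases hunit with (hα | hx) | (hβ | hy)
  · exact ⟨y, (span_pair_mul_add_mul_of_isUnit hα x β y).symm⟩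
  · exact ⟨x, by simp only [span_pair_eq_top_of_isUnit, hx, or_true, true_or]⟩
  · exact ⟨x, by rw [add_comm, span_pair_mul_add_mul_of_isUnit hβ, Ideal.span_pair_comm]⟩
  · exact ⟨y, by simp only [span_pair_eq_top_of_isUnit, hy, or_true]⟩

theorem isUnit_or_isUnit_of_span_pair_eq_span_singleton {A : Type*} [CommRing A] [IsDomain A]
    [IsLocalRing A] {c x y z : A} (hc : c ≠ 0) (hxy : IsRelPrime x y)
    (h : Ideal.span {c * x, c * y} = Ideal.span {z}) : IsUnit x ∨ IsUnit y := by
  obtain ⟨α, β, hz⟩ := Ideal.mem_span_pair.1 (h ▸ Ideal.mem_span_singleton_self z)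
  have hdvd : z ∣ c * x ∧ z ∣ c * y := by
    simp only [← Ideal.mem_span_singleton, ← h]
    exact ⟨Ideal.subset_span (by simp), Ideal.subset_span (by simp)⟩
  have hz' : z = c * (α * x + β * y) := by linear_combination -hz
  rw [hz', mul_dvd_mul_iff_left hc, mul_dvd_mul_iff_left hc] at hdvd
  have hunit := hxy hdvd.1 hdvd.2
  exact (IsLocalRing.isUnit_or_isUnit_of_isUnit_add hunit).imp isUnit_of_mul_isUnit_right
    isUnit_of_mul_isUnit_right

theorem span_range_elim_neg_binomialCoeff_eq_top_iff {S : Type*} [CommRing S] [IsLocalRing S]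
    {m n : ℕ} (hm : m ≠ 0) (hmn : m < n) {q : S} (hq : ¬ IsUnit q) (k₁ k₂ : S) :
    Ideal.span (Set.range fun o : Option (Fin n × Fin n) ↦
      o.elim q fun i ↦ -binomialCoeff m k₁ k₂ i.1 i.2) = ⊤ ↔ IsUnit k₁ ∨ IsUnit k₂ := by
  have h0 : 0 < n := by lia
  refine ⟨fun htop ↦ ?_, fun hk ↦ ?_⟩
  · by_contra! hk
    refine (Ideal.IsPrime.ne_top' : maximalIdeal S ≠ ⊤) (top_le_iff.1 (htop ▸ Ideal.span_le.2 ?_))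
    rintro _ ⟨_ | i, rfl⟩
    · exact hq
    refine (maximalIdeal S).neg_mem ?_
    unfold binomialCoeff
    split_ifs with hi
    · rcases Nat.eq_zero_or_pos i.2 with hj | hj
      · exact Ideal.mul_mem_left _ _ (Ideal.pow_mem_of_mem _ hk.2 _ (by lia))
      · exact Ideal.mul_mem_right _ _ (Ideal.mul_mem_left _ _ (Ideal.pow_mem_of_mem _ hk.1 _ hj))
    · exact zero_mem _
  · rcases hk with hk | hk
    · refine Ideal.eq_top_of_isUnit_mem _ (Ideal.subset_span ⟨some (⟨0, h0⟩, ⟨m, hmn⟩), rfl⟩) ?_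
      simpa [binomialCoeff] using hk.pow m
    · refine Ideal.eq_top_of_isUnit_mem _ (Ideal.subset_span ⟨some (⟨m, hmn⟩, ⟨0, h0⟩), rfl⟩) ?_
      simpa [binomialCoeff] using hk.pow m

namespace IsReducedForm

variable {S : Type*} [CommRing S] {p : ℕ} {f g d k₁ k₂ a b : S}

theorem symm (hN : IsReducedForm p f g d k₁ k₂ a b) : IsReducedForm p g f d k₂ k₁ b a :=
  ⟨hN.right_eq, hN.left_eq, hN.not_dvd_right, hN.not_dvd_left, hN.isRelPrime.symm⟩

theorem span_eq_of_isUnit_left (hN : IsReducedForm p f g d k₁ k₂ a b) (hk : IsUnit k₁) :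
    Ideal.span {(p : S), f, g} = Ideal.span {(p : S), d ^ p} := by
  obtain ⟨u, hu⟩ := hk.exists_left_inv
  have hup : u ^ p * k₁ ^ p = 1 := by rw [← mul_pow, hu, one_pow]
  refine le_antisymm (Ideal.span_le.2 ?_) (Ideal.span_le.2 ?_)
  · rintro x (rfl | rfl | rfl)
    · exact Ideal.subset_span (by simp)
    · exact Ideal.mem_span_pair.2 ⟨a, k₁ ^ p, by rw [hN.left_eq]; ring⟩
    · exact Ideal.mem_span_pair.2 ⟨b, k₂ ^ p, by rw [hN.right_eq]; ring⟩
  · rintro x (rfl | rfl)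
    · exact Ideal.subset_span (by simp)
    · have hpf : Ideal.span {(p : S), f} ≤ Ideal.span {(p : S), f, g} :=
        Ideal.span_mono (by grind)
      refine hpf (Ideal.mem_span_pair.2 ⟨-u ^ p * a, u ^ p, ?_⟩)
      rw [hN.left_eq, mul_pow]
      linear_combination d ^ p * hup

theorem isUnit_or_isUnit_of_span_eq [IsLocalRing S] (hN : IsReducedForm p f g d k₁ k₂ a b)
    (hp : p ≠ 0) (hpS : Prime (p : S)) [DecompositionMonoid (S ⧸ Ideal.span {(p : S)})] {z : S}
    (h : Ideal.span {(p : S), f, g} = Ideal.span {(p : S), z}) : IsUnit k₁ ∨ IsUnit k₂ := by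
  have := isLocalRing_quotient_span_singleton (x := (p : S)) hpS.not_isUnit
  have := (Ideal.span_singleton_prime hpS.ne_zero).2 hpS
  let π := Ideal.Quotient.mk (Ideal.span {(p : S)})
  have : IsLocalHom π := .of_surjective π Ideal.Quotient.mk_surjective
  have hπp : π (p : S) = 0 := Ideal.Quotient.mk_singleton_self _
  have hπd : π d ^ p ≠ 0 := pow_ne_zero p fun h0 ↦ hN.not_dvd_left
    ((Ideal.Quotient.eq_zero_iff_dvd _ _).1 h0 |>.mul_right k₁)
  have hmap : Ideal.span {π d ^ p * π k₁ ^ p, π d ^ p * π k₂ ^ p} = Ideal.span {π z} := by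
    have := congrArg (Ideal.map π) h
    simpa [Ideal.map_span, Set.image_insert_eq, hπp, hN.left_eq, hN.right_eq, mul_pow] using this
  have hunit := isUnit_or_isUnit_of_span_pair_eq_span_singleton hπd
    ((IsRelPrime.pow_iff hp.bot_lt hp.bot_lt).2 hN.isRelPrime) hmap
  rwa [isUnit_pow_iff hp, isUnit_pow_iff hp, isUnit_map_iff, isUnit_map_iff] at hunit

theorem span_eq_span_pair_or_eq_top_iff [IsLocalRing S] (hN : IsReducedForm p f g d k₁ k₂ a b)
    (hp : p ≠ 0) (hpS : Prime (p : S)) (hp2 : (p : S) ∉ maximalIdeal S ^ 2)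
    [DecompositionMonoid (S ⧸ Ideal.span {(p : S)})] :
    ((∃ x y : S, Ideal.span {(p : S), f, g} = Ideal.span {x, y}) ∨
      Ideal.span {(p : S), f, g} = ⊤) ↔ IsUnit k₁ ∨ IsUnit k₂ := by
  have htop {I : Ideal S} (hI : I = ⊤) : I = Ideal.span {(p : S), 1} :=
    hI.trans (span_pair_eq_top_of_isUnit (.inr isUnit_one)).symm
  constructor
  · rintro (⟨x, y, hxy⟩ | h)
    · obtain ⟨z, hz⟩ := exists_span_pair_eq_span_pair
        (hxy ▸ Ideal.subset_span (Set.mem_insert (p : S) {f, g})) hp2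
      exact hN.isUnit_or_isUnit_of_span_eq hp hpS (hxy.trans hz)
    · exact hN.isUnit_or_isUnit_of_span_eq hp hpS (htop h)
  · rintro (hk | hk)
    · exact .inl ⟨_, _, hN.span_eq_of_isUnit_left hk⟩
    · exact .inl ⟨_, _, Set.pair_comm f g ▸ hN.symm.span_eq_of_isUnit_left hk⟩

end IsReducedForm

end TwoGenerated

theorem stmt15
    {S : Type*} [CommRing S] [IsDomain S] [IsNoetherianRing S] [IsLocalRing S]
    [IsIntegrallyClosed S]
    {L : Type*} [Field L] [CharZero L] [Algebra S L] [IsFractionRing S L]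
    {K : Type*} [Field K] [Algebra L K] [Algebra S K] [IsScalarTower S L K]
    {p : ℕ} (hp : p.Prime) (hp3 : 3 ≤ p) (hpS : Prime ((p : ℕ) : S))
    (hSmodp : IsIntegrallyClosed (S ⧸ Ideal.span {((p : ℕ) : S)}))
    (hreg : ∃ s : Finset S, Ideal.span (s : Set S) = IsLocalRing.maximalIdeal S ∧
      (s.card : WithBot ℕ∞) = ringKrullDim S)
    (hmix : ((p : ℕ) : S) ∈ IsLocalRing.maximalIdeal S ∧
      ((p : ℕ) : S) ∉ IsLocalRing.maximalIdeal S ^ 2)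
    {f g h₁ h₂ a b : S} (hf : f = h₁ ^ p + a * (p : S)) (hg : g = h₂ ^ p + b * (p : S))
    (hfg : (¬IsUnit f ∧ ¬IsUnit g ∧ PaperSquarefree f ∧ PaperSquarefree g ∧ SatisfiesA1 f g) ∨
      (IsUnit f ∧ IsUnit g ∧ (∀ x : S, x ^ p ≠ f) ∧ (∀ x : S, x ^ p ≠ g)))
    {ω μ : K} (hω : ω ^ p = algebraMap S K f) (hμ : μ ^ p = algebraMap S K g)
    (hKgen : Algebra.adjoin L ({ω, μ} : Set K) = ⊤)
    (hdeg : Module.finrank L K = p ^ 2)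
    (hicω : IsIntegrallyClosed (Algebra.adjoin S ({ω} : Set K)))
    (hicμ : IsIntegrallyClosed (Algebra.adjoin S ({μ} : Set K)))
    (hfg1 : ∃ x y : S, f * g = x ^ p + y * (p : S) ^ 2) :
    (IsCMRing (integralClosure S K) ↔ ((∃ x y : S, Ideal.span {((p : ℕ) : S), f, g} = Ideal.span {x, y}) ∨ Ideal.span {((p : ℕ) : S), f, g} = ⊤)) ∧
      HasFreeResLengthLE1 S (integralClosure S K) ∧
      ∃ T : Finset K, T.card ≤ p ^ 2 + 1 ∧
        Submodule.span S (T : Set K) = Subalgebra.toSubmodule (integralClosure S K) := by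
  have := isRegularLocalRing_of_exists_finset hreg
  have := isRegularLocalRing_quotient_span_singleton hmix.1 hmix.2
  have : (Ideal.span {(p : S)}).IsPrime := (Ideal.span_singleton_prime hpS.ne_zero).2 hpS
  have := uniqueFactorizationMonoid_of_isRegularLocalRing (T := S ⧸ Ideal.span {(p : S)})
  have hA1 : SatisfiesA1 f g :=
    hfg.elim (fun h ↦ h.2.2.2.2) fun h ↦ SatisfiesA1.of_isUnit_left h.1 g
  have hB : IsBiradicalExtension L p f g ω μ := ⟨hω, hμ, hKgen, hdeg⟩
  have h₁p := hB.not_dvd_left hp hp3 hpS hf hA1 hfg1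
  have h₂p := hB.symm.not_dvd_left hp hp3 hpS hg hA1.symm (mul_comm f g ▸ hfg1)
  obtain ⟨d, k₁, k₂, a', b', hN⟩ := exists_isReducedForm hf hg h₁p h₂p
  obtain ⟨γ, hγ⟩ := hN.exists_isOneRelatorPresentation hB hp hp3 hpS hA1 hfg1
  have := hγ.finite
  have : FaithfulSMul S K := .trans S L K
  refine ⟨?_, hγ.hasFreeResLengthLE1, by simpa [sq] using hγ.exists_finset_span_eq⟩
  rw [isCMRing_iff_free (A := S), hγ.free_iff, span_range_elim_neg_binomialCoeff_eq_top_iff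
    (Nat.sub_ne_zero_of_lt hp.one_lt) (Nat.sub_lt hp.pos one_pos) hpS.not_isUnit,
    hN.span_eq_span_pair_or_eq_top_iff hp.ne_zero hpS hmix.2]
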